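/- arXiv:2302.00708 — 4 statements merged into one kernel-verified Lean document; each statement's English description precedes it below -/
import Mathlib

section
/- For every natural number n, both b_40(25n + 9) and b_40(25n + 19) are even, where b_40(k) denotes the number of 40-regular partitions of k. -/
/-- The number of `m`-regular partitions of `n`, i.e. partitions of `n`
in which no part is divisible by `m`. -/
noncomputable def numRegularPartitions (m n : ℕ) : ℕ :=
  Nat.card {π : n.Partition // ∀ j ∈ π.parts, ¬ m ∣ j}

namespace Reg40
open PowerSeries Filter Finset

section Shanks
variable {S : Type*} [CommRing S]

/-- `A q n j = ∏_{j<k≤n} (1-q^{2k}) ∏_{k≤j} (1-q^{2k-1})`. -/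
def A (q : S) (n j : ℕ) : S :=
  (∏ k ∈ Ico j n, (1 - q ^ (2 * k + 2))) * ∏ k ∈ range j, (1 - q ^ (2 * k + 1))

def D (q : S) (n : ℕ) : S := ∏ k ∈ range n, (1 - q ^ (2 * k + 1))

lemma A_succ (q : S) (n j : ℕ) (h : j ≤ n) :
    A q (n + 1) j = (1 - q ^ (2 * n + 2)) * A q n j := by
  unfold A
  rw [prod_Ico_succ_top h]; ring

lemma A_step (q : S) (n j : ℕ) (h : j < n) :
    A q n j * (1 - q ^ (2 * j + 1)) = A q n (j + 1) * (1 - q ^ (2 * j + 2)) := by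
  unfold A
  rw [prod_eq_prod_Ico_succ_bot h, prod_range_succ]; ring

lemma A_self (q : S) (n : ℕ) : A q n n = D q n := by simp [A, D]

lemma shanks (q : S) (n : ℕ) :
    ∑ j ∈ range n, A q n j * q ^ (j * (2 * n + 1)) =
      D q n * ∑ s ∈ range (2 * n), q ^ (s * (s + 1) / 2) := by
  induction n with
  | zero => simp
  | succ n ih =>
    have key : ∑ j ∈ range n, (A q (n + 1) j * q ^ (j * (2 * (n + 1) + 1))
        - (1 - q ^ (2 * n + 1)) * (A q n j * q ^ (j * (2 * n + 1)))) =
        A q n n * (1 - q ^ (2 * n)) * q ^ (n * (2 * n + 1)) := by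
      have := sum_range_sub (fun j => A q n j * (1 - q ^ (2 * j)) * q ^ (j * (2 * n + 1))) n
      simp only [mul_zero, pow_zero, sub_self, zero_mul, sub_zero] at this
      rw [← this]
      refine sum_congr rfl fun j hj => ?_
      have hj : j < n := by simpa using hj
      rw [A_succ q n j hj.le]
      have := A_step q n j hj
      have e : A q n (j + 1) * (1 - q ^ (2 * (j + 1))) * q ^ ((j + 1) * (2 * n + 1)) =
        A q n j * (1 - q ^ (2 * j + 1)) * q ^ ((j + 1) * (2 * n + 1)) := by
        rw [this]; ring
      rw [e]; ring
    rw [sum_sub_distrib, ← mul_sum, ih] at key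
    rw [sum_range_succ, sub_eq_iff_eq_add.mp key, A_succ q n n le_rfl, A_self,
      show 2 * (n + 1) = 2 * n + 1 + 1 by ring, sum_range_succ, sum_range_succ]
    have h1 : 2 * n * (2 * n + 1) / 2 = n * (2 * n + 1) := by
      rw [mul_assoc]; simp
    have h2 : (2 * n + 1) * (2 * n + 1 + 1) / 2 = n * (2 * n + 1) + (2 * n + 1) := by
      rw [show (2 * n + 1) * (2 * n + 1 + 1) = 2 * (n * (2 * n + 1) + (2 * n + 1)) by ring]; simp
    have h3 : D q (n + 1) = D q n * (1 - q ^ (2 * n + 1)) := by simp [D, prod_range_succ]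
    rw [h1, h2, h3]
    ring

end Shanks

section Lim
variable {R : Type*} [CommRing R]

def Lim (f : ℕ → R⟦X⟧) (F : R⟦X⟧) : Prop :=
  ∀ d, ∀ᶠ n in atTop, coeff d (f n) = coeff d F

lemma Lim.unique {f : ℕ → R⟦X⟧} {F G : R⟦X⟧} (h : Lim f F) (h' : Lim f G) : F = G := by
  ext d
  obtain ⟨n, h1, h2⟩ := ((h d).and (h' d)).exists
  rw [← h1, h2]

lemma Lim.const (F : R⟦X⟧) : Lim (fun _ => F) F := fun _ => .of_forall fun _ => rfl

lemma Lim.mul {f g : ℕ → R⟦X⟧} {F G : R⟦X⟧} (h : Lim f F) (h' : Lim g G) :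
    Lim (fun n => f n * g n) (F * G) := by
  intro d
  have h1 : ∀ᶠ n in atTop, ∀ i ∈ antidiagonal d, coeff i.1 (f n) = coeff i.1 F ∧
      coeff i.2 (g n) = coeff i.2 G :=
    (eventually_all_finset _).2 fun i _ => (h i.1).and (h' i.2)
  filter_upwards [h1] with n hn
  rw [coeff_mul, coeff_mul]
  exact sum_congr rfl fun i hi => by rw [(hn i hi).1, (hn i hi).2]

lemma Lim.add {f g : ℕ → R⟦X⟧} {F G : R⟦X⟧} (h : Lim f F) (h' : Lim g G) :
    Lim (fun n => f n + g n) (F + G) := by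
  intro d
  filter_upwards [h d, h' d] with n h1 h2
  simp [h1, h2]

lemma Lim.pow {f : ℕ → R⟦X⟧} {F : R⟦X⟧} (h : Lim f F) (k : ℕ) :
    Lim (fun n => f n ^ k) (F ^ k) := by
  induction k with
  | zero => simpa using Lim.const 1
  | succ k ih => simpa [pow_succ] using ih.mul h

lemma Lim.comp {f : ℕ → R⟦X⟧} {F : R⟦X⟧} (h : Lim f F) (k : ℕ → ℕ)
    (hk : Tendsto k atTop atTop) : Lim (fun n => f (k n)) F := fun d =>
  hk.eventually (h d)

lemma Lim.rescale {f : ℕ → R⟦X⟧} {F : R⟦X⟧} (h : Lim f F) (z : R) :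
    Lim (fun n => rescale z (f n)) (rescale z F) := fun d => by
  filter_upwards [h d] with n hn
  simp [hn]

lemma Lim.expand {f : ℕ → R⟦X⟧} {F : R⟦X⟧} (h : Lim f F) (k : ℕ) (hk : k ≠ 0) :
    Lim (fun n => expand k hk (f n)) (expand k hk F) := fun d => by
  filter_upwards [h (d / k)] with n hn
  simp [coeff_expand, hn]

/-- finite Euler product -/
noncomputable def e (R : Type*) [CommRing R] (n : ℕ) : R⟦X⟧ := ∏ k ∈ range n, (1 - X ^ (k + 1))

lemma lim_e : Lim (e R) (pentagonalSeries R) := fun d =>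
  tendsto_finset_range.eventually (coeff_prod_one_sub_X_pow_eventually_eq R d)

noncomputable def psi (R : Type*) [CommRing R] : R⟦X⟧ := 
  open Classical in .mk fun n => if ∃ s, s * (s + 1) / 2 = n then 1 else 0

lemma tri_inj : Function.Injective (fun s : ℕ => s * (s + 1) / 2) := by
  refine StrictMono.injective (strictMono_nat_of_lt_succ fun n => ?_)
  have : (n + 1) * (n + 1 + 1) = n * (n + 1) + (n + 1) * 2 := by ring
  simp only [this, Nat.add_mul_div_right _ _ (zero_lt_two : 0 < 2)]
  omega

lemma le_tri (s : ℕ) : s ≤ s * (s + 1) / 2 := by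
  rw [Nat.le_div_iff_mul_le (by simp)]
  rcases s with _ | s
  · simp
  · nlinarith

lemma lim_psi : Lim (fun n => ∑ s ∈ range n, (X : R⟦X⟧) ^ (s * (s + 1) / 2)) (psi R) := by
  intro d
  filter_upwards [eventually_gt_atTop d] with n hn
  simp only [map_sum, coeff_X_pow, psi, coeff_mk]
  split_ifs with h
  · obtain ⟨s, rfl⟩ := h
    rw [sum_eq_single s]
    · simp
    · intro t _ hts
      rw [if_neg]
      intro h
      exact hts (tri_inj h.symm)
    · intro h
      exact absurd (lt_of_le_of_lt (le_tri s) hn) (by simpa using h)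
  · refine sum_eq_zero fun s _ => if_neg fun h' => h ⟨s, h'.symm⟩

lemma D_mul (n : ℕ) : D (X : R⟦X⟧) n * ∏ k ∈ range n, (1 - X ^ (2 * k + 2)) = e R (2 * n) := by
  induction n with
  | zero => simp [D, e]
  | succ n ih =>
    have : e R (2 * (n + 1)) = e R (2 * n) * (1 - X ^ (2 * n + 1)) * (1 - X ^ (2 * n + 2)) := by
      rw [show 2 * (n + 1) = 2 * n + 1 + 1 by ring]
      simp [e, prod_range_succ]
    rw [this, ← ih]
    simp only [D, prod_range_succ]; ring

lemma lim_zero (g : ℕ → R⟦X⟧) : Lim (fun n => g n * X ^ (n + 1)) 0 := by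
  intro d
  filter_upwards [eventually_gt_atTop d] with n hn
  rw [coeff_mul_X_pow', if_neg (by omega)]; simp

variable [CharP R 2]

lemma ps2 : (2 : R⟦X⟧) = 0 := by
  have : (2 : R) = 0 := by exact_mod_cast CharP.cast_eq_zero R 2
  have h2 : (C (2 : R)) = (2 : R⟦X⟧) := map_ofNat _ 2
  rw [← h2, this, map_zero]

lemma prod_even (n : ℕ) : ∏ k ∈ range n, ((1 : R⟦X⟧) - X ^ (2 * k + 2)) = e R n ^ 2 := by
  rw [e, ← prod_pow]
  refine prod_congr rfl fun k _ => ?_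
  linear_combination ((X : R⟦X⟧) ^ (k + 1) - X ^ (2 * k + 2)) * ps2 (R := R)

lemma expand_two : expand 2 two_ne_zero (pentagonalSeries R) = pentagonalSeries R ^ 2 := by
  refine (lim_e.expand 2 two_ne_zero).unique ?_
  convert! (lim_e (R := R)).pow 2 using 2 with n
  rw [← prod_even]
  simp [e, ← pow_mul, mul_add]

lemma shanks_lim : pentagonalSeries R ^ 4 = pentagonalSeries R * psi R := by
  have h1 : ∀ n, ∃ g : R⟦X⟧, e R (n + 1) ^ 4 + g * X ^ (n + 1) =
      e R (2 * (n + 1)) * ∑ s ∈ range (2 * (n + 1)), (X : R⟦X⟧) ^ (s * (s + 1) / 2) := by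
    intro n
    have h := shanks (X : R⟦X⟧) (n + 1)
    rw [sum_range_succ'] at h
    refine ⟨e R (n + 1) ^ 2 * ∑ j ∈ range n, A (X : R⟦X⟧) (n + 1) (j + 1) *
      X ^ ((j + 1) * (2 * n + 3) - (n + 1)), ?_⟩
    rw [← D_mul, prod_even]
    have h2 : A (X : R⟦X⟧) (n + 1) 0 = e R (n + 1) ^ 2 := by
      rw [← prod_even]; unfold A; rw [Finset.prod_range_zero, mul_one, Nat.Ico_zero_eq_range]
    have h3 : (∑ j ∈ range n, A (X : R⟦X⟧) (n + 1) (j + 1) *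
      X ^ ((j + 1) * (2 * n + 3) - (n + 1))) * X ^ (n + 1) =
      ∑ j ∈ range n, A (X : R⟦X⟧) (n + 1) (j + 1) * X ^ ((j + 1) * (2 * (n + 1) + 1)) := by
      rw [sum_mul]
      refine sum_congr rfl fun j _ => ?_
      rw [mul_assoc, ← pow_add]
      congr 2
      have : n + 1 ≤ (j + 1) * (2 * n + 3) := by nlinarith
      have h4 : (j + 1) * (2 * (n + 1) + 1) = (j + 1) * (2 * n + 3) := by ring
      omega
    rw [mul_assoc, h3]
    rw [h2] at h
    linear_combination e R (n + 1) ^ 2 * h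
  choose g hg using h1
  have t1 : Tendsto (fun n : ℕ => n + 1) atTop atTop := tendsto_add_atTop_nat 1
  have t2 : Tendsto (fun n : ℕ => 2 * (n + 1)) atTop atTop := t1.const_mul_atTop' two_pos
  have l1 := (((lim_e (R := R)).comp _ t1).pow 4).add (lim_zero g)
  have l2 := ((lim_e (R := R)).comp _ t2).mul ((lim_psi (R := R)).comp _ t2)
  simp only [hg, add_zero] at l1
  exact l1.unique l2

end Lim

section Supp
variable {R : Type*} [CommRing R]

def Supp (f : R⟦X⟧) (P : ℕ → Prop) : Prop := ∀ n, coeff n f ≠ 0 → P n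

lemma Supp.mul {f g : R⟦X⟧} {P Q T : ℕ → Prop} (hf : Supp f P) (hg : Supp g Q)
    (h : ∀ i j, P i → Q j → T (i + j)) : Supp (f * g) T := by
  intro n hn
  rw [coeff_mul] at hn
  obtain ⟨i, hi, h'⟩ := exists_ne_zero_of_sum_ne_zero hn
  rw [← mem_antidiagonal.1 hi]
  exact h _ _ (hf _ (left_ne_zero_of_mul h')) (hg _ (right_ne_zero_of_mul h'))

lemma Supp.add {f g : R⟦X⟧} {P : ℕ → Prop} (hf : Supp f P) (hg : Supp g P) :
    Supp (f + g) P := by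
  intro n hn
  by_contra h
  have h1 : coeff n f = 0 := by by_contra h'; exact h (hf n h')
  have h2 : coeff n g = 0 := by by_contra h'; exact h (hg n h')
  simp [h1, h2] at hn

lemma Supp.mono {f : R⟦X⟧} {P Q : ℕ → Prop} (hf : Supp f P) (h : ∀ n, P n → Q n) :
    Supp f Q := fun n hn => h n (hf n hn)

lemma Supp.mul5 {f g : R⟦X⟧} {r s : ℕ} (hf : Supp f (· % 5 = r)) (hg : Supp g (· % 5 = s)) :
    Supp (f * g) (· % 5 = (r + s) % 5) :=
  hf.mul hg fun i j hi hj => by omega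

lemma Supp.one5 : Supp (1 : R⟦X⟧) (· % 5 = 0) := by
  intro n hn
  rw [coeff_one] at hn
  have : n = 0 := by by_contra h; simp [h] at hn
  simp [this]

lemma Supp.pow5 {f : R⟦X⟧} {r : ℕ} (hf : Supp f (· % 5 = r)) (k : ℕ) :
    Supp (f ^ k) (· % 5 = (k * r) % 5) := by
  induction k with
  | zero => simpa using Supp.one5
  | succ k ih =>
    rw [pow_succ]
    refine (ih.mul5 hf).mono fun n hn => ?_
    rw [hn, add_mul, one_mul]; simp

lemma Supp.expand (f : R⟦X⟧) (k : ℕ) (hk : k ≠ 0) : Supp (expand k hk f) (k ∣ ·) := by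
  intro n hn
  by_contra h
  exact hn (coeff_expand_of_not_dvd k hk f h)

noncomputable def part (r : ℕ) (f : R⟦X⟧) : R⟦X⟧ := .mk fun n => if n % 5 = r then coeff n f else 0

lemma supp_part (r : ℕ) (f : R⟦X⟧) : Supp (part r f) (· % 5 = r) := by
  intro n hn
  by_contra h
  simp [part, h] at hn

lemma pent_mod (k : ℤ) : (pentagonal k % 5 = 0 ∨ pentagonal k % 5 = 1 ∨ pentagonal k % 5 = 2) := by
  have h := two_mul_natCast_pentagonal k
  have h5 : (2 * (pentagonal k : ℤ)) % 5 = ((k % 5) * (3 * (k % 5) - 1)) % 5 := by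
    rw [h]; simp [Int.mul_emod, Int.sub_emod]
  have : k % 5 = 0 ∨ k % 5 = 1 ∨ k % 5 = 2 ∨ k % 5 = 3 ∨ k % 5 = 4 := by omega
  rcases this with h' | h' | h' | h' | h' <;> rw [h'] at h5 <;> norm_num at h5 <;> omega

lemma pent_one {k : ℤ} (hk : pentagonal k % 5 = 1) : 
    ∃ m, pentagonal k = 25 * pentagonal m + 1 := by
  have h := two_mul_natCast_pentagonal k
  have h5 : (2 * (pentagonal k : ℤ)) % 5 = ((k % 5) * (3 * (k % 5) - 1)) % 5 := by
    rw [h]; simp [Int.mul_emod, Int.sub_emod]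
  have : k % 5 = 0 ∨ k % 5 = 1 ∨ k % 5 = 2 ∨ k % 5 = 3 ∨ k % 5 = 4 := by omega
  have h1 : k % 5 = 1 := by
    rcases this with h' | h' | h' | h' | h' <;> rw [h'] at h5 <;> norm_num at h5 <;> omega
  obtain ⟨m, rfl⟩ : ∃ m, k = 5 * m + 1 := ⟨k / 5, by omega⟩
  refine ⟨-m, ?_⟩
  have h2 := two_mul_natCast_pentagonal_neg m
  zify
  nlinarith

lemma pent_one' (m : ℤ) : pentagonal (5 * (-m) + 1) = 25 * pentagonal m + 1 := by
  have h := two_mul_natCast_pentagonal (5 * (-m) + 1)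
  have h2 := two_mul_natCast_pentagonal m
  zify
  nlinarith

lemma supp_pent : Supp (pentagonalSeries R) (· ∈ Set.range pentagonal) := by
  intro n hn
  by_contra h
  exact hn (coeff_pentagonalSeries_eq_zero R h)

lemma pent_parts : pentagonalSeries R = part 0 (pentagonalSeries R) + part 1 (pentagonalSeries R)
    + part 2 (pentagonalSeries R) := by
  ext n
  by_cases h : coeff n (pentagonalSeries R) = 0
  · simp [part, h]
  · obtain ⟨k, rfl⟩ := supp_pent n h
    rcases pent_mod k with h | h | h <;> simp [part, h]

lemma rescale_part (z : R) (hz : z ^ 5 = 1) (r : ℕ) (f : R⟦X⟧) :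
    rescale z (part r f) = C z ^ r * part r f := by
  ext n
  rw [← map_pow]
  simp only [coeff_rescale, part, coeff_mk, coeff_C_mul]
  split_ifs with h
  · rw [← h]
    congr 1
    conv_lhs => rw [← Nat.div_add_mod n 5, pow_add, pow_mul, hz]
    simp
  · simp

lemma psi_supp : Supp (psi R) (· % 5 ≠ 2) := by
  intro n hn
  have h : ∃ s, s * (s + 1) / 2 = n := by
    by_contra h
    simp [psi, h] at hn
  obtain ⟨s, rfl⟩ := h
  have h2 : 2 * (s * (s + 1) / 2) = s * (s + 1) :=
    Nat.mul_div_cancel' (Nat.even_mul_succ_self s).two_dvd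
  have h5 : (2 * (s * (s + 1) / 2)) % 5 = ((s % 5) * (s % 5 + 1)) % 5 := by
    rw [h2]; simp [Nat.mul_mod, Nat.add_mod]
  have : s % 5 = 0 ∨ s % 5 = 1 ∨ s % 5 = 2 ∨ s % 5 = 3 ∨ s % 5 = 4 := by omega
  rcases this with h' | h' | h' | h' | h' <;> rw [h'] at h5 <;> norm_num at h5 <;> omega

variable [CharP R 2]

lemma coeff_pent (k : ℤ) : coeff (pentagonal k) (pentagonalSeries R) = 1 := by
  rw [coeff_pentagonalSeries_pentagonal]
  have : (-1 : R) = 1 := by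
    have := CharP.cast_eq_zero R 2
    push_cast at this
    linear_combination -this
  rcases Int.even_or_odd k with h | h
  · simp [Int.negOnePow_even k h]
  · simp [Int.negOnePow_odd k h, this]

lemma part_one : part 1 (pentagonalSeries R) =
    X * expand 25 (by norm_num) (pentagonalSeries R) := by
  ext n
  rcases n with _ | n
  · simp [part]
  rw [coeff_succ_X_mul, coeff_expand]
  simp only [part, coeff_mk]
  by_cases h : (n + 1) % 5 = 1 ∧ n + 1 ∈ Set.range pentagonal
  · obtain ⟨h1, k, hk⟩ := h
    obtain ⟨m, hm⟩ := pent_one (k := k) (by rw [hk]; exact h1)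
    have : n = 25 * pentagonal m := by omega
    rw [if_pos h1, ← hk, coeff_pent, if_pos ⟨_, this⟩, this,
      Nat.mul_div_cancel_left _ (by norm_num), coeff_pent]
  · have : (if (n + 1) % 5 = 1 then coeff (n + 1) (pentagonalSeries R) else 0) = 0 := by
      split_ifs with h'
      · exact coeff_pentagonalSeries_eq_zero R fun h'' => h ⟨h', h''⟩
      · rfl
    rw [this]
    split_ifs with h'
    · obtain ⟨t, rfl⟩ := h'
      rw [Nat.mul_div_cancel_left _ (by norm_num)]
      symm
      apply coeff_pentagonalSeries_eq_zero
      rintro ⟨m, rfl⟩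
      exact h ⟨by omega, _, pent_one' m⟩
    · rfl

variable [IsDomain R]

lemma pent_ne : pentagonalSeries R ≠ 0 := by
  intro h
  have h1 := coeff_pent (R := R) 0
  rw [h] at h1
  simp at h1

lemma cube : pentagonalSeries R ^ 3 = psi R :=
  mul_left_cancel₀ pent_ne (by rw [← shanks_lim]; ring)

lemma ac_eq : part 0 (pentagonalSeries R) * part 2 (pentagonalSeries R) +
    part 1 (pentagonalSeries R) ^ 2 = 0 := by
  have hE := pent_parts (R := R)
  have hc := cube (R := R)
  set E := pentagonalSeries R with hE0
  have ha := supp_part 0 E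
  have hb := supp_part 1 E
  have hc' := supp_part 2 E
  have ha0 : part 0 E ≠ 0 := by
    intro h
    have h1 := coeff_pent (R := R) 0
    have h2 : coeff 0 (part 0 E) = 1 := by
      simpa [part, pentagonal_def] using h1
    rw [h] at h2
    simp at h2
  set a := part 0 E
  set b := part 1 E
  set c := part 2 E
  have key : a * (a * c + b ^ 2) = psi R +
      (a ^ 3 + a ^ 2 * b + b ^ 3 + b ^ 2 * c + a * c ^ 2 + b * c ^ 2 + c ^ 3) := by
    rw [← hc, hE]
    linear_combination (-a ^ 3 - 2 * a ^ 2 * b - a ^ 2 * c - a * b ^ 2 - 3 * a * b * c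
      - b ^ 3 - 2 * b ^ 2 * c - 2 * a * c ^ 2 - 2 * b * c ^ 2 - c ^ 3) * ps2 (R := R)
  have s1 : Supp (a * (a * c + b ^ 2)) (· % 5 = 2) :=
    ha.mul5 ((ha.mul5 hc').add (hb.pow5 2))
  have s2 : Supp (a * (a * c + b ^ 2)) (· % 5 ≠ 2) := by
    rw [key]
    refine psi_supp.add ?_
    refine (((((Supp.add ?_ ?_).add ?_).add ?_).add ?_).add ?_).add ?_
    · exact (ha.pow5 3).mono (by simp +contextual)
    · exact ((ha.pow5 2).mul5 hb).mono (by simp +contextual)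
    · exact (hb.pow5 3).mono (by simp +contextual)
    · exact ((hb.pow5 2).mul5 hc').mono (by simp +contextual)
    · exact (ha.mul5 (hc'.pow5 2)).mono (by simp +contextual)
    · exact (hb.mul5 (hc'.pow5 2)).mono (by simp +contextual)
    · exact (hc'.pow5 3).mono (by simp +contextual)
  have : a * (a * c + b ^ 2) = 0 := by
    ext n
    by_contra h
    exact s2 n h (s1 n h)
  exact (mul_eq_zero.1 this).resolve_left ha0

end Supp

section Norm

lemma circ {S : Type*} [CommRing S] (h2 : (2 : S) = 0) (z a b c : S)
    (hz : 1 + z + z ^ 2 + z ^ 3 + z ^ 4 = 0) (h : a * c + b ^ 2 = 0) :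
    (a + z * b + z ^ 2 * c) * (a + z ^ 2 * b + (z ^ 2) ^ 2 * c) *
    (a + z ^ 3 * b + (z ^ 3) ^ 2 * c) * (a + z ^ 4 * b + (z ^ 4) ^ 2 * c) =
    a ^ 4 + a ^ 3 * b + a * b ^ 3 + b ^ 4 + b ^ 3 * c + b * c ^ 3 + c ^ 4 := by
  have h5 : z ^ 5 = 1 := by linear_combination (z - 1) * hz
  obtain ⟨t, ht⟩ : ∃ t, t = z + z ^ 4 := ⟨_, rfl⟩
  obtain ⟨u, hu⟩ : ∃ u, u = z ^ 2 + z ^ 3 := ⟨_, rfl⟩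
  have h14 : (a + z * b + z ^ 2 * c) * (a + z ^ 4 * b + (z ^ 4) ^ 2 * c) =
      a ^ 2 + b ^ 2 + c ^ 2 + t * (a * b + b * c) + u * (a * c) := by
    rw [ht, hu]
    linear_combination (b ^ 2 + c ^ 2 * (z ^ 5 + 1) + b * c * (z ^ 4 + z) + a * c * z ^ 3) * h5
  have h23 : (a + z ^ 2 * b + (z ^ 2) ^ 2 * c) * (a + z ^ 3 * b + (z ^ 3) ^ 2 * c) =
      a ^ 2 + b ^ 2 + c ^ 2 + u * (a * b + b * c) + t * (a * c) := by
    rw [ht, hu]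
    linear_combination (b ^ 2 + c ^ 2 * (z ^ 5 + 1) + b * c * (z ^ 3 + z ^ 2) + a * c * z) * h5
  have hs : u = - 1 - t := by rw [ht, hu]; linear_combination hz
  have hp : t * u = -1 := by rw [ht, hu]; linear_combination hz + (z + z ^ 2) * h5
  have hq : t ^ 2 = 1 - t := by rw [hs] at hp; linear_combination -hp
  calc _ = ((a + z * b + z ^ 2 * c) * (a + z ^ 4 * b + (z ^ 4) ^ 2 * c)) *
        ((a + z ^ 2 * b + (z ^ 2) ^ 2 * c) * (a + z ^ 3 * b + (z ^ 3) ^ 2 * c)) := by ring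
    _ = (a ^ 2 + b ^ 2 + c ^ 2) ^ 2 - (a ^ 2 + b ^ 2 + c ^ 2) * (a * b + b * c + a * c)
        - (a * b + b * c) ^ 2 - (a * c) ^ 2 + 3 * (a * b + b * c) * (a * c) := by
      rw [h14, h23, hs]
      linear_combination (2 * (a * b + b * c) * (a * c)
        - (a * b + b * c) ^ 2 - (a * c) ^ 2) * hq
    _ = _ := by
      linear_combination (a ^ 2 + c ^ 2 + a * c) * h + (-2 * a * b ^ 2 * c - a ^ 3 * b - a * b ^ 3
        - b ^ 3 * c - b * c ^ 3 - a ^ 3 * c - a * c ^ 3 + a * b * c ^ 2 + a ^ 2 * b * c) * h2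

variable {R : Type*} [CommRing R] 

noncomputable def nm (z : R) (f : R⟦X⟧) : R⟦X⟧ := ∏ i ∈ range 5, rescale (z ^ i) f

lemma nm_mul (z : R) (f g : R⟦X⟧) : nm z (f * g) = nm z f * nm z g := by
  simp [nm, prod_mul_distrib]

lemma nm_lin (z : R) (k : ℕ) :
    nm z (1 - X ^ k) = ∏ i ∈ range 5, (1 - (C z ^ k) ^ i * X ^ k) := by
  refine prod_congr rfl fun i _ => ?_
  simp only [map_sub, map_one, map_pow, rescale_X, mul_pow, ← pow_mul, mul_comm]

lemma nm_five (z : R) (h5 : z ^ 5 = 1) (k : ℕ) :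
    nm z (1 - X ^ (5 * k)) = (1 - X ^ (5 * k)) ^ 5 := by
  have : (C z : R⟦X⟧) ^ (5 * k) = 1 := by
    rw [pow_mul, ← map_pow, h5]; simp
  rw [nm_lin, this]
  simp

lemma nm_nfive (z : R) (hz : 1 + z + z ^ 2 + z ^ 3 + z ^ 4 = 0) (k : ℕ) (hk : k % 5 ≠ 0) :
    nm z (1 - X ^ k) = 1 - X ^ (5 * k) := by
  rw [nm_lin]
  have hz' : 1 + C z + C z ^ 2 + C z ^ 3 + C z ^ 4 = (0 : R⟦X⟧) := by
    simp only [← map_pow, ← map_one (C (R := R)), ← map_add, hz, map_zero]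
  have h5 : (C z : R⟦X⟧) ^ 5 = 1 := by linear_combination (C z - 1) * hz'
  have hw : ∃ w, w = (C z : R⟦X⟧) ^ k ∧ 1 + w + w ^ 2 + w ^ 3 + w ^ 4 = 0 := by
    refine ⟨_, rfl, ?_⟩
    have e1 : (C z : R⟦X⟧) ^ k = C z ^ (k % 5) := by
      conv_lhs => rw [← Nat.div_add_mod k 5, pow_add, pow_mul, h5]
      simp
    rw [e1]
    have : k % 5 = 1 ∨ k % 5 = 2 ∨ k % 5 = 3 ∨ k % 5 = 4 := by omega
    generalize (C z : R⟦X⟧) = y at *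
    rcases this with h | h | h | h <;> rw [h]
    · linear_combination hz'
    · linear_combination hz' + (y + y ^ 3) * h5
    · linear_combination hz' + (y + y ^ 4 + y ^ 2 * (y ^ 5 + 1)) * h5
    · linear_combination hz' + (y ^ 3 + y ^ 2 * (y ^ 5 + 1) + y * (y ^ 10 + y ^ 5 + 1)) * h5
  obtain ⟨w, hw, hw'⟩ := hw
  rw [← hw, mul_comm 5 k, pow_mul]
  generalize (X : R⟦X⟧) ^ k = Y
  have w5 : w ^ 5 = 1 := by linear_combination (w - 1) * hw'
  simp only [prod_range_succ, prod_range_zero]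
  linear_combination (-Y + Y ^ 2 * (w + w ^ 3) - Y ^ 3 * (w ^ 3 + w ^ 5) + Y ^ 4 * w ^ 6
    - Y ^ 5 * (w ^ 5 + 1) * (w - 1)) * hw'

lemma e_five (m : ℕ) : e R (5 * (m + 1)) = e R (5 * m) * (1 - X ^ (5 * m + 1)) *
    (1 - X ^ (5 * m + 2)) * (1 - X ^ (5 * m + 3)) * (1 - X ^ (5 * m + 4)) *
    (1 - X ^ (5 * (m + 1))) := by
  rw [show 5 * (m + 1) = 5 * m + 1 + 1 + 1 + 1 + 1 by ring]
  simp only [e, prod_range_succ]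

lemma norm_fin (z : R) (hz : 1 + z + z ^ 2 + z ^ 3 + z ^ 4 = 0) (m : ℕ) :
    nm z (e R (5 * m)) * expand 25 (by norm_num) (e R m) =
      expand 5 (by norm_num) (e R (5 * m)) * expand 5 (by norm_num) (e R m) ^ 5 := by
  have h5 : z ^ 5 = 1 := by linear_combination (z - 1) * hz
  induction m with
  | zero => simp [e, nm]
  | succ m ih =>
    have hm : e R (m + 1) = e R m * (1 - X ^ (m + 1)) := by simp [e, prod_range_succ]
    have x25 : (X : R⟦X⟧) ^ (25 * (m + 1)) = X ^ (5 * (5 * (m + 1))) := by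
      congr 1; ring
    rw [e_five, hm]
    simp only [nm_mul, nm_five z h5]
    rw [nm_nfive z hz _ (by omega), nm_nfive z hz _ (by omega), nm_nfive z hz _ (by omega),
      nm_nfive z hz _ (by omega)]
    simp only [map_mul, map_sub, map_one, map_pow, expand_X, ← pow_mul]
    rw [x25]
    linear_combination (1 - X ^ (5 * (5 * m + 1))) * (1 - X ^ (5 * (5 * m + 2))) *
      (1 - X ^ (5 * (5 * m + 3))) * (1 - X ^ (5 * (5 * m + 4))) *
      (1 - (X : R⟦X⟧) ^ (5 * (m + 1))) ^ 5 * (1 - X ^ (5 * (5 * (m + 1)))) * ih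

lemma norm_eq (z : R) (hz : 1 + z + z ^ 2 + z ^ 3 + z ^ 4 = 0) :
    nm z (pentagonalSeries R) * expand 25 (by norm_num) (pentagonalSeries R) =
      expand 5 (by norm_num) (pentagonalSeries R) ^ 6 := by
  have t5 : Tendsto (fun n : ℕ => 5 * n) atTop atTop := tendsto_id.const_mul_atTop' (by norm_num)
  have hl := (lim_e (R := R)).comp _ t5
  have l1 : Lim (fun m => nm z (e R (5 * m))) (nm z (pentagonalSeries R)) := by
    simp only [nm, prod_range_succ, prod_range_zero, one_mul]
    exact ((((hl.rescale _).mul (hl.rescale _)).mul (hl.rescale _)).mul (hl.rescale _)).mul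
      (hl.rescale _)
  have l2 := l1.mul ((lim_e (R := R)).expand 25 (by norm_num))
  simp only [norm_fin z hz] at l2
  have l3 := (hl.expand 5 (by norm_num)).mul (((lim_e (R := R)).expand 5 (by norm_num)).pow 5)
  rw [l2.unique l3]
  ring

end Norm

section Final
open scoped PowerSeries.WithPiTopology
variable {R : Type*} [CommRing R]

noncomputable def B (R : Type*) [CommRing R] : R⟦X⟧ :=
  .mk fun n => ((#(Nat.Partition.countRestricted n 40) : ℕ) : R)

lemma B_mul : B R * pentagonalSeries R = expand 40 (by norm_num) (pentagonalSeries R) := by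
  let _ : TopologicalSpace R := ⊥
  have _ : DiscreteTopology R := ⟨rfl⟩
  have h := Nat.Partition.hasProd_powerSeriesMk_card_countRestricted R (m := 40) (by norm_num)
  have h' := h.tendsto_prod_nat
  rw [WithPiTopology.tendsto_iff_coeff_tendsto] at h'
  have l1 : Lim (fun n => ∏ i ∈ range n, ∑ j ∈ range 40, (X : R⟦X⟧) ^ ((i + 1) * j)) (B R) := by
    intro d
    have := h' d
    rw [nhds_discrete, tendsto_pure] at this
    exact this
  have l2 := l1.mul (lim_e (R := R))
  have l3 := (lim_e (R := R)).expand 40 (by norm_num)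
  refine l2.unique ?_
  convert! l3 using 2 with n
  rw [e, ← prod_mul_distrib, map_prod]
  refine prod_congr rfl fun i _ => ?_
  simp only [pow_mul, geom_sum_mul_neg, map_sub, map_one, map_pow, expand_X]
  rw [← pow_mul, ← pow_mul, mul_comm]

variable [CharP R 2] [IsDomain R]

lemma main (z : R) (hz : 1 + z + z ^ 2 + z ^ 3 + z ^ 4 = 0) (n : ℕ)
    (hn : n % 25 = 9 ∨ n % 25 = 19) : coeff n (B R) = 0 := by
  have h5 : z ^ 5 = 1 := by linear_combination (z - 1) * hz
  have hac := ac_eq (R := R)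
  have hb1 := part_one (R := R)
  have hE := pent_parts (R := R)
  have hN := norm_eq z hz
  have hB := B_mul (R := R)
  have h0 := pent_ne (R := R)
  have h40 : expand 40 (by norm_num) (pentagonalSeries R) =
      expand 5 (by norm_num) (pentagonalSeries R) ^ 8 := by
    have e4 : expand 4 (by norm_num) (pentagonalSeries R) = pentagonalSeries R ^ 4 := by
      refine (expand_mul 2 two_ne_zero 2 two_ne_zero _).trans ?_
      rw [expand_two, map_pow, expand_two]; ring
    have e8 : expand 8 (by norm_num) (pentagonalSeries R) = pentagonalSeries R ^ 8 := by
      refine (expand_mul 4 (by norm_num) 2 two_ne_zero _).trans ?_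
      rw [expand_two, map_pow, e4]; ring
    refine (expand_mul 5 (by norm_num) 8 (by norm_num) _).trans ?_
    rw [e8, map_pow]
  have h10 : expand 5 (by norm_num) (pentagonalSeries R) ^ 2 =
      expand 10 (by norm_num) (pentagonalSeries R) := by
    refine Eq.trans ?_ (expand_mul 5 (by norm_num) 2 two_ne_zero _).symm
    rw [expand_two, map_pow]
  have hr : ∀ i, rescale (z ^ i) (pentagonalSeries R) = part 0 (pentagonalSeries R) +
      C z ^ i * part 1 (pentagonalSeries R) + (C z ^ i) ^ 2 * part 2 (pentagonalSeries R) := by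
    intro i
    have hi : (z ^ i) ^ 5 = 1 := by rw [← pow_mul, mul_comm, pow_mul, h5, one_pow]
    conv_lhs => rw [hE]
    simp only [map_add, rescale_part _ hi, map_pow]
    ring
  have ha := supp_part 0 (pentagonalSeries R)
  have hb := supp_part 1 (pentagonalSeries R)
  have hc := supp_part 2 (pentagonalSeries R)
  have hz' : 1 + C z + C z ^ 2 + C z ^ 3 + C z ^ 4 = (0 : R⟦X⟧) := by
    simp only [← map_pow, ← map_one (C (R := R)), ← map_add, hz, map_zero]
  have hM := circ (ps2 (R := R)) (C z) _ _ _ hz' hac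
  have h25 := Supp.expand (pentagonalSeries R) 25 (by norm_num)
  have hE10 : Supp (expand 10 (by norm_num) (pentagonalSeries R))
      (fun n => n % 25 = 0 ∨ n % 25 = 10 ∨ n % 25 = 20) := by
    intro n hn
    obtain ⟨m, rfl⟩ := Supp.expand (pentagonalSeries R) 10 (by norm_num) n hn
    rw [coeff_expand_mul] at hn
    obtain ⟨k, rfl⟩ := supp_pent m hn
    have := pent_mod k
    omega
  have hX : Supp (X : R⟦X⟧) (· = 1) := by
    intro n hn
    by_contra h
    rw [coeff_X, if_neg h] at hn
    exact hn rfl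
  have hb25 : Supp (part 1 (pentagonalSeries R)) (· % 25 = 1) := by
    rw [hb1]
    exact hX.mul h25 fun i j hi hj => by omega
  have hnm : nm z (pentagonalSeries R) = pentagonalSeries R *
      ((part 0 (pentagonalSeries R) + C z * part 1 (pentagonalSeries R)
        + C z ^ 2 * part 2 (pentagonalSeries R)) *
      (part 0 (pentagonalSeries R) + C z ^ 2 * part 1 (pentagonalSeries R)
        + (C z ^ 2) ^ 2 * part 2 (pentagonalSeries R)) *
      (part 0 (pentagonalSeries R) + C z ^ 3 * part 1 (pentagonalSeries R)
        + (C z ^ 3) ^ 2 * part 2 (pentagonalSeries R)) *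
      (part 0 (pentagonalSeries R) + C z ^ 4 * part 1 (pentagonalSeries R)
        + (C z ^ 4) ^ 2 * part 2 (pentagonalSeries R))) := by
    simp only [nm, prod_range_succ, prod_range_zero, one_mul, hr]
    rw [pow_zero, one_pow, one_mul, one_mul, ← hE]
    ring
  rw [hM] at hnm
  generalize part 0 (pentagonalSeries R) = a at *
  generalize part 1 (pentagonalSeries R) = b at *
  generalize part 2 (pentagonalSeries R) = c at *
  have hBE : B R = expand 10 (by norm_num) (pentagonalSeries R) *
      expand 25 (by norm_num) (pentagonalSeries R) *
      (a ^ 4 + a ^ 3 * b + a * b ^ 3 + b ^ 3 * c + b * c ^ 3 + c ^ 4) +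
      expand 10 (by norm_num) (pentagonalSeries R) *
      expand 25 (by norm_num) (pentagonalSeries R) * (b * b * (b * b)) := by
    refine mul_right_cancel₀ h0 ?_
    rw [hB, h40, ← h10]
    rw [hnm] at hN
    linear_combination -expand 5 (by norm_num) (pentagonalSeries R) ^ 2 * hN
  have hp : Supp (expand 10 (by norm_num) (pentagonalSeries R) *
      expand 25 (by norm_num) (pentagonalSeries R))
      (fun n => n % 25 = 0 ∨ n % 25 = 10 ∨ n % 25 = 20) :=
    hE10.mul h25 fun i j hi hj => by omega
  have s1 : Supp (a ^ 4 + a ^ 3 * b + a * b ^ 3 + b ^ 3 * c + b * c ^ 3 + c ^ 4) (· % 5 ≠ 4) := by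
    refine ((((Supp.add ?_ ?_).add ?_).add ?_).add ?_).add ?_
    · exact (ha.pow5 4).mono (by simp +contextual)
    · exact ((ha.pow5 3).mul5 hb).mono (by simp +contextual)
    · exact (ha.mul5 (hb.pow5 3)).mono (by simp +contextual)
    · exact ((hb.pow5 3).mul5 hc).mono (by simp +contextual)
    · exact (hb.mul5 (hc.pow5 3)).mono (by simp +contextual)
    · exact (hc.pow5 4).mono (by simp +contextual)
  have s2 : Supp (b * b) (· % 25 = 2) := hb25.mul hb25 fun i j hi hj => by omega
  have s3 : Supp (b * b * (b * b)) (· % 25 = 4) := s2.mul s2 fun i j hi hj => by omega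
  have s4 : Supp (B R) (fun n => ¬ (n % 25 = 9 ∨ n % 25 = 19)) := by
    rw [hBE]
    exact (hp.mul s1 fun i j hi hj => by omega).add (hp.mul s3 fun i j hi hj => by omega)
  by_contra h
  exact s4 n h hn

lemma exists_root : ∃ z : AlgebraicClosure (ZMod 2), 1 + z + z ^ 2 + z ^ 3 + z ^ 4 = 0 := by
  obtain ⟨z, hz⟩ := IsAlgClosed.exists_root (Polynomial.cyclotomic 5 (AlgebraicClosure (ZMod 2)))
    (by rw [Polynomial.degree_cyclotomic]; decide)
  refine ⟨z, ?_⟩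
  have : Fact (Nat.Prime 5) := ⟨by norm_num⟩
  rw [Polynomial.IsRoot.def, Polynomial.cyclotomic_prime] at hz
  simpa [Finset.sum_range_succ] using hz

lemma even_of (n : ℕ) (hn : n % 25 = 9 ∨ n % 25 = 19) : Even (numRegularPartitions 40 n) := by
  obtain ⟨z, hz⟩ := exists_root
  have : CharP (AlgebraicClosure (ZMod 2)) 2 := charP_of_injective_algebraMap'  (ZMod 2) 2
  have h := main z hz n hn
  rw [B, coeff_mk, CharP.cast_eq_zero_iff _ 2,
    ← Nat.Partition.card_restricted_eq_card_countRestricted n (by norm_num)] at h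
  have e1 : numRegularPartitions 40 n = #(Nat.Partition.restricted n (¬ 40 ∣ ·)) := by
    rw [numRegularPartitions, Nat.card_eq_fintype_card, Fintype.card_subtype]
    rfl
  rw [e1]
  exact even_iff_two_dvd.2 h

end Final
end Reg40

theorem stmt_13 (n : ℕ) :
    Even (numRegularPartitions 40 (25 * n + 9)) ∧
    Even (numRegularPartitions 40 (25 * n + 19)) :=
  ⟨Reg40.even_of _ (by omega), Reg40.even_of _ (by omega)⟩
end

section
/- The set of natural numbers n for which b_200(125n + 24) ≢ p_17(5n + 2) (mod 2) has natural density zero, and the set of natural numbers n for which b_200(125n + 74) ≢ p_17(5n + 4) (mod 2) has natural density zero. (Here 125n + 24 = 25(5n+2) − 26 and 125n + 74 = 25(5n+4) − 26.) -/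
/-- The number of `t`-multipartitions of `n`, i.e. `t`-tuples of partitions
whose sizes sum to `n`. -/
noncomputable def numMultipartitions (t n : ℕ) : ℕ :=
  Nat.card {f : Fin t → Σ k : ℕ, k.Partition // (∑ i, (f i).1) = n}

namespace Par
open PowerSeries

noncomputable abbrev PS := PowerSeries (ZMod 2)

/-- All exponents in the support are congruent to `k` modulo 5. -/
def cls (k : ℕ) (F : PS) : Prop := ∀ n, n % 5 ≠ k % 5 → coeff n F = 0

/-- Projection onto the exponents congruent to `k` modulo 5. -/
noncomputable def pr (k : ℕ) (F : PS) : PS :=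
  PowerSeries.mk fun n => if n % 5 = k % 5 then coeff n F else 0

lemma coeff_pr (k n : ℕ) (F : PS) :
    coeff n (pr k F) = if n % 5 = k % 5 then coeff n F else 0 := by simp [pr]

lemma cls_pr (k : ℕ) (F : PS) : cls k (pr k F) := by
  intro n hn; simp [coeff_pr, hn]

lemma pr_add (k : ℕ) (F G : PS) : pr k (F + G) = pr k F + pr k G := by
  ext n; simp only [coeff_pr, map_add]; split_ifs <;> simp

lemma pr_of_cls {k : ℕ} {F : PS} (h : cls k F) : pr k F = F := by
  ext n; rw [coeff_pr]; split_ifs with h1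
  · rfl
  · exact (h n h1).symm

lemma pr_of_cls_ne {k j : ℕ} {F : PS} (h : cls j F) (hk : j % 5 ≠ k % 5) : pr k F = 0 := by
  ext n; rw [coeff_pr]; split_ifs with h1
  · rw [h n (by omega)]; simp
  · simp

lemma cls_mul {i j k : ℕ} {F G : PS} (hF : cls i F) (hG : cls j G) (h : (i + j) % 5 = k % 5) :
    cls k (F * G) := by
  intro n hn
  rw [coeff_mul]
  apply Finset.sum_eq_zero
  rintro ⟨a, b⟩ hab
  rw [Finset.HasAntidiagonal.mem_antidiagonal] at hab
  simp only at hab ⊢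
  by_cases ha : a % 5 = i % 5
  · rw [hG b (by omega), mul_zero]
  · rw [hF a ha, zero_mul]

lemma cls_add {k : ℕ} {F G : PS} (hF : cls k F) (hG : cls k G) : cls k (F + G) := by
  intro n hn; rw [map_add, hF n hn, hG n hn, add_zero]

lemma cls_one : cls 0 1 := by
  intro n hn; rw [coeff_one, if_neg (by rintro rfl; simp at hn)]

lemma cls_congr {i j : ℕ} {F : PS} (hF : cls i F) (h : i % 5 = j % 5) : cls j F := by
  intro n hn; exact hF n (by omega)

lemma cls_pow {i : ℕ} {F : PS} (hF : cls i F) (m : ℕ) : cls (i * m) (F ^ m) := by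
  induction m with
  | zero => simpa using cls_one
  | succ m ih => rw [pow_succ]; exact cls_mul ih hF (by ring_nf)

lemma cls_X : cls 1 (X : PS) := by
  intro n hn; rw [coeff_X, if_neg (by rintro rfl; simp at hn)]

noncomputable def sg : PS →ₐ[ZMod 2] PS := PowerSeries.expand 5 (by norm_num)

lemma cls_sg (F : PS) : cls 0 (sg F) := by
  intro n hn
  exact PowerSeries.coeff_expand_of_not_dvd 5 (by norm_num) _ (by omega)

lemma coeff_sg (F : PS) (n : ℕ) : coeff (5 * n) (sg F) = coeff n F :=
  PowerSeries.coeff_expand_mul 5 (by norm_num) _ _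

lemma pr_mul_left {k : ℕ} {F : PS} (h : cls 0 F) (G : PS) : pr k (F * G) = F * pr k G := by
  ext n
  rw [coeff_pr, coeff_mul, coeff_mul]
  split_ifs with h1
  · apply Finset.sum_congr rfl
    rintro ⟨a, b⟩ hab
    rw [Finset.HasAntidiagonal.mem_antidiagonal] at hab
    simp only at hab ⊢
    by_cases ha : a % 5 = 0
    · rw [coeff_pr, if_pos (by omega)]
    · rw [h a (by omega)]; simp
  · symm
    apply Finset.sum_eq_zero
    rintro ⟨a, b⟩ hab
    rw [Finset.HasAntidiagonal.mem_antidiagonal] at hab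
    simp only at hab ⊢
    by_cases ha : a % 5 = 0
    · rw [coeff_pr, if_neg (by omega), mul_zero]
    · rw [h a (by omega)]; simp

noncomputable def u : PS := pentagonalSeries (ZMod 2)
noncomputable def v : PS := sg u
noncomputable def w : PS := sg v
noncomputable def A : PS := pr 0 u
noncomputable def B : PS := pr 1 u
noncomputable def C : PS := pr 2 u

lemma F2_eq {a b : ZMod 2} (h : a = 0 ↔ b = 0) : a = b := by
  revert a b; decide

lemma coeff_u_eq_zero {n : ℕ} : coeff n u = 0 ↔ n ∉ Set.range pentagonal :=
  coeff_pentagonalSeries_eq_zero_iff _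

lemma pent_cases (k : ℤ) :
    (k % 5 = 1 ∧ pentagonal k % 5 = 1) ∨ pentagonal k % 5 = 0 ∨ pentagonal k % 5 = 2 := by
  have h := two_mul_natCast_pentagonal k
  have h5 : k % 5 = 0 ∨ k % 5 = 1 ∨ k % 5 = 2 ∨ k % 5 = 3 ∨ k % 5 = 4 := by omega
  have key : ∀ r : ℤ, k % 5 = r → (2 * (pentagonal k : ℤ)) % 5 = (r * (3 * r - 1)) % 5 := by
    intro r hr
    rw [h, ← hr]
    exact (((Int.mod_modEq k 5).symm.mul (((Int.mod_modEq k 5).symm.mul_left 3).sub_right 1)))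
  rcases h5 with h5 | h5 | h5 | h5 | h5 <;> have := key _ h5 <;> norm_num at this <;> omega

lemma u_eq : u = A + B + C := by
  ext n
  simp only [A, B, C, map_add, coeff_pr]
  by_cases h : n ∈ Set.range pentagonal
  · obtain ⟨k, rfl⟩ := h
    rcases pent_cases k with h | h | h <;> simp [h]
  · rw [coeff_u_eq_zero.2 h]; simp

lemma B_eq : B = X * w := by
  ext n
  apply F2_eq
  rw [B, coeff_pr]
  rcases n with _ | n
  · simp
  rw [coeff_succ_X_mul]
  split_ifs with h1
  · rw [coeff_u_eq_zero]
    obtain ⟨m, rfl⟩ : ∃ m, n = 5 * m := ⟨n / 5, by omega⟩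
    rw [w, coeff_sg, v]
    by_cases hm : m % 5 = 0
    · obtain ⟨l, rfl⟩ : ∃ l, m = 5 * l := ⟨m / 5, by omega⟩
      rw [coeff_sg, coeff_u_eq_zero, not_iff_not]
      constructor
      · rintro ⟨k, hk⟩
        have h2 := pent_cases k
        have : k % 5 = 1 := by omega
        obtain ⟨j, rfl⟩ : ∃ j, k = 5 * j + 1 := ⟨k / 5, by omega⟩
        refine ⟨-j, ?_⟩
        have h3 := two_mul_natCast_pentagonal (5 * j + 1)
        have h4 := two_mul_natCast_pentagonal (-j)
        rw [hk] at h3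
        push_cast at h3
        zify
        nlinarith
      · rintro ⟨k, hk⟩
        refine ⟨5 * (-k) + 1, ?_⟩
        have h3 := two_mul_natCast_pentagonal (5 * (-k) + 1)
        have h4 := two_mul_natCast_pentagonal k
        rw [hk] at h4
        zify
        nlinarith
    · rw [cls_sg u m (by omega)]
      simp only [iff_true]
      rintro ⟨k, hk⟩
      have h2 := pent_cases k
      have : k % 5 = 1 := by omega
      obtain ⟨j, rfl⟩ : ∃ j, k = 5 * j + 1 := ⟨k / 5, by omega⟩
      have h3 := two_mul_natCast_pentagonal (5 * j + 1)
      have h4 := two_mul_natCast_pentagonal (-j)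
      rw [hk] at h3
      push_cast at h3
      have : (m : ℤ) = 5 * (pentagonal (-j) : ℤ) := by nlinarith
      omega
  · simp only [true_iff]
    exact cls_sg _ _ (by omega)

lemma two_ps : (2 : PS) = 0 := by
  have h := map_ofNat (PowerSeries.C (R := ZMod 2)) 2
  rw [← h, show (OfNat.ofNat 2 : ZMod 2) = 0 from by decide, map_zero]

lemma u0 : coeff 0 u = 1 := by
  have h : pentagonal 0 = 0 := by decide
  have := coeff_pentagonalSeries_pentagonal (ZMod 2) 0
  rw [h] at this
  rw [u, this]; simp

lemma sg0 (F : PS) : coeff 0 (sg F) = coeff 0 F := coeff_sg F 0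
lemma A0 : coeff 0 A = 1 := by simp [A, coeff_pr, u0]
lemma ne_zero_of {F : PS} (h : coeff 0 F = 1) : F ≠ 0 := by rintro rfl; simp at h
lemma v0 : coeff 0 v = 1 := (sg0 _).trans u0
lemma w0 : coeff 0 w = 1 := (sg0 _).trans v0

end Par

namespace Par
open PowerSeries

/-- finite Shanks identity for Gauss' triangular number series -/
noncomputable def ev (s n : ℕ) : PS := ∏ k ∈ Finset.Ico s n, (1 - X ^ (2 * (k + 1)))
noncomputable def od (n : ℕ) : PS := ∏ k ∈ Finset.range n, (1 - X ^ (2 * k + 1))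

lemma ev_succ {s n : ℕ} (h : s ≤ n) : ev s (n+1) = ev s n * (1 - X ^ (2 * (n + 1))) := by
  rw [ev, Finset.prod_Ico_succ_top h]; rfl
lemma ev_left {s n : ℕ} (h : s < n) : ev s n = (1 - X ^ (2 * (s + 1))) * ev (s+1) n := by
  rw [ev, Finset.prod_eq_prod_Ico_succ_bot h]; rfl
lemma od_succ (n : ℕ) : od (n+1) = od n * (1 - X ^ (2 * n + 1)) := by
  rw [od, Finset.prod_range_succ]; rfl

noncomputable def shT (n s : ℕ) : PS := X ^ (s * (2 * n + 1)) * ev s n * od s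

lemma tel (n m : ℕ) (hm : m ≤ n) :
    (∑ s ∈ Finset.range m, X ^ (s * (2 * n + 3)) * ev s (n+1) * od s)
     - (1 - X ^ (2 * n + 1)) * (∑ s ∈ Finset.range m, X ^ (s * (2 * n + 1)) * ev s n * od s)
    = if m = 0 then 0 else X ^ (m * (2 * n + 1)) * ev (m - 1) n * od m := by
  induction m with
  | zero => simp
  | succ m ih =>
    have ih := ih (by omega)
    rw [Finset.sum_range_succ, Finset.sum_range_succ]
    rw [if_neg (by omega), Nat.add_sub_cancel]
    rw [ev_succ (by omega : m ≤ n), od_succ]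
    rcases m with _ | m
    · simp at ih ⊢
      ring
    · rw [if_neg (by omega), Nat.add_sub_cancel, ev_left (by omega : m < n)] at ih
      linear_combination ih

lemma shanks (n : ℕ) : od n * ∑ s ∈ Finset.range (2 * n), (X : PS) ^ (s * (s + 1) / 2) =
    ∑ s ∈ Finset.range n, X ^ (s * (2 * n + 1)) * ev s n * od s := by
  induction n with
  | zero => simp
  | succ n ih =>
    have h := tel n n le_rfl
    rw [show 2 * (n + 1) = 2 * n + 1 + 1 by ring, Finset.sum_range_succ, Finset.sum_range_succ,
      od_succ, Finset.sum_range_succ]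
    have e1 : 2 * n * (2 * n + 1) / 2 = n * (2 * n + 1) := by
      rw [show 2 * n * (2 * n + 1) = 2 * (n * (2 * n + 1)) by ring]
      exact Nat.mul_div_cancel_left _ (by norm_num)
    have e2 : (2 * n + 1) * (2 * n + 1 + 1) / 2 = (n + 1) * (2 * n + 1) := by
      rw [show (2 * n + 1) * (2 * n + 1 + 1) = 2 * ((n + 1) * (2 * n + 1)) by ring]
      exact Nat.mul_div_cancel_left _ (by norm_num)
    rw [e1, e2]
    have e3 : ev n (n + 1) = 1 - X ^ (2 * (n + 1)) := by simp [ev]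
    rw [e3]
    have e4 : ∀ s, s * (2 * n + 1 + 1 + 1) = s * (2 * n + 3) := fun s => by ring
    simp only [e4]
    rcases n with _ | n
    · simp [od]; ring
    · rw [if_neg (by omega), Nat.add_sub_cancel, ev_left (by omega : n < n + 1)] at h
      have e5 : ev (n + 1) (n + 1) = 1 := by simp [ev]
      rw [e5] at h
      linear_combination (1 - X ^ (2 * (n + 1) + 1)) * ih - h

open Classical in
noncomputable def psi : PS := PowerSeries.mk fun n =>
  if ∃ s : ℕ, s * (s + 1) / 2 = n then 1 else 0

lemma tri_inj {a b : ℕ} (h : a * (a + 1) / 2 = b * (b + 1) / 2) : a = b := by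
  have h1 := Nat.div_mul_cancel (Nat.even_mul_succ_self a).two_dvd
  have h2 := Nat.div_mul_cancel (Nat.even_mul_succ_self b).two_dvd
  rw [h] at h1
  rw [h1] at h2
  rcases lt_trichotomy a b with h3 | h3 | h3
  · nlinarith
  · exact h3
  · nlinarith

open scoped PowerSeries.WithPiTopology
open Filter Topology

section
local instance : TopologicalSpace (ZMod 2) := ⊥
local instance : DiscreteTopology (ZMod 2) := ⟨rfl⟩

lemma tri_sum_coeff (n d : ℕ) (h : d < n) :
    coeff d (∑ s ∈ Finset.range (2 * n), (X : PS) ^ (s * (s + 1) / 2)) = coeff d psi := by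
  rw [map_sum, psi, coeff_mk]
  simp only [coeff_X_pow]
  split_ifs with hs
  · obtain ⟨s, rfl⟩ := hs
    rw [Finset.sum_eq_single s]
    · simp
    · intro b _ hb
      rw [if_neg]; intro hh; exact hb (tri_inj hh.symm)
    · intro hs
      exfalso
      apply hs
      rw [Finset.mem_range]
      have h1 := Nat.div_mul_cancel (Nat.even_mul_succ_self s).two_dvd
      nlinarith
  · apply Finset.sum_eq_zero
    intro s _
    rw [if_neg]; intro hh; exact hs ⟨s, hh.symm⟩

lemma hasProd_u : HasProd (fun n ↦ (1 - X ^ (n + 1) : PS)) u :=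
  WithPiTopology.hasProd_one_sub_X_pow _

lemma tendsto_u : Tendsto (fun n ↦ ∏ k ∈ Finset.range n, (1 - X ^ (k + 1) : PS)) atTop (𝓝 u) :=
  hasProd_u.tendsto_prod_nat

lemma sq_one_sub (a : PS) : (1 - a) ^ 2 = 1 - a ^ 2 := by
  linear_combination (a ^ 2 - a) * two_ps

lemma ev_zero (n : ℕ) : ev 0 n = (∏ k ∈ Finset.range n, (1 - X ^ (k + 1) : PS)) ^ 2 := by
  rw [ev, ← Finset.prod_pow, Finset.range_eq_Ico]
  apply Finset.prod_congr rfl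
  intro k _
  rw [sq_one_sub, ← pow_mul, mul_comm 2]

lemma od_ev (n : ℕ) : od n * ev 0 n = ∏ k ∈ Finset.range (2 * n), (1 - X ^ (k + 1) : PS) := by
  induction n with
  | zero => simp [od, ev]
  | succ n ih =>
    rw [od_succ, ev_succ (by omega), show 2 * (n + 1) = 2 * n + 1 + 1 by ring,
      Finset.prod_range_succ, Finset.prod_range_succ, ← ih]
    ring

lemma psi_eq : psi = u ^ 3 := by
  set p : ℕ → PS := fun n ↦ ∏ k ∈ Finset.range n, (1 - X ^ (k + 1) : PS) with hp
  set t : ℕ → PS := fun n => ∑ s ∈ Finset.range (2 * n), (X : PS) ^ (s * (s + 1) / 2) with ht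
  have htt : Tendsto t atTop (𝓝 psi) := by
    rw [WithPiTopology.tendsto_iff_coeff_tendsto]
    intro d
    apply tendsto_atTop_of_eventually_const (i₀ := d + 1)
    intro i hi
    exact tri_sum_coeff i d (by omega)
  have hr : Tendsto (fun n => ∑ s ∈ Finset.range n,
      X ^ (s * (2 * n + 1)) * ev s n * od s - ev 0 n) atTop (𝓝 0) := by
    rw [WithPiTopology.tendsto_iff_coeff_tendsto]
    intro d
    apply tendsto_atTop_of_eventually_const (i₀ := d + 1)
    intro i hi
    obtain ⟨j, rfl⟩ : ∃ j, i = j + 1 := ⟨i - 1, by omega⟩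
    rw [Finset.sum_range_succ']
    simp only [zero_mul, pow_zero, one_mul]
    rw [show od 0 = 1 by simp [od], mul_one, add_sub_cancel_right, map_sum, map_zero]
    apply Finset.sum_eq_zero
    intro s _
    rw [mul_assoc, coeff_X_pow_mul', if_neg]
    nlinarith
  have h1 : Tendsto (fun n => p (2 * n) * t n) atTop (𝓝 (u * psi)) :=
    (tendsto_u.comp (tendsto_id.const_mul_atTop' (by norm_num : 0 < 2))).mul htt
  have h2 : Tendsto (fun n => p n ^ 2 * (∑ s ∈ Finset.range n,
      X ^ (s * (2 * n + 1)) * ev s n * od s - ev 0 n) + p n ^ 4) atTop (𝓝 (u ^ 2 * 0 + u ^ 4)) :=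
    ((tendsto_u.pow 2).mul hr).add (tendsto_u.pow 4)
  have h3 : (fun n => p (2 * n) * t n) = (fun n => p n ^ 2 * (∑ s ∈ Finset.range n,
      X ^ (s * (2 * n + 1)) * ev s n * od s - ev 0 n) + p n ^ 4) := by
    funext n
    rw [← shanks, hp]
    simp only
    rw [← od_ev, ← ev_zero, ht]
    have := ev_zero n
    simp only
    linear_combination (ev 0 n + (∏ k ∈ Finset.range n, (1 - X ^ (k + 1) : PS)) ^ 2) * this
  rw [h3] at h1
  have := tendsto_nhds_unique h1 h2
  have hu := ne_zero_of u0
  apply mul_left_cancel₀ hu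
  rw [this]; ring
end

lemma u3_cls : u ^ 3 = pr 0 (u ^ 3) + pr 1 (u ^ 3) + pr 3 (u ^ 3) := by
  rw [← psi_eq]
  ext n
  simp only [map_add, coeff_pr]
  by_cases h : ∃ s : ℕ, s * (s + 1) / 2 = n
  · have : n % 5 = 0 ∨ n % 5 = 1 ∨ n % 5 = 3 := by
      obtain ⟨s, rfl⟩ := h
      have h1 := Nat.div_mul_cancel (Nat.even_mul_succ_self s).two_dvd
      have key : (s * (s + 1)) % 5 = ((s % 5) * (s % 5 + 1)) % 5 :=
        ((Nat.mod_modEq s 5).symm.mul ((Nat.mod_modEq s 5).symm.add_right 1))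
      have : s % 5 < 5 := Nat.mod_lt _ (by norm_num)
      rw [← h1] at key
      interval_cases s % 5 <;> omega
    rcases this with h | h | h <;> simp [h]
  · have : coeff n psi = 0 := by rw [psi, coeff_mk, if_neg h]
    rw [this]; simp

end Par

namespace Par
open PowerSeries
open scoped PowerSeries.WithPiTopology
open Filter Topology

section
variable {R : Type*} [CommRing R] [TopologicalSpace R] [DiscreteTopology R]

lemma cont_rescale (a : R) : Continuous (rescale a : R⟦X⟧ →+* R⟦X⟧) := by
  rw [continuous_iff_continuousAt]
  intro F
  rw [ContinuousAt, WithPiTopology.tendsto_iff_coeff_tendsto]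
  intro d
  simp only [coeff_rescale]
  exact tendsto_const_nhds.mul ((WithPiTopology.continuous_coeff R d).tendsto F)

lemma cont_expand (p : ℕ) (hp : p ≠ 0) : Continuous (expand p hp : R⟦X⟧ →ₐ[R] R⟦X⟧) := by
  rw [continuous_iff_continuousAt]
  intro F
  rw [ContinuousAt, WithPiTopology.tendsto_iff_coeff_tendsto]
  intro d
  simp only [coeff_expand]
  split_ifs
  · exact ((WithPiTopology.continuous_coeff R _).tendsto F)
  · exact tendsto_const_nhds

lemma hasProd_expand (p : ℕ) (hp : p ≠ 0) :
    HasProd (fun n : ℕ => (1 - X ^ (p * (n + 1)) : R⟦X⟧)) (expand p hp (pentagonalSeries R)) := by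
  have := (WithPiTopology.hasProd_one_sub_X_pow R).map (expand p hp (R := R)) (cont_expand p hp)
  convert this using 2 with n
  simp [expand_X, pow_mul]

lemma hasProd_expand' (p : ℕ) (hp : p ≠ 0) (k : ℕ) (hk : k ≠ 0) :
    HasProd (fun n : ℕ => if p ∣ n + 1 then (1 - X ^ (k * (n + 1)) : R⟦X⟧) else 1)
      (expand (k * p) (Nat.mul_ne_zero hk hp) (pentagonalSeries R)) := by
  have := hasProd_expand (R := R) (k * p) (Nat.mul_ne_zero hk hp)
  have inj : Function.Injective (fun n : ℕ => p * (n + 1) - 1) := by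
    intro a b hab
    simp only at hab
    have h1 : 0 < p * (a + 1) := by positivity
    have h2 : 0 < p * (b + 1) := by positivity
    have : p * (a + 1) = p * (b + 1) := by omega
    simpa [hp] using this
  rw [← inj.hasProd_iff]
  · convert this using 2 with n
    have h1 : 0 < p * (n + 1) := by positivity
    simp only [Function.comp]
    rw [Nat.sub_add_cancel (by omega), if_pos (dvd_mul_right _ _), mul_assoc]
  · intro n hn
    rw [if_neg]
    rintro ⟨c, hc⟩
    apply hn
    rcases c with _ | c
    · simp at hc
    · exact ⟨c, by simp only; omega⟩

lemma hasProd_rescale (a : R) :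
    HasProd (fun n : ℕ => (1 - PowerSeries.C (a ^ (n + 1)) * X ^ (n + 1) : R⟦X⟧))
      (rescale a (pentagonalSeries R)) := by
  have := (WithPiTopology.hasProd_one_sub_X_pow R).map (rescale a) (cont_rescale a)
  convert this using 2 with n
  simp [rescale_X, mul_pow]

lemma fac {K : Type*} [CommRing K] (z y : K) (h : 1 + z + z ^ 2 + z ^ 3 + z ^ 4 = 0) :
    ∏ i ∈ Finset.range 5, (1 - z ^ i * y) = 1 - y ^ 5 := by
  have h5 : z ^ 5 = 1 := by linear_combination (z - 1) * h
  have h6 : z ^ 6 = z := by linear_combination z * h5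
  have h7 : z ^ 7 = z ^ 2 := by linear_combination z ^ 2 * h5
  have h8 : z ^ 8 = z ^ 3 := by linear_combination z ^ 3 * h5
  have h9 : z ^ 9 = z ^ 4 := by linear_combination z ^ 4 * h5
  have h10 : z ^ 10 = 1 := by linear_combination (z ^ 5 + 1) * h5
  simp only [Finset.prod_range_succ, Finset.prod_range_zero]
  ring_nf
  simp only [h5, h6, h7, h8, h9, h10]
  linear_combination (-y + 2 * y ^ 2 - 2 * y ^ 3 + y ^ 4) * h

/-- The norm of the Euler product. -/
lemma norm_prod (z : R) (h : 1 + z + z ^ 2 + z ^ 3 + z ^ 4 = 0) :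
    (∏ i ∈ Finset.range 5, rescale (z ^ i) (pentagonalSeries R)) *
      expand 25 (by norm_num) (pentagonalSeries R) =
      (expand 5 (by norm_num) (pentagonalSeries R)) ^ 6 := by
  have h5 : z ^ 5 = 1 := by linear_combination (z - 1) * h
  have e1 : HasProd (fun n : ℕ => ∏ i ∈ Finset.range 5,
      (1 - PowerSeries.C ((z ^ i) ^ (n + 1)) * X ^ (n + 1) : R⟦X⟧))
      (∏ i ∈ Finset.range 5, rescale (z ^ i) (pentagonalSeries R)) :=
    hasProd_prod fun i _ => hasProd_rescale (z ^ i)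
  have e2 := e1.mul (hasProd_expand' (R := R) 5 (by norm_num) 5 (by norm_num))
  have e3 := (hasProd_expand (R := R) 5 (by norm_num)).mul
    ((hasProd_expand' (R := R) 5 (by norm_num) 1 (by norm_num)).pow 5)
  have e4 : (fun b : ℕ => (∏ i ∈ Finset.range 5,
      (1 - PowerSeries.C ((z ^ i) ^ (b + 1)) * X ^ (b + 1) : R⟦X⟧)) *
        if 5 ∣ b + 1 then 1 - X ^ (5 * (b + 1)) else 1) =
      (fun b : ℕ => (1 - X ^ (5 * (b + 1)) : R⟦X⟧) *
        (if 5 ∣ b + 1 then 1 - X ^ (1 * (b + 1)) else 1) ^ 5) := by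
    funext b
    split_ifs with hb
    · obtain ⟨c, hc⟩ := hb
      rw [hc]
      have : ∀ i, (z ^ i) ^ (5 * c) = 1 := by
        intro i
        rw [← pow_mul, show i * (5 * c) = 5 * (i * c) by ring, pow_mul, h5, one_pow]
      simp only [this, map_one, one_mul, Finset.prod_const, Finset.card_range]
      ring
    · rw [one_pow, mul_one, mul_one]
      have hz : 1 + z ^ (b + 1) + (z ^ (b + 1)) ^ 2 + (z ^ (b + 1)) ^ 3 + (z ^ (b + 1)) ^ 4 = 0 := by
        have h6 : z ^ 6 = z := by linear_combination z * h5
        have h7 : z ^ 7 = z ^ 2 := by linear_combination z ^ 2 * h5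
        have h8 : z ^ 8 = z ^ 3 := by linear_combination z ^ 3 * h5
        have h9 : z ^ 9 = z ^ 4 := by linear_combination z ^ 4 * h5
        have h12 : z ^ 12 = z ^ 2 := by linear_combination (z ^ 7 + z ^ 2) * h5
        have h16 : z ^ 16 = z := by linear_combination (z ^ 11 + z ^ 6 + z) * h5
        have hm : z ^ (b + 1) = z ^ ((b + 1) % 5) := by
          conv_lhs => rw [← Nat.div_add_mod (b + 1) 5, pow_add, pow_mul, h5, one_pow, one_mul]
        rw [hm]
        have h1 : (b + 1) % 5 < 5 := Nat.mod_lt _ (by norm_num)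
        have h2 : (b + 1) % 5 ≠ 0 := by omega
        generalize (b + 1) % 5 = r at *
        interval_cases r
        · omega
        · linear_combination h
        · linear_combination h + h6 + h8
        · linear_combination h + h6 + h9 + h12
        · linear_combination h + h8 + h12 + h16
      have := fac (PowerSeries.C (z ^ (b + 1))) (X ^ (b + 1) : R⟦X⟧)
        (by simp only [← map_pow, ← map_add, ← map_one PowerSeries.C]; rw [hz, map_zero])
      rw [mul_comm 5, pow_mul, ← this]
      apply Finset.prod_congr rfl
      intro i _
      rw [← map_pow, ← pow_mul, ← pow_mul, mul_comm i]
  rw [e4] at e2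
  have := e2.unique e3
  rw [this]
  simp only [one_mul]
  ring
end

lemma map_pent {R S : Type*} [CommRing R] [CommRing S] (f : R →+* S) :
    PowerSeries.map f (pentagonalSeries R) = pentagonalSeries S := by
  ext n
  rw [coeff_map]
  by_cases h : n ∈ Set.range pentagonal
  · obtain ⟨k, rfl⟩ := h
    simp
  · rw [coeff_pentagonalSeries_eq_zero _ h, coeff_pentagonalSeries_eq_zero _ h, map_zero]

lemma rescale_cls {K : Type*} [CommRing K] (f : ZMod 2 →+* K) {k : ℕ} {F : PS} (hF : cls k F)
    (a : K) (ha : a ^ 5 = 1) :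
    rescale a (PowerSeries.map f F) = PowerSeries.C (a ^ k) * PowerSeries.map f F := by
  ext n
  rw [coeff_rescale, coeff_C_mul, coeff_map]
  by_cases h : n % 5 = k % 5
  · have hm : ∀ m, a ^ m = a ^ (m % 5) := fun m => by
      conv_lhs => rw [← Nat.div_add_mod m 5, pow_add, pow_mul, ha, one_pow, one_mul]
    rw [hm n, hm k, h]
  · rw [hF n h]; simp

lemma norm_poly {K : Type*} [CommRing K] (z a b c : K) (h : 1 + z + z ^ 2 + z ^ 3 + z ^ 4 = 0)
    (hb : a * c = b ^ 2) :
    ∏ i ∈ Finset.range 5, (a + z ^ i * b + (z ^ i) ^ 2 * c) = a ^ 5 + b ^ 5 + c ^ 5 := by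
  have h5 : z ^ 5 = 1 := by linear_combination (z - 1) * h
  have key : ∏ i ∈ Finset.range 5, (a + z ^ i * b + (z ^ i) ^ 2 * c) =
      a ^ 5 + b ^ 5 + c ^ 5 - 5 * a * c * b ^ 3 + 5 * a ^ 2 * c ^ 2 * b := by
    have h6 : z ^ 6 = z := by linear_combination z * h5
    have h8 : z ^ 8 = z ^ 3 := by linear_combination z ^ 3 * h5
    have f3 : a + z ^ 3 * b + (z ^ 3) ^ 2 * c = a + z ^ 3 * b + z * c := by
      linear_combination c * h6
    have f4 : a + z ^ 4 * b + (z ^ 4) ^ 2 * c = a + z ^ 4 * b + z ^ 3 * c := by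
      linear_combination c * h8
    simp only [Finset.prod_range_succ, Finset.prod_range_zero, f3, f4]
    obtain ⟨s, hs⟩ : ∃ s, s = z + z ^ 4 := ⟨_, rfl⟩
    obtain ⟨t, ht⟩ : ∃ t, t = z ^ 2 + z ^ 3 := ⟨_, rfl⟩
    have hst : s + t = -1 := by rw [hs, ht]; linear_combination h
    have hst2 : s * t = -1 := by
      rw [hs, ht]; linear_combination h + (z + z ^ 2) * h5
    have p1 : (a + z ^ 1 * b + (z ^ 1) ^ 2 * c) * (a + z ^ 4 * b + z ^ 3 * c) =
        a ^ 2 + b ^ 2 + c ^ 2 + (a * b + b * c) * s + a * c * t := by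
      rw [hs, ht]; linear_combination (b ^ 2 + c ^ 2 + b * c * z) * h5
    have p2 : (a + z ^ 2 * b + (z ^ 2) ^ 2 * c) * (a + z ^ 3 * b + z * c) =
        a ^ 2 + b ^ 2 + c ^ 2 + (a * b + b * c) * t + a * c * s := by
      rw [hs, ht]; linear_combination (b ^ 2 + c ^ 2 + b * c * z ^ 2) * h5
    have p3 : (a ^ 2 + b ^ 2 + c ^ 2 + (a * b + b * c) * s + a * c * t) *
        (a ^ 2 + b ^ 2 + c ^ 2 + (a * b + b * c) * t + a * c * s) =
        (a ^ 2 + b ^ 2 + c ^ 2) ^ 2 - (a ^ 2 + b ^ 2 + c ^ 2) * (a * b + b * c + a * c)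
        - ((a * b + b * c) ^ 2 + (a * c) ^ 2) + 3 * (a * b + b * c) * (a * c) := by
      linear_combination ((a ^ 2 + b ^ 2 + c ^ 2) * (a * b + b * c + a * c)
        + (a * b + b * c) * (a * c) * (s + t - 1)) * hst
        + ((a * b + b * c) ^ 2 + (a * c) ^ 2 - 2 * (a * b + b * c) * (a * c)) * hst2
    calc _ = (a + b + c) * (((a + z ^ 1 * b + (z ^ 1) ^ 2 * c) * (a + z ^ 4 * b + z ^ 3 * c)) *
          ((a + z ^ 2 * b + (z ^ 2) ^ 2 * c) * (a + z ^ 3 * b + z * c))) := by ring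
      _ = _ := by rw [p1, p2, p3]; ring
  rw [key]
  linear_combination (5 * a * c * b) * hb

lemma exists_z : ∃ z : AlgebraicClosure (ZMod 2), 1 + z + z ^ 2 + z ^ 3 + z ^ 4 = 0 := by
  have hp : (1 + Polynomial.X + Polynomial.X ^ 2 + Polynomial.X ^ 3 + Polynomial.X ^ 4 :
      Polynomial (AlgebraicClosure (ZMod 2))).degree = 4 := by compute_degree!
  obtain ⟨z, hz⟩ := IsAlgClosed.exists_root _ (by rw [hp]; norm_num)
  exact ⟨z, by simpa [Polynomial.IsRoot] using hz⟩

lemma norm_eq (hAC : A * C = B ^ 2) : v ^ 6 = w * (A ^ 5 + B ^ 5 + C ^ 5) := by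
  obtain ⟨z, hz⟩ := exists_z
  have h5 : z ^ 5 = 1 := by linear_combination (z - 1) * hz
  let _ : TopologicalSpace (AlgebraicClosure (ZMod 2)) := ⊥
  have _ : DiscreteTopology (AlgebraicClosure (ZMod 2)) := ⟨rfl⟩
  set f : ZMod 2 →+* AlgebraicClosure (ZMod 2) := algebraMap _ _ with hf
  have key := norm_prod z hz
  rw [← map_pent f] at key
  have h25 : PowerSeries.expand 25 (by norm_num) (pentagonalSeries (ZMod 2)) = w := by
    rw [w, v, sg, u]
    exact PowerSeries.expand_mul 5 (by norm_num) 5 (by norm_num) _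
  rw [← PowerSeries.map_expand, ← PowerSeries.map_expand, h25] at key
  have e : ∀ i, rescale (z ^ i) (PowerSeries.map f (pentagonalSeries (ZMod 2))) =
      PowerSeries.map f A + (PowerSeries.C z) ^ i * PowerSeries.map f B +
        ((PowerSeries.C z) ^ i) ^ 2 * PowerSeries.map f C := by
    intro i
    have hi : (z ^ i) ^ 5 = 1 := by rw [← pow_mul, mul_comm, pow_mul, h5, one_pow]
    have hu : pentagonalSeries (ZMod 2) = pr 0 u + pr 1 u + pr 2 u := u_eq
    rw [hu, map_add, map_add, map_add, map_add, rescale_cls f (cls_pr 0 u) _ hi,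
      rescale_cls f (cls_pr 1 u) _ hi, rescale_cls f (cls_pr 2 u) _ hi]
    simp [A, B, C]
  simp only [e] at key
  rw [norm_poly] at key
  · have inj : Function.Injective (PowerSeries.map f) :=
      PowerSeries.map_injective f f.injective
    apply inj
    rw [map_pow, map_mul, map_add, map_add, map_pow, map_pow, map_pow, mul_comm]
    rw [key, v, u, sg]
  · simp only [← map_pow, ← map_add, ← map_one PowerSeries.C]; rw [hz, map_zero]
  · rw [← map_mul, hAC, map_pow]
end Par

namespace Par
open PowerSeries

lemma pr_mul_cls {j k l : ℕ} {G : PS} (h : cls j G) (F : PS) (hl : l % 5 = (k + j) % 5) :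
    pr l (F * G) = pr k F * G := by
  ext n
  rw [coeff_pr, coeff_mul, coeff_mul]
  split_ifs with h1
  · apply Finset.sum_congr rfl
    rintro ⟨a, b⟩ hab
    rw [Finset.HasAntidiagonal.mem_antidiagonal] at hab
    simp only at hab ⊢
    by_cases hb : b % 5 = j % 5
    · rw [coeff_pr, if_pos (by omega)]
    · rw [h b hb]; simp
  · symm
    apply Finset.sum_eq_zero
    rintro ⟨a, b⟩ hab
    rw [Finset.HasAntidiagonal.mem_antidiagonal] at hab
    simp only at hab ⊢
    by_cases hb : b % 5 = j % 5
    · rw [coeff_pr, if_neg (by omega), zero_mul]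
    · rw [h b hb]; simp

lemma sum_pr (F : PS) : F = pr 0 F + pr 1 F + pr 2 F + pr 3 F + pr 4 F := by
  ext n
  simp only [map_add, coeff_pr]
  have : n % 5 = 0 ∨ n % 5 = 1 ∨ n % 5 = 2 ∨ n % 5 = 3 ∨ n % 5 = 4 := by omega
  rcases this with h | h | h | h | h <;> simp [h]

lemma pr_dec {F0 F1 F2 F3 F4 : PS} (h0 : cls 0 F0) (h1 : cls 1 F1) (h2 : cls 2 F2) (h3 : cls 3 F3)
    (h4 : cls 4 F4) :
    pr 0 (F0 + F1 + F2 + F3 + F4) = F0 ∧ pr 1 (F0 + F1 + F2 + F3 + F4) = F1 ∧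
    pr 2 (F0 + F1 + F2 + F3 + F4) = F2 ∧ pr 3 (F0 + F1 + F2 + F3 + F4) = F3 ∧
    pr 4 (F0 + F1 + F2 + F3 + F4) = F4 := by
  simp only [pr_add]
  refine ⟨?_, ?_, ?_, ?_, ?_⟩
  · rw [pr_of_cls h0, pr_of_cls_ne h1, pr_of_cls_ne h2, pr_of_cls_ne h3, pr_of_cls_ne h4] <;>
      first | simp | norm_num
  · rw [pr_of_cls_ne h0, pr_of_cls h1, pr_of_cls_ne h2, pr_of_cls_ne h3, pr_of_cls_ne h4] <;>
      first | simp | norm_num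
  · rw [pr_of_cls_ne h0, pr_of_cls_ne h1, pr_of_cls h2, pr_of_cls_ne h3, pr_of_cls_ne h4] <;>
      first | simp | norm_num
  · rw [pr_of_cls_ne h0, pr_of_cls_ne h1, pr_of_cls_ne h2, pr_of_cls h3, pr_of_cls_ne h4] <;>
      first | simp | norm_num
  · rw [pr_of_cls_ne h0, pr_of_cls_ne h1, pr_of_cls_ne h2, pr_of_cls_ne h3, pr_of_cls h4] <;>
      first | simp | norm_num

lemma sq_add5 (a b c d e : PS) : (a + b + c + d + e) ^ 2 = a ^ 2 + b ^ 2 + c ^ 2 + d ^ 2 + e ^ 2 := by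
  linear_combination (a*b+a*c+a*d+a*e+b*c+b*d+b*e+c*d+c*e+d*e) * two_ps

lemma clsA : cls 0 A := cls_pr 0 u
lemma clsB : cls 1 B := cls_pr 1 u
lemma clsC : cls 2 C := cls_pr 2 u

lemma clsABC (a b c k : ℕ) (h : (b + 2 * c) % 5 = k % 5) : cls k (A ^ a * B ^ b * C ^ c) :=
  cls_mul (cls_mul (cls_pow clsA a) (cls_pow clsB b) (k := b) (by omega)) (cls_pow clsC c) (by omega)

lemma AC_eq : A * C = B ^ 2 := by
  have h1 : u ^ 3 = (A ^ 3 + B * C ^ 2) + (A ^ 2 * B + C ^ 3) + (A * B ^ 2 + A ^ 2 * C) + B ^ 3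
      + (A * C ^ 2 + B ^ 2 * C) := by
    rw [u_eq]
    linear_combination (A^2*B+A^2*C+A*B^2+A*C^2+B^2*C+B*C^2+3*A*B*C) * two_ps
  have c0 : cls 0 (A ^ 3 + B * C ^ 2) := by
    have := cls_add (clsABC 3 0 0 0 rfl) (clsABC 0 1 2 0 rfl); simpa using this
  have c1 : cls 1 (A ^ 2 * B + C ^ 3) := by
    have := cls_add (clsABC 2 1 0 1 rfl) (clsABC 0 0 3 1 rfl); simpa using this
  have c2 : cls 2 (A * B ^ 2 + A ^ 2 * C) := by
    have := cls_add (clsABC 1 2 0 2 rfl) (clsABC 2 0 1 2 rfl); simpa using this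
  have c3 : cls 3 (B ^ 3) := by
    have := (clsABC 0 3 0 3 rfl); simpa using this
  have c4 : cls 4 (A * C ^ 2 + B ^ 2 * C) := by
    have := cls_add (clsABC 1 0 2 4 rfl) (clsABC 0 2 1 4 rfl); simpa using this
  have h2 := (pr_dec c0 c1 c2 c3 c4).2.2.1
  rw [← h1, u3_cls, pr_add, pr_add, pr_of_cls_ne (cls_pr 0 _) (by norm_num),
    pr_of_cls_ne (cls_pr 1 _) (by norm_num), pr_of_cls_ne (cls_pr 3 _) (by norm_num)] at h2
  apply mul_left_cancel₀ (ne_zero_of A0)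
  linear_combination -h2 - A * B ^ 2 * two_ps

noncomputable def Nm : PS := A ^ 5 + B ^ 5 + C ^ 5

lemma v6 : v ^ 6 = w * Nm := norm_eq AC_eq

noncomputable def h0 : PS := A ^ 4 + B ^ 3 * C
noncomputable def h1 : PS := A ^ 3 * B
noncomputable def h2 : PS := B * C ^ 3
noncomputable def h3 : PS := A * B ^ 3 + C ^ 4
noncomputable def h4 : PS := B ^ 4
noncomputable def hh : PS := h0 + h1 + h2 + h3 + h4

lemma ch0 : cls 0 h0 := by
  have := cls_add (clsABC 4 0 0 0 rfl) (clsABC 0 3 1 0 rfl); simpa [h0] using this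
lemma ch1 : cls 1 h1 := by have := (clsABC 3 1 0 1 rfl); simpa [h1] using this
lemma ch2 : cls 2 h2 := by have := (clsABC 0 1 3 2 rfl); simpa [h2] using this
lemma ch3 : cls 3 h3 := by
  have := cls_add (clsABC 1 3 0 3 rfl) (clsABC 0 0 4 3 rfl); simpa [h3] using this
lemma ch4 : cls 4 h4 := by have := (clsABC 0 4 0 4 rfl); simpa [h4] using this

lemma u_hh : u * hh = Nm := by
  rw [u_eq, hh, h0, h1, h2, h3, h4, Nm]
  linear_combination (1 * C ^ 3 + 1 * B ^ 1 * C ^ 2 + 2 * B ^ 3 + 1 * A ^ 2 * B ^ 1 + 1 * A ^ 3) * AC_eq + (1 * B ^ 1 * C ^ 4 + 1 * B ^ 2 * C ^ 3 + 1 * B ^ 3 * C ^ 2 + 1 * B ^ 4 * C ^ 1 + 1 * B ^ 5 + 1 * A ^ 1 * B ^ 4 + 1 * A ^ 2 * B ^ 3 + 1 * A ^ 3 * B ^ 2 + 1 * A ^ 4 * B ^ 1) * two_ps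

lemma u5 : u ^ 5 + B * hh = A ^ 5 + C ^ 5 := by
  rw [u_eq, hh, h0, h1, h2, h3, h4]
  linear_combination (5 * C ^ 3 + 20 * B ^ 1 * C ^ 2 + 40 * B ^ 2 * C ^ 1 + 50 * B ^ 3 + 10 * A ^ 1 * C ^ 2 + 30 * A ^ 1 * B ^ 1 * C ^ 1 + 40 * A ^ 1 * B ^ 2 + 10 * A ^ 2 * C ^ 1 + 20 * A ^ 2 * B ^ 1 + 5 * A ^ 3) * AC_eq + (3 * B ^ 1 * C ^ 4 + 8 * B ^ 2 * C ^ 3 + 15 * B ^ 3 * C ^ 2 + 23 * B ^ 4 * C ^ 1 + 26 * B ^ 5 + 23 * A ^ 1 * B ^ 4 + 15 * A ^ 2 * B ^ 3 + 8 * A ^ 3 * B ^ 2 + 3 * A ^ 4 * B ^ 1) * two_ps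

lemma h_cube : h0 * h1 ^ 2 + h1 * h3 ^ 2 + h2 * h0 ^ 2 + h3 * h2 ^ 2 + h4 ^ 3 =
    B ^ 12 + B ^ 7 * Nm + B ^ 2 * Nm ^ 2 := by
  rw [h0, h1, h2, h3, h4, Nm]
  linear_combination (2 * B ^ 5 * C ^ 5 + 2 * B ^ 10 + 1 * A ^ 1 * B ^ 3 * C ^ 6 + 2 * A ^ 1 * B ^ 8 * C ^ 1 + 1 * A ^ 2 * B ^ 1 * C ^ 7 + 2 * A ^ 2 * B ^ 6 * C ^ 2 + 2 * A ^ 3 * B ^ 4 * C ^ 3 + (-2) * A ^ 4 * B ^ 2 * C ^ 4 + 2 * A ^ 5 * B ^ 5 + 1 * A ^ 6 * B ^ 3 * C ^ 1 + 1 * A ^ 7 * B ^ 1 * C ^ 2) * AC_eq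

noncomputable def TT : PS := u ^ 6 + X * v ^ 6 + u * v

lemma sgX : sg X = X ^ 5 := PowerSeries.expand_X 5 (by norm_num)

lemma TT_eq : TT * w = u * sg TT := by
  have e1 : sg TT = v ^ 6 + X ^ 5 * w ^ 6 + v * w := by
    simp only [TT, map_add, map_mul, map_pow, sgX]; rfl
  rw [e1, TT]
  have hB := B_eq
  have h5 : B ^ 5 = X ^ 5 * w ^ 5 := by rw [hB]; ring
  have e2 := u5
  have e3 := u_hh
  have e4 := v6
  have hN : Nm = A ^ 5 + B ^ 5 + C ^ 5 := rfl
  have e5 : X * v ^ 6 = u * (B * hh) := by rw [e4, hB, ← e3]; ring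
  rw [e5, e4]
  linear_combination u * w * e2 - u * w * hN + u * w * h5 - u * w * B ^ 5 * two_ps

lemma TT_zero : TT = 0 := by
  by_contra hne
  have h := congrArg PowerSeries.order TT_eq
  rw [PowerSeries.order_mul, PowerSeries.order_mul] at h
  have ou : PowerSeries.order u = 0 := by
    rw [PowerSeries.order_zero_of_unit]
    rw [PowerSeries.isUnit_iff_constantCoeff, ← coeff_zero_eq_constantCoeff_apply, u0]
    exact isUnit_one
  have ow : PowerSeries.order w = 0 := by
    rw [PowerSeries.order_zero_of_unit]
    rw [PowerSeries.isUnit_iff_constantCoeff, ← coeff_zero_eq_constantCoeff_apply, w0]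
    exact isUnit_one
  have os : PowerSeries.order (sg TT) = 5 • PowerSeries.order TT := by
    rw [sg, PowerSeries.order_expand]
  rw [ou, ow, os, add_zero, zero_add] at h
  have hfin : PowerSeries.order TT ≠ ⊤ := by rwa [Ne, PowerSeries.order_eq_top]
  obtain ⟨d, hd⟩ := ENat.ne_top_iff_exists.1 hfin
  rw [← hd] at h
  have h' : d = 5 * d := by
    rw [nsmul_eq_mul] at h
    exact_mod_cast h
  have hd0 : d = 0 := by omega
  have := PowerSeries.coeff_order (φ := TT) hne
  rw [← hd, hd0] at this
  apply this
  have h0 : constantCoeff u = 1 := by rw [← coeff_zero_eq_constantCoeff_apply, u0]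
  have h1 : constantCoeff v = 1 := by rw [← coeff_zero_eq_constantCoeff_apply, v0]
  simp [TT, h0, h1]
  decide

lemma Xv6 : X * v ^ 6 = u * v + u ^ 6 := by
  have := TT_zero
  rw [TT] at this
  linear_combination this - (u * v + u ^ 6) * two_ps

lemma exists_ui : ∃ ui : PS, u * ui = 1 := by
  have : IsUnit u := by
    rw [PowerSeries.isUnit_iff_constantCoeff, ← coeff_zero_eq_constantCoeff_apply, u0]
    exact isUnit_one
  exact this.exists_right_inv

noncomputable def ui : PS := exists_ui.choose
lemma u_ui : u * ui = 1 := exists_ui.choose_spec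
noncomputable def vi : PS := sg ui
lemma v_vi : v * vi = 1 := by rw [v, vi, ← map_mul, u_ui, map_one]

lemma ui_eq : ui = (w * vi ^ 6) * hh := by
  have e1 : (v * vi) ^ 6 = 1 := by rw [v_vi, one_pow]
  have e2 := v6
  have e3 := u_hh
  have hu := u_ui
  rw [mul_pow, e2, ← e3] at e1
  linear_combination (-(ui * e1)) + (w * hh * vi ^ 6) * hu

lemma cls_wvi : cls 0 (w * vi ^ 6) := cls_mul (cls_sg _) (cls_pow (cls_sg _) 6) (by norm_num)

lemma pr4_ui : pr 4 ui = X ^ 4 * (w ^ 5 * vi ^ 6) := by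
  rw [ui_eq, pr_mul_left cls_wvi, hh, (pr_dec ch0 ch1 ch2 ch3 ch4).2.2.2.2, h4, B_eq]
  ring

lemma pr_hh : pr 0 hh = h0 ∧ pr 1 hh = h1 ∧ pr 2 hh = h2 ∧ pr 3 hh = h3 ∧ pr 4 hh = h4 :=
  pr_dec ch0 ch1 ch2 ch3 ch4

lemma pr2_hh3 : pr 2 (hh ^ 3) = B ^ 12 + B ^ 7 * Nm + B ^ 2 * Nm ^ 2 := by
  obtain ⟨e0, e1, e2, e3, e4⟩ := pr_hh
  have hs : hh ^ 3 = hh * h0 ^ 2 + hh * h1 ^ 2 + hh * h2 ^ 2 + hh * h3 ^ 2 + hh * h4 ^ 2 := by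
    have : hh ^ 2 = _ := sq_add5 h0 h1 h2 h3 h4
    linear_combination hh * this
  rw [hs]
  simp only [pr_add]
  rw [pr_mul_cls (k := 2) (cls_pow ch0 2) hh (by norm_num),
    pr_mul_cls (k := 0) (cls_pow ch1 2) hh (by norm_num),
    pr_mul_cls (k := 3) (cls_pow ch2 2) hh (by norm_num),
    pr_mul_cls (k := 1) (cls_pow ch3 2) hh (by norm_num),
    pr_mul_cls (k := 4) (cls_pow ch4 2) hh (by norm_num), e0, e1, e2, e3, e4, ← h_cube]
  ring

lemma pr4_sq (F : PS) : pr 4 (F ^ 2) = (pr 2 F) ^ 2 := by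
  have h := sq_add5 (pr 0 F) (pr 1 F) (pr 2 F) (pr 3 F) (pr 4 F)
  rw [← sum_pr] at h
  rw [h]
  simp only [pr_add]
  rw [pr_of_cls_ne (cls_pow (cls_pr 0 F) 2) (by norm_num),
    pr_of_cls_ne (cls_pow (cls_pr 1 F) 2) (by norm_num),
    pr_of_cls (cls_congr (cls_pow (cls_pr 2 F) 2) (by norm_num)),
    pr_of_cls_ne (cls_pow (cls_pr 3 F) 2) (by norm_num),
    pr_of_cls_ne (cls_pow (cls_pr 4 F) 2) (by norm_num)]
  ring

lemma pr4_ui6 : pr 4 (v ^ 13 * ui ^ 6) =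
    X ^ 4 * sg (v ^ 6 * u + X ^ 2 * v ^ 18 * ui ^ 11 + X ^ 4 * v ^ 30 * ui ^ 23) := by
  have e1 : v ^ 13 * ui ^ 6 = (v ^ 13 * (w * vi ^ 6) ^ 6) * (hh ^ 3) ^ 2 := by
    conv_lhs => rw [ui_eq]
    ring
  have c1 : cls 0 (v ^ 13 * (w * vi ^ 6) ^ 6) :=
    cls_mul (cls_pow (cls_sg _) 13) (cls_pow cls_wvi 6) (by norm_num)
  have e2 : sg (v ^ 6 * u + X ^ 2 * v ^ 18 * ui ^ 11 + X ^ 4 * v ^ 30 * ui ^ 23) =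
      w ^ 6 * v + X ^ 10 * w ^ 18 * vi ^ 11 + X ^ 20 * w ^ 30 * vi ^ 23 := by
    simp only [map_add, map_mul, map_pow, sgX, ← pow_mul]; rfl
  rw [e1, pr_mul_left c1, pr4_sq, pr2_hh3, e2, B_eq]
  apply mul_left_cancel₀ (pow_ne_zero 23 (ne_zero_of v0))
  have q1 : v ^ 36 * vi ^ 36 = 1 := by rw [← mul_pow, v_vi, one_pow]
  have q2 : v ^ 23 * vi ^ 23 = 1 := by rw [← mul_pow, v_vi, one_pow]
  have q3 : v ^ 11 * vi ^ 11 = 1 := by rw [← mul_pow, v_vi, one_pow]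
  have hv := v6
  have hv2 : v ^ 12 = w ^ 2 * Nm ^ 2 := by linear_combination (v ^ 6 + w * Nm) * hv
  have hv4 : v ^ 24 = w ^ 4 * Nm ^ 4 := by linear_combination (v ^ 12 + w ^ 2 * Nm ^ 2) * hv2
  have sq : ((X * w) ^ 12 + (X * w) ^ 7 * Nm + (X * w) ^ 2 * Nm ^ 2) ^ 2 =
      X ^ 24 * w ^ 24 + X ^ 14 * w ^ 12 * v ^ 12 + X ^ 4 * v ^ 24 := by
    rw [hv2, hv4]
    linear_combination ((X * w) ^ 19 * Nm + (X * w) ^ 14 * Nm ^ 2 + (X * w) ^ 9 * Nm ^ 3) * two_ps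
  rw [sq]
  linear_combination (w ^ 6 * (X ^ 24 * w ^ 24 + X ^ 14 * w ^ 12 * v ^ 12 + X ^ 4 * v ^ 24)) * q1
    - X ^ 24 * w ^ 30 * q2 - X ^ 14 * w ^ 18 * v ^ 12 * q3

lemma ui17 : ui ^ 17 + X ^ 4 * v ^ 18 * ui ^ 11 + X ^ 6 * v ^ 30 * ui ^ 23 = u ^ 3 * vi ^ 4 := by
  have hu := ne_zero_of u0
  have hv := ne_zero_of v0
  apply mul_left_cancel₀ (mul_ne_zero (pow_ne_zero 23 hu) (pow_ne_zero 6 hv))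
  have q1 : u ^ 17 * ui ^ 17 = 1 := by rw [← mul_pow, u_ui, one_pow]
  have q2 : u ^ 23 * ui ^ 23 = 1 := by rw [← mul_pow, u_ui, one_pow]
  have q3 : u ^ 11 * ui ^ 11 = 1 := by rw [← mul_pow, u_ui, one_pow]
  have q4 : v ^ 4 * vi ^ 4 = 1 := by rw [← mul_pow, v_vi, one_pow]
  have e1 : X ^ 2 * v ^ 12 = u ^ 2 * v ^ 2 + u ^ 12 := by
    linear_combination (X * v ^ 6 + u * v + u ^ 6) * Xv6 + u ^ 7 * v * two_ps
  have e2 : X ^ 4 * v ^ 24 = u ^ 4 * v ^ 4 + u ^ 24 := by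
    linear_combination (X ^ 2 * v ^ 12 + u ^ 2 * v ^ 2 + u ^ 12) * e1 + u ^ 14 * v ^ 2 * two_ps
  have e3 : X ^ 6 * v ^ 36 = (u ^ 2 * v ^ 2 + u ^ 12) * (u ^ 4 * v ^ 4 + u ^ 24) := by
    rw [← e1, ← e2]; ring
  linear_combination (u ^ 6 * v ^ 6) * q1 + X ^ 4 * v ^ 24 * u ^ 12 * q3 + X ^ 6 * v ^ 36 * q2
    + u ^ 12 * e2 + e3 - u ^ 26 * v ^ 2 * q4 + (u ^ 6 * v ^ 6 + u ^ 16 * v ^ 4 + u ^ 36) * two_ps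

theorem main_coeff (m : ℕ) (hm : m % 5 = 0 ∨ m % 5 = 2) :
    coeff (25 * m + 24) (w ^ 8 * ui) = coeff m (v ^ 6 * u) + coeff (m + 2) (ui ^ 17) := by
  have s1 : coeff (25 * m + 24) (w ^ 8 * ui) = coeff (5 * m + 4) (v ^ 13 * ui ^ 6) := by
    have e : pr 4 (w ^ 8 * ui) = X ^ 4 * sg (v ^ 13 * ui ^ 6) := by
      have c : cls 0 (w ^ 8) := cls_congr (cls_pow (cls_sg v) 8) (by norm_num)
      rw [pr_mul_left c, pr4_ui]
      simp only [map_mul, map_pow]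
      change _ = X ^ 4 * (w ^ 13 * vi ^ 6)
      ring
    have h1 := congrArg (coeff (25 * m + 24)) e
    rw [coeff_pr, if_pos (by omega), show 25 * m + 24 = 5 * (5 * m + 4) + 4 by ring,
      coeff_X_pow_mul, coeff_sg] at h1
    rw [show 25 * m + 24 = 5 * (5 * m + 4) + 4 by ring]
    exact h1
  have s2 : coeff (5 * m + 4) (v ^ 13 * ui ^ 6) =
      coeff m (v ^ 6 * u + X ^ 2 * v ^ 18 * ui ^ 11 + X ^ 4 * v ^ 30 * ui ^ 23) := by
    have h1 := congrArg (coeff (5 * m + 4)) pr4_ui6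
    rw [coeff_pr, if_pos (by omega), coeff_X_pow_mul, coeff_sg] at h1
    exact h1
  have s3 : coeff m (X ^ 2 * v ^ 18 * ui ^ 11 + X ^ 4 * v ^ 30 * ui ^ 23) =
      coeff (m + 2) (ui ^ 17) := by
    have e : X ^ 2 * (X ^ 2 * v ^ 18 * ui ^ 11 + X ^ 4 * v ^ 30 * ui ^ 23) =
        ui ^ 17 + vi ^ 4 * u ^ 3 := by
      linear_combination ui17 - ui ^ 17 * two_ps
    have h1 := congrArg (coeff (m + 2)) e
    rw [coeff_X_pow_mul] at h1
    rw [h1, map_add]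
    have c : cls 0 (vi ^ 4) := cls_congr (cls_pow (cls_sg ui) 4) (by norm_num)
    have h2 : coeff (m + 2) (vi ^ 4 * u ^ 3) = 0 := by
      rw [u3_cls, mul_add, mul_add, map_add, map_add,
        cls_mul c (cls_pr 0 _) (k := 0) (by norm_num) _ (by omega),
        cls_mul c (cls_pr 1 _) (k := 1) (by norm_num) _ (by omega),
        cls_mul c (cls_pr 3 _) (k := 3) (by norm_num) _ (by omega)]
      simp
    rw [h2, add_zero]
  rw [s1, s2, add_assoc, map_add, s3]

end Par

namespace Par
open PowerSeries
open scoped PowerSeries.WithPiTopology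
open Filter Topology

section
local instance instTopZ : TopologicalSpace (ZMod 2) := ⊥
local instance instDiscZ : DiscreteTopology (ZMod 2) := ⟨rfl⟩

lemma restr_mul_u (p : ℕ → Prop) [DecidablePred p] (F : PS)
    (h : HasProd (fun i : ℕ => if p (i + 1) then 1 else (1 - X ^ (i + 1) : PS)) F) :
    (PowerSeries.mk fun n ↦ ((Nat.Partition.restricted n p).card : ZMod 2)) * u = F := by
  have h1 := (Nat.Partition.hasProd_powerSeriesMk_card_restricted (ZMod 2) p).mul hasProd_u
  refine h1.unique ?_
  have e : (fun i : ℕ => if p (i + 1) then 1 else (1 - X ^ (i + 1) : PS)) =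
      fun b : ℕ => (if p (b + 1) then ∑' (j : ℕ), X ^ ((b + 1) * j) else 1) *
        (1 - X ^ (b + 1) : PS) := by
    funext i
    split_ifs
    · simp_rw [pow_mul]
      rw [WithPiTopology.tsum_pow_mul_one_sub_of_constantCoeff_eq_zero (by simp)]
    · simp
  rw [e] at h
  exact h

lemma w8_eq : w ^ 8 = expand (1 * 200) (by norm_num) (pentagonalSeries (ZMod 2)) := by
  have hw : w = expand 25 (by norm_num) (pentagonalSeries (ZMod 2)) := by
    have := expand_mul 5 (by norm_num) 5 (by norm_num) (pentagonalSeries (ZMod 2))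
    exact this.symm
  have h1 := (hasProd_expand (R := ZMod 2) 25 (by norm_num)).pow 8
  rw [← hw] at h1
  refine h1.unique ?_
  convert hasProd_expand (R := ZMod 2) (1 * 200) (by norm_num) using 2 with i
  rw [show 8 = 2 * (2 * 2) by rfl, pow_mul, sq_one_sub, pow_mul, sq_one_sub, sq_one_sub]
  ring

lemma u2_eq : u ^ 2 = expand 2 (by norm_num) u := by
  have h1 := hasProd_u.pow 2
  rw [u] at h1 ⊢
  refine h1.unique ?_
  convert hasProd_expand (R := ZMod 2) 2 (by norm_num) using 2 with i
  rw [sq_one_sub]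
  ring

lemma card_reg (n : ℕ) : numRegularPartitions 200 n =
    (Nat.Partition.restricted n (fun j => ¬ 200 ∣ j)).card := by
  rw [numRegularPartitions, Nat.card_eq_fintype_card, Fintype.card_subtype]
  rfl

lemma reg_series (n : ℕ) : (numRegularPartitions 200 n : ZMod 2) = coeff n (w ^ 8 * ui) := by
  have h := restr_mul_u (fun j => ¬ 200 ∣ j) (w ^ 8) (by
    rw [w8_eq]
    convert hasProd_expand' (R := ZMod 2) 200 (by norm_num) 1 (by norm_num) using 2 with i
    split_ifs <;> simp)
  have h2 : (PowerSeries.mk fun n ↦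
      ((Nat.Partition.restricted n (fun j => ¬ 200 ∣ j)).card : ZMod 2)) = w ^ 8 * ui := by
    rw [← h, mul_assoc, u_ui, mul_one]
  rw [← h2, coeff_mk, card_reg]

lemma part_series :
    (PowerSeries.mk fun n ↦ (Fintype.card n.Partition : ZMod 2)) = ui := by
  have h := restr_mul_u (fun _ => True) 1 (by
    simp only [if_true]
    exact hasProd_one)
  have h2 : (PowerSeries.mk fun n ↦
      ((Nat.Partition.restricted n (fun _ => True)).card : ZMod 2)) = ui := by
    rw [← mul_one (PowerSeries.mk _), ← u_ui, ← mul_assoc, h, one_mul]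
  rw [← h2]
  ext n
  rw [coeff_mk, coeff_mk, Nat.Partition.restricted]
  simp
end

def multiEquiv (t n : ℕ) :
    {f : Fin t → Σ k : ℕ, k.Partition // (∑ i, (f i).1) = n} ≃
      Σ l : {l : Fin t → ℕ // l ∈ Finset.piAntidiag Finset.univ n}, ∀ i, (l.1 i).Partition where
  toFun f := ⟨⟨fun i => (f.1 i).1, by simpa using f.2⟩, fun i => (f.1 i).2⟩
  invFun g := ⟨fun i => ⟨g.1.1 i, g.2 i⟩, (Finset.mem_piAntidiag.1 g.1.2).1⟩
  left_inv _ := rfl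
  right_inv _ := rfl

lemma multi_series (t n : ℕ) : (numMultipartitions t n : ZMod 2) = coeff n (ui ^ t) := by
  rw [numMultipartitions, Nat.card_congr (multiEquiv t n), Nat.card_eq_fintype_card,
    Fintype.card_sigma]
  have h : ui ^ t = ∏ _i : Fin t, ui := by simp
  rw [h, PowerSeries.coeff_prod]
  simp only [Fintype.card_pi]
  rw [← part_series]
  simp only [coeff_mk]
  rw [Finset.sum_coe_sort (Finset.piAntidiag Finset.univ n)
    (fun l => ∏ i, Fintype.card (l i).Partition)]
  push_cast
  refine Finset.sum_bij' (fun l _ => Finsupp.equivFunOnFinite.symm l) (fun l _ => ⇑l) ?_ ?_ ?_ ?_ ?_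
  · intro l hl; simpa [Finset.mem_finsuppAntidiag] using hl
  · intro l hl; simpa [Finset.mem_finsuppAntidiag] using hl
  · intro l hl; rfl
  · intro l hl; ext; rfl
  · intro l hl; rfl

lemma mem_of_coeff {m : ℕ} (h : coeff m (v ^ 6 * u) ≠ 0) :
    ∃ a b : ℤ, (24 * m + 31 : ℤ) = a ^ 2 + 30 * b ^ 2 := by
  have e : v ^ 6 = (sg psi) ^ 2 := by rw [psi_eq, map_pow, ← pow_mul]; rfl
  have e2 : v ^ 6 = expand 10 (by norm_num) psi := by
    have h2 : (psi : PS) ^ 2 = expand 2 (by norm_num) psi := by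
      rw [psi_eq, map_pow, ← u2_eq]; ring
    rw [e, ← map_pow, h2]
    exact (expand_mul 5 (by norm_num) 2 (by norm_num) psi).symm
  rw [coeff_mul] at h
  obtain ⟨⟨i, j⟩, hij, hne⟩ := Finset.exists_ne_zero_of_sum_ne_zero h
  rw [Finset.HasAntidiagonal.mem_antidiagonal] at hij
  have h1 : coeff i (v ^ 6) ≠ 0 := left_ne_zero_of_mul hne
  have h2 : coeff j u ≠ 0 := right_ne_zero_of_mul hne
  have h3 : j ∈ Set.range pentagonal := by
    by_contra hh; exact h2 (coeff_u_eq_zero.2 hh)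
  obtain ⟨k, hk⟩ := h3
  rw [e2] at h1
  have h4 : 10 ∣ i := by
    by_contra hh
    exact h1 (by rw [coeff_expand_of_not_dvd _ _ _ hh])
  obtain ⟨d, rfl⟩ := h4
  rw [coeff_expand_mul, psi, coeff_mk] at h1
  have h5 : ∃ s : ℕ, s * (s + 1) / 2 = d := by
    by_contra hh
    exact h1 (if_neg hh)
  obtain ⟨s, hs⟩ := h5
  have h6 := Nat.div_mul_cancel (Nat.even_mul_succ_self s).two_dvd
  have h7 := two_mul_natCast_pentagonal k
  rw [hk] at h7
  rw [hs] at h6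
  refine ⟨6 * k - 1, 2 * s + 1, ?_⟩
  simp only at hij
  zify at h6 hij
  rw [← hij]
  push_cast
  nlinarith

end Par

namespace Par
open ArithmeticFunction ArithmeticFunction.vonMangoldt Filter Topology

/-- Reciprocals of the primes congruent to 7 modulo 120. -/
noncomputable def rp (n : ℕ) : ℝ := if n.Prime ∧ (n : ZMod 120) = 7 then 1 / (n : ℝ) else 0

lemma rp_nonneg (n : ℕ) : 0 ≤ rp n := by unfold rp; split_ifs <;> positivity

lemma rp_bound {x : ℝ} (hx : 1 < x) (s : Finset ℕ) (n : ℕ) :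
    residueClass (7 : ZMod 120) n / (n : ℝ) ^ x ≤
      ((if n.Prime then 0 else residueClass (7 : ZMod 120) n) / n
        + (if n ∈ s then residueClass (7 : ZMod 120) n / n else 0))
        + (x - 1)⁻¹ * ({b | b ∉ s} : Set ℕ).indicator rp n := by
  have hr := residueClass_nonneg (7 : ZMod 120) n
  have hi : 0 ≤ ({b | b ∉ s} : Set ℕ).indicator rp n := Set.indicator_nonneg (fun n _ => rp_nonneg n) n
  have hd : 0 < x - 1 := by linarith
  have hii : 0 ≤ (x - 1)⁻¹ * ({b | b ∉ s} : Set ℕ).indicator rp n := by positivity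
  rcases n.eq_zero_or_pos with rfl | hn
  · simp only [residueClass_apply_zero]; simp only [zero_div, ite_self]; linarith
  have hn1 : (0 : ℝ) < n := by exact_mod_cast hn
  have hle : residueClass (7 : ZMod 120) n / (n : ℝ) ^ x ≤ residueClass (7 : ZMod 120) n / n := by
    refine div_le_div_of_nonneg_left hr hn1 ?_
    conv_lhs => rw [← Real.rpow_one n]
    exact Real.rpow_le_rpow_of_exponent_le (by exact_mod_cast hn) hx.le
  have hq : 0 ≤ residueClass (7 : ZMod 120) n / n := by positivity
  by_cases hp : n.Prime
  · rw [if_pos hp]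
    by_cases hs : n ∈ s
    · rw [if_pos hs]; simp only [zero_div]; linarith
    · rw [if_neg hs, Set.indicator_of_mem (by exact hs)]
      by_cases h7 : (n : ZMod 120) = 7
      · rw [rp, if_pos ⟨hp, h7⟩, residueClass, Set.indicator_of_mem (by exact h7),
          vonMangoldt_apply_prime hp]
        have h1 := Real.log_le_rpow_div hn1.le hd
        have h2 : (n : ℝ) ^ x = (n : ℝ) ^ (x - 1) * n := by
          rw [← Real.rpow_add_one hn1.ne']; ring_nf
        have h3 : (0 : ℝ) < (n : ℝ) ^ (x - 1) := Real.rpow_pos_of_pos hn1 _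
        rw [h2, div_le_iff₀ (by positivity)]
        calc Real.log n ≤ (n : ℝ) ^ (x - 1) / (x - 1) := h1
          _ = _ := by field_simp; ring
      · rw [residueClass, Set.indicator_of_notMem (by exact h7)]
        have := rp_nonneg n
        rw [zero_div, zero_div]; positivity
  · rw [if_neg hp]
    have : 0 ≤ (if n ∈ s then residueClass (7 : ZMod 120) n / n else 0) := by
      split_ifs <;> positivity
    linarith

lemma not_summable_rp : ¬ Summable rp := by
  intro hs
  have ha : IsUnit (7 : ZMod 120) := (ZMod.isUnit_iff_coprime 7 120).2 (by norm_num)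
  obtain ⟨C, hC⟩ := LSeries_residueClass_lower_bound ha
  set K : ℝ := ((Nat.totient 120 : ℕ) : ℝ)⁻¹ with hK
  have hK0 : 0 < K := by
    rw [hK]; exact inv_pos.mpr (by exact_mod_cast Nat.totient_pos.2 (by norm_num))
  have ht := tendsto_tsum_compl_atTop_zero rp
  obtain ⟨s, hsm⟩ := (ht.eventually (gt_mem_nhds (half_pos hK0))).exists
  have ht2 : ∑' n, ({b | b ∉ s} : Set ℕ).indicator rp n < K / 2 := by
    rw [← tsum_subtype]; exact hsm
  have S1 := summable_residueClass_non_primes_div (7 : ZMod 120)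
  have S2 : Summable (fun n : ℕ => if n ∈ s then residueClass (7 : ZMod 120) n / n else 0) :=
    summable_of_ne_finset_zero (s := s) (fun b hb => if_neg hb)
  have S3 : Summable (({b | b ∉ s} : Set ℕ).indicator rp) := hs.indicator _
  set D : ℝ := ∑' n : ℕ, ((if n.Prime then 0 else residueClass (7 : ZMod 120) n) / n
        + (if n ∈ s then residueClass (7 : ZMod 120) n / n else 0)) with hD
  have key : ∀ x ∈ Set.Ioc (1 : ℝ) 2, K / 2 ≤ (C + D) * (x - 1) := by
    intro x hx
    have hd : 0 < x - 1 := by linarith [hx.1]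
    have h1 := hC hx
    have h2 : ∑' n, residueClass (7 : ZMod 120) n / (n : ℝ) ^ x ≤
        D + (x - 1)⁻¹ * ∑' n, ({b | b ∉ s} : Set ℕ).indicator rp n := by
      rw [hD, ← tsum_mul_left, ← (S1.add S2).tsum_add (S3.mul_left _)]
      refine Summable.tsum_le_tsum (rp_bound hx.1 s) ?_ ((S1.add S2).add (S3.mul_left _))
      exact LSeries.summable_real_of_abscissaOfAbsConv_lt <|
        (abscissaOfAbsConv_residueClass_le_one _).trans_lt <| mod_cast hx.1
    have h3 : (x - 1)⁻¹ * ∑' n, ({b | b ∉ s} : Set ℕ).indicator rp n ≤ (x - 1)⁻¹ * (K / 2) := by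
      gcongr
    have h4 : K / (x - 1) ≤ C + D + (x - 1)⁻¹ * (K / 2) := by linarith
    have h5 : (K / (x - 1)) * (x - 1) ≤ (C + D + (x - 1)⁻¹ * (K / 2)) * (x - 1) := by gcongr
    rw [div_mul_cancel₀ _ hd.ne', add_mul, mul_right_comm, inv_mul_cancel₀ hd.ne'] at h5
    linarith
  have k2 := key 2 (by norm_num)
  have hCD : 0 < C + D := by linarith
  have hy : 0 < min 1 (K / 4 / (C + D)) := by positivity
  have k3 := key (1 + min 1 (K / 4 / (C + D)))
    ⟨by linarith, by linarith [min_le_left 1 (K / 4 / (C + D))]⟩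
  have k4 : (C + D) * min 1 (K / 4 / (C + D)) ≤ (C + D) * (K / 4 / (C + D)) := by
    gcongr; exact min_le_right _ _
  rw [mul_div_cancel₀ _ hCD.ne'] at k4
  rw [add_sub_cancel_left] at k3
  linarith

lemma exists_prod_lt {ε : ℝ} (hε : 0 < ε) : ∃ Q : Finset ℕ,
    (∀ p ∈ Q, p.Prime ∧ p % 120 = 7) ∧
      ∏ p ∈ Q, (1 - 1 / (p : ℝ) + 1 / (p : ℝ) ^ 2) < ε := by
  have h := (not_summable_iff_tendsto_nat_atTop_of_nonneg rp_nonneg).1 not_summable_rp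
  obtain ⟨N, hN⟩ := (h.eventually (eventually_gt_atTop (-2 * Real.log ε))).exists
  refine ⟨(Finset.range N).filter (fun n : ℕ => n.Prime ∧ (n : ZMod 120) = 7), ?_, ?_⟩
  · intro p hp
    obtain ⟨-, h1, h2⟩ := Finset.mem_filter.1 hp
    refine ⟨h1, ?_⟩
    have : ((p : ℕ) : ZMod 120) = ((7 : ℕ) : ZMod 120) := by rw [h2]; rfl
    rw [ZMod.natCast_eq_natCast_iff] at this
    exact this
  · set Q := (Finset.range N).filter (fun n : ℕ => n.Prime ∧ (n : ZMod 120) = 7) with hQ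
    have hsum : ∑ i ∈ Finset.range N, rp i = ∑ p ∈ Q, 1 / (p : ℝ) := by
      rw [hQ, Finset.sum_filter]; rfl
    rw [hsum] at hN
    calc ∏ p ∈ Q, (1 - 1 / (p : ℝ) + 1 / (p : ℝ) ^ 2)
        ≤ ∏ p ∈ Q, Real.exp (-(1 / 2) * (1 / (p : ℝ))) := by
          apply Finset.prod_le_prod
          · intro p hp
            have h2 : (2 : ℝ) ≤ p := by
              exact_mod_cast (Finset.mem_filter.1 hp).2.1.two_le
            have : 1 / (p : ℝ) ≤ 1 := by rw [div_le_one (by linarith)]; linarith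
            have : 0 ≤ 1 / (p : ℝ) ^ 2 := by positivity
            linarith
          · intro p hp
            have h2 : (2 : ℝ) ≤ p := by
              exact_mod_cast (Finset.mem_filter.1 hp).2.1.two_le
            have h3 : 1 / (p : ℝ) ≤ 1 / 2 := by gcongr
            have h4 : 0 ≤ 1 / (p : ℝ) := by positivity
            have h5 := Real.add_one_le_exp (-(1 / 2) * (1 / (p : ℝ)))
            have h6 : 1 / (p : ℝ) ^ 2 = (1 / (p : ℝ)) ^ 2 := by rw [one_div_pow]
            rw [h6]
            nlinarith
      _ = Real.exp (-(1 / 2) * ∑ p ∈ Q, 1 / (p : ℝ)) := by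
          rw [← Real.exp_sum, Finset.mul_sum]
      _ < ε := by
          rw [← Real.lt_log_iff_exp_lt hε]
          linarith

end Par

namespace Par
open Filter Topology

lemma jac {p : ℕ} (hp : p.Prime) (h : p % 120 = 7) [Fact p.Prime] : legendreSym p (-30) = -1 := by
  rw [jacobiSym.legendreSym.to_jacobiSym, jacobiSym.mod_right (-30) (Nat.odd_iff.2 (by omega))]
  simp only [show 4 * (Int.natAbs (-30)) = 120 by rfl, h]
  norm_num

/-- The residues modulo `p ^ 2` surviving the sieve. -/
def sv (c p : ℕ) : Finset ℕ :=
  (Finset.range (p ^ 2)).filter (fun r => p ∣ 120 * r + c → p ^ 2 ∣ 120 * r + c)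

lemma survive {c p n : ℕ} (hp : p.Prime) (h : p % 120 = 7)
    (hn : ∃ a b : ℤ, (120 * n + c : ℤ) = a ^ 2 + 30 * b ^ 2) : n % p ^ 2 ∈ sv c p := by
  haveI := Fact.mk hp
  have hpp : 0 < p ^ 2 := by have := hp.pos; positivity
  have hmod : 120 * (n % p ^ 2) + c ≡ 120 * n + c [MOD p ^ 2] :=
    ((Nat.mod_modEq n (p ^ 2)).mul_left 120).add_right c
  rw [sv, Finset.mem_filter, Finset.mem_range]
  refine ⟨Nat.mod_lt _ hpp, fun hd => ?_⟩
  have hd2 : p ∣ 120 * n + c :=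
    ((hmod.of_dvd (Dvd.intro_left (p ^ 1) (by ring))).dvd_iff dvd_rfl).1 hd
  rw [hmod.dvd_iff dvd_rfl]
  obtain ⟨a, b, hab⟩ := hn
  have h1 : (p : ℤ) ∣ a ^ 2 - (-30) * b ^ 2 := by
    have : (p : ℤ) ∣ 120 * n + c := by exact_mod_cast hd2
    rw [hab] at this
    convert this using 1; ring
  obtain ⟨⟨a', rfl⟩, ⟨b', rfl⟩⟩ := legendreSym.prime_dvd_of_eq_neg_one (jac hp h) h1
  have : ((p ^ 2 : ℕ) : ℤ) ∣ ((120 * n + c : ℕ) : ℤ) := by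
    push_cast
    rw [hab]
    exact ⟨a' ^ 2 + 30 * b' ^ 2, by ring⟩
  exact_mod_cast this

lemma card_sv (c : ℕ) {p : ℕ} (hp : p.Prime) (h : p % 120 = 7) :
    (sv c p).card + (p - 1) ≤ p ^ 2 := by
  have hpp : 0 < p ^ 2 := by have := hp.pos; positivity
  haveI : NeZero (p ^ 2) := ⟨hpp.ne'⟩
  have hu : IsUnit ((120 : ℕ) : ZMod (p ^ 2)) := by
    rw [ZMod.isUnit_iff_coprime]
    apply Nat.Coprime.pow_right
    rw [Nat.coprime_comm, hp.coprime_iff_not_dvd]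
    intro hd
    have h7 : 7 ≤ p := by have := Nat.mod_le p 120; omega
    have : Nat.gcd 120 p = 1 := by
      rw [Nat.gcd_rec, h]; norm_num
    have h2 := Nat.dvd_gcd hd dvd_rfl
    rw [this] at h2
    exact hp.one_lt.ne' (Nat.dvd_one.1 h2)
  obtain ⟨i, hi⟩ := hu.exists_right_inv
  set g : ℕ → ℕ := fun j => ((((p * j : ℕ) : ZMod (p ^ 2)) - (c : ZMod (p ^ 2))) * i).val with hg
  have hgj : ∀ j, 120 * g j + c ≡ p * j [MOD p ^ 2] := by
    intro j
    rw [← ZMod.natCast_eq_natCast_iff, Nat.cast_add, Nat.cast_mul, hg]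
    simp only [ZMod.natCast_val, ZMod.cast_id', id_eq]
    linear_combination (((p * j : ℕ) : ZMod (p ^ 2)) - (c : ZMod (p ^ 2))) * hi
  have hinj : Set.InjOn g (Finset.Ico 1 p) := by
    intro a ha b hb hab
    have h1 : p * a ≡ p * b [MOD p ^ 2] := by
      have := hgj a
      rw [hab] at this
      exact this.symm.trans (hgj b)
    rw [pow_two] at h1
    have h2 := Nat.ModEq.mul_left_cancel' hp.ne_zero h1
    rw [Finset.mem_coe, Finset.mem_Ico] at ha hb
    exact Nat.ModEq.eq_of_lt_of_lt h2 ha.2 hb.2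
  have hdisj : Disjoint (sv c p) ((Finset.Ico 1 p).image g) := by
    rw [Finset.disjoint_right]
    intro r hr hs
    obtain ⟨j, hj, rfl⟩ := Finset.mem_image.1 hr
    have h3 := (Finset.mem_filter.1 hs).2
    rw [(hgj j).dvd_iff dvd_rfl, ((hgj j).of_dvd (Dvd.intro_left (p ^ 1) (by ring))).dvd_iff dvd_rfl] at h3
    have h4 := h3 (dvd_mul_right _ _)
    rw [pow_two] at h4
    have h5 := Nat.dvd_of_mul_dvd_mul_left hp.pos h4
    rw [Finset.mem_Ico] at hj
    exact absurd (Nat.le_of_dvd (by omega) h5) (by omega)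
  have hsub : sv c p ∪ (Finset.Ico 1 p).image g ⊆ Finset.range (p ^ 2) := by
    apply Finset.union_subset (Finset.filter_subset _ _)
    intro r hr
    obtain ⟨j, hj, rfl⟩ := Finset.mem_image.1 hr
    exact Finset.mem_range.2 (ZMod.val_lt _)
  have := Finset.card_le_card hsub
  rw [Finset.card_union_of_disjoint hdisj, Finset.card_image_of_injOn hinj, Nat.card_Ico,
    Finset.card_range] at this
  exact this

set_option maxHeartbeats 1000000 in
lemma count_le (c : ℕ) (Q : Finset ℕ) (hQ : ∀ p ∈ Q, p.Prime ∧ p % 120 = 7) (S : Finset ℕ) (x : ℕ)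
    (hS : ∀ n ∈ S, n ≤ x ∧ ∃ a b : ℤ, (120 * n + c : ℤ) = a ^ 2 + 30 * b ^ 2) :
    (S.card : ℝ) ≤ (x + (∏ p ∈ Q, p ^ 2 : ℕ)) *
      ∏ p ∈ Q, (1 - 1 / (p : ℝ) + 1 / (p : ℝ) ^ 2) := by
  set M := ∏ p ∈ Q, p ^ 2 with hM
  have hM0 : 0 < M := Finset.prod_pos (fun p hp => pow_pos (hQ p hp).1.pos 2)
  have h1 : S.card ≤ (Finset.range (x / M + 1) ×ˢ Q.pi (sv c)).card := by
    apply Finset.card_le_card_of_injOn (fun n => (n / M, fun p _ => n % p ^ 2))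
    · intro n hn
      simp only [Finset.mem_coe, Finset.mem_product, Finset.mem_range, Finset.mem_pi]
      refine ⟨Nat.lt_succ_of_le (Nat.div_le_div_right (hS n hn).1), fun p hp => ?_⟩
      exact survive (hQ p hp).1 (hQ p hp).2 (hS n hn).2
    · intro a _ b _ hab
      simp only [Prod.mk.injEq] at hab
      have h2 : ∀ p ∈ Q, a % p ^ 2 = b % p ^ 2 := fun p hp => congrFun (congrFun hab.2 p) hp
      have h3 : ((M : ℕ) : ℤ) ∣ (b : ℤ) - a := by
        rw [hM]
        push_cast
        apply Finset.prod_dvd_of_coprime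
        · intro p hp q hq hpq
          apply IsCoprime.pow
          rw [Nat.isCoprime_iff_coprime]
          exact (Nat.coprime_primes (hQ p hp).1 (hQ q hq).1).2 hpq
        · intro p hp
          have := (Nat.modEq_iff_dvd (n := p ^ 2)).1 (h2 p hp)
          exact_mod_cast this
      have h4 : a % M = b % M := Nat.modEq_iff_dvd.2 h3
      rw [← Nat.div_add_mod a M, ← Nat.div_add_mod b M, hab.1, h4]
  rw [Finset.card_product, Finset.card_range, Finset.card_pi] at h1
  have h2 : (∏ p ∈ Q, ((sv c p).card : ℝ)) ≤
      (M : ℝ) * ∏ p ∈ Q, (1 - 1 / (p : ℝ) + 1 / (p : ℝ) ^ 2) := by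
    rw [hM]
    push_cast
    rw [← Finset.prod_mul_distrib]
    apply Finset.prod_le_prod
    · intro p _; exact Nat.cast_nonneg _
    · intro p hp
      have h3 := card_sv c (hQ p hp).1 (hQ p hp).2
      have hp1 := (hQ p hp).1.one_lt.le
      have h4 : ((sv c p).card : ℝ) + ((p : ℝ) - 1) ≤ (p : ℝ) ^ 2 := by
        have : (((sv c p).card + (p - 1) : ℕ) : ℝ) ≤ ((p ^ 2 : ℕ) : ℝ) := by exact_mod_cast h3
        push_cast [Nat.cast_sub hp1] at this
        exact this
      have hp0 : (p : ℝ) ≠ 0 := by exact_mod_cast (hQ p hp).1.ne_zero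
      have h5 : (p : ℝ) ^ 2 * (1 - 1 / (p : ℝ) + 1 / (p : ℝ) ^ 2) = (p : ℝ) ^ 2 - p + 1 := by
        field_simp
      linarith
  have hK : 0 ≤ ∏ p ∈ Q, (1 - 1 / (p : ℝ) + 1 / (p : ℝ) ^ 2) := by
    have : 0 ≤ ∏ p ∈ Q, ((sv c p).card : ℝ) :=
      Finset.prod_nonneg (fun p _ => Nat.cast_nonneg _)
    have hM1 : (0 : ℝ) < M := by exact_mod_cast hM0
    exact nonneg_of_mul_nonneg_right (this.trans h2) hM1
  have hx : (((x / M : ℕ) : ℝ) + 1) * M ≤ x + M := by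
    have : x / M * M ≤ x := Nat.div_mul_le_self x M
    have : ((x / M : ℕ) : ℝ) * M ≤ x := by exact_mod_cast this
    linarith
  calc (S.card : ℝ) ≤ (((x / M : ℕ) : ℝ) + 1) * ∏ p ∈ Q, ((sv c p).card : ℝ) := by
        exact_mod_cast h1
    _ ≤ (((x / M : ℕ) : ℝ) + 1) * (M * ∏ p ∈ Q, (1 - 1 / (p : ℝ) + 1 / (p : ℝ) ^ 2)) := by
        gcongr
    _ = ((((x / M : ℕ) : ℝ) + 1) * M) * ∏ p ∈ Q, (1 - 1 / (p : ℝ) + 1 / (p : ℝ) ^ 2) := by ring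
    _ ≤ _ := by gcongr

lemma density_zero (c : ℕ) (P : ℕ → Prop) [DecidablePred P]
    (hP : ∀ n, P n → ∃ a b : ℤ, (120 * n + c : ℤ) = a ^ 2 + 30 * b ^ 2) :
    Tendsto (fun x : ℕ => (((Finset.Iic x).filter P).card : ℝ) / (x : ℝ)) atTop (𝓝 0) := by
  rw [Metric.tendsto_atTop]
  intro ε hε
  obtain ⟨Q, hQ, hlt⟩ := exists_prod_lt (half_pos hε)
  set M := ∏ p ∈ Q, p ^ 2 with hM
  refine ⟨M + 1, fun x hx => ?_⟩
  have h1 := count_le c Q hQ ((Finset.Iic x).filter P) x (by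
    intro n hn
    rw [Finset.mem_filter, Finset.mem_Iic] at hn
    exact ⟨hn.1, hP n hn.2⟩)
  have hx0 : (0 : ℝ) < x := by exact_mod_cast (by omega : 0 < x)
  have hxM : (M : ℝ) ≤ x := by exact_mod_cast (by omega : M ≤ x)
  rw [Real.dist_eq, sub_zero, abs_of_nonneg (by positivity), div_lt_iff₀ hx0]
  have h2 : ((x : ℝ) + M) * ∏ p ∈ Q, (1 - 1 / (p : ℝ) + 1 / (p : ℝ) ^ 2) < (x + M) * (ε / 2) := by
    gcongr
  nlinarith

end Par

namespace Par

lemma bad_imp {N m M t : ℕ} (hm : m % 5 = 0 ∨ m % 5 = 2) (hN : N = 25 * m + 24) (ht : t = m + 2)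
    (hM : 24 * m + 31 = M) (h : ¬ numRegularPartitions 200 N ≡ numMultipartitions 17 t [MOD 2]) :
    ∃ a b : ℤ, (M : ℤ) = a ^ 2 + 30 * b ^ 2 := by
  subst hN ht hM
  push_cast
  apply mem_of_coeff
  intro h0
  apply h
  rw [← ZMod.natCast_eq_natCast_iff, reg_series, multi_series, main_coeff m hm, h0, zero_add]

end Par

open scoped Classical in
theorem stmt_14 :
    Filter.Tendsto (fun x : ℕ =>
      (((Finset.Iic x).filter (fun n =>
        ¬ numRegularPartitions 200 (125 * n + 24) ≡
            numMultipartitions 17 (5 * n + 2) [MOD 2])).card : ℝ) / (x : ℝ))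
      Filter.atTop (nhds 0) ∧
    Filter.Tendsto (fun x : ℕ =>
      (((Finset.Iic x).filter (fun n =>
        ¬ numRegularPartitions 200 (125 * n + 74) ≡
            numMultipartitions 17 (5 * n + 4) [MOD 2])).card : ℝ) / (x : ℝ))
      Filter.atTop (nhds 0) := by
  constructor
  · refine Par.density_zero 31 (fun n => ¬ numRegularPartitions 200 (125 * n + 24) ≡
            numMultipartitions 17 (5 * n + 2) [MOD 2]) ?_
    intro n hn
    have := Par.bad_imp (m := 5 * n) (M := 120 * n + 31) (by omega) (by ring) rfl (by ring) hn
    push_cast at this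
    exact this
  · refine Par.density_zero 79 (fun n => ¬ numRegularPartitions 200 (125 * n + 74) ≡
            numMultipartitions 17 (5 * n + 4) [MOD 2]) ?_
    intro n hn
    have := Par.bad_imp (m := 5 * n + 2) (M := 120 * n + 79) (by omega) (by ring) rfl (by ring) hn
    push_cast at this
    exact this
end

section
/- For every natural number n, the number of 8-regular partitions b_8(n) is odd if and only if 24n + 7 = p^(4a+1) · c² for some prime p, natural number a, and positive integer c with p not dividing c. -/
/-- Parity of a finite set with an involution is the parity of the fixed points. -/
theorem card_invol {α : Type*} [DecidableEq α] (s : Finset α) (f : α → α)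
    (hf : ∀ x ∈ s, f x ∈ s) (hff : ∀ x ∈ s, f (f x) = x) :
    (s.card : ZMod 2) = ((s.filter (fun x => f x = x)).card : ZMod 2) := by
  have h := Finset.card_filter_add_card_filter_not (s := s) (fun x => f x = x)
  have h2 : ((s.filter (fun x => ¬ f x = x)).card : ZMod 2) = 0 := by
    rw [Finset.card_eq_sum_ones, Nat.cast_sum]
    refine Finset.sum_involution (fun x _ => f x) ?_ ?_ ?_ ?_
    · intro a ha; decide
    · intro a ha _; exact (Finset.mem_filter.1 ha).2
    · intro a ha
      have := Finset.mem_filter.1 ha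
      refine Finset.mem_filter.2 ⟨hf a this.1, ?_⟩
      rw [hff a this.1]; exact fun h => this.2 h.symm
    · intro a ha; exact hff a (Finset.mem_filter.1 ha).1
  rw [← h]; push_cast; rw [h2, add_zero]

/-- Flip a triple so that the first coordinate is positive. -/
def flipPos (X Y Z : ℤ) : ℤ × ℤ × ℤ := if 0 < X then (X, Y, Z) else (-X, Z, Y)

/-- The hexagonal analogue of Zagier's involution for `3x² + 4yz`. -/
def hexMap (t : ℤ × ℤ × ℤ) : ℤ × ℤ × ℤ :=
  let x := t.1
  let y := t.2.1
  let z := t.2.2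
  if 3 * x + 3 * z < y then (x + 2 * z, z, y - 3 * x - 3 * z)
  else if 6 * x + 4 * z < 3 * y then
    flipPos (-5 * x + 2 * y - 4 * z) (3 * y - 6 * x - 4 * z) (3 * x + 3 * z - y)
  else if 6 * x + 3 * z < 4 * y then
    flipPos (-7 * x + 4 * y - 4 * z) (-6 * x + 4 * y - 3 * z) (6 * x - 3 * y + 4 * z)
  else if 3 * x + z < 3 * y then
    flipPos (-5 * x + 4 * y - 2 * z) (3 * y - 3 * x - z) (6 * x + 3 * z - 4 * y)
  else flipPos (2 * y - x) y (z + 3 * x - 3 * y)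

/-- The triples. -/
noncomputable def triples (N : ℤ) : Finset (ℤ × ℤ × ℤ) :=
  ((Finset.Icc 1 N) ×ˢ (Finset.Icc 1 N) ×ˢ (Finset.Icc 1 N)).filter
    (fun t => 3 * t.1 ^ 2 + 4 * (t.2.1 * t.2.2) = N)

theorem mem_triples (N x y z : ℤ) : (x, y, z) ∈ triples N ↔
    0 < x ∧ 0 < y ∧ 0 < z ∧ 3 * x ^ 2 + 4 * (y * z) = N := by
  unfold triples
  simp only [Finset.mem_filter, Finset.mem_product, Finset.mem_Icc]
  constructor
  · rintro ⟨⟨h1, h2, h3⟩, h⟩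
    exact ⟨by omega, by omega, by omega, h⟩
  · rintro ⟨hx, hy, hz, h⟩
    refine ⟨⟨⟨by omega, by nlinarith [mul_pos hy hz]⟩, ⟨by omega, by nlinarith⟩, ⟨by omega, by nlinarith⟩⟩, h⟩

theorem arith_facts (n x y z : ℤ) (h : 3 * x ^ 2 + 4 * (y * z) = 24 * n + 7) :
    x % 2 = 1 ∧ y % 3 ≠ 0 ∧ z % 3 ≠ 0 := by
  refine ⟨?_, ?_, ?_⟩
  · by_contra hx
    have : x = 2 * (x / 2) := by omega
    rw [this] at h
    ring_nf at h; omega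
  · intro hx
    have : y = 3 * (y / 3) := by omega
    rw [this] at h
    have : 3 * x ^ 2 + 4 * (3 * (y / 3) * z) = 3 * (x ^ 2 + 4 * ((y / 3) * z)) := by ring
    omega
  · intro hx
    have : z = 3 * (z / 3) := by omega
    rw [this] at h
    have : 3 * x ^ 2 + 4 * (y * (3 * (z / 3))) = 3 * (x ^ 2 + 4 * (y * (z / 3))) := by ring
    omega

theorem hexMap_mem (n : ℤ) : ∀ t ∈ triples (24 * n + 7), hexMap t ∈ triples (24 * n + 7) := by
  rintro ⟨x, y, z⟩ ht
  rw [mem_triples] at ht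
  obtain ⟨hx, hy, hz, h⟩ := ht
  obtain ⟨a1, a2, a3⟩ := arith_facts n x y z h
  simp only [hexMap, flipPos]
  split_ifs <;> rw [mem_triples] <;>
    refine ⟨by omega, by omega, by omega, ?_⟩ <;> rw [← h] <;> ring

theorem hexMap_invol (n : ℤ) : ∀ t ∈ triples (24 * n + 7), hexMap (hexMap t) = t := by
  rintro ⟨x, y, z⟩ ht
  rw [mem_triples] at ht
  obtain ⟨hx, hy, hz, h⟩ := ht
  obtain ⟨a1, a2, a3⟩ := arith_facts n x y z h
  obtain ⟨⟨X, Y, Z⟩, e⟩ : ∃ s, hexMap (x, y, z) = s := ⟨_, rfl⟩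
  rw [e]
  simp only [hexMap, flipPos] at e
  clear h
  simp only [hexMap, flipPos]
  split_ifs at e <;> simp only [Prod.mk.injEq, true_and, and_true] at e <;> obtain ⟨e1, e2, e3⟩ := e <;>
    split_ifs <;> simp only [Prod.mk.injEq, true_and, and_true] <;> omega

theorem hexMap_fixed (n x y z : ℤ) (ht : (x, y, z) ∈ triples (24 * n + 7)) :
    hexMap (x, y, z) = (x, y, z) ↔ (x = y ∨ y = 2 * x + z) := by
  rw [mem_triples] at ht
  obtain ⟨hx, hy, hz, h⟩ := ht
  obtain ⟨a1, a2, a3⟩ := arith_facts n x y z h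
  have key : y ≠ 3 * x + 2 * z := by
    rintro rfl
    have : 3 * x ^ 2 + 4 * ((3 * x + 2 * z) * z) = 3 * (x ^ 2 + 4 * x * z) + 8 * z ^ 2 := by ring
    rw [this] at h
    have : z ^ 2 % 3 = 1 := by
      have : z % 3 = 1 ∨ z % 3 = 2 := by omega
      rcases this with h | h <;> simp [pow_two, Int.mul_emod, h]
    omega
  have key3 : z ≠ 2 * y - 3 * x := by
    rintro rfl
    have : 3 * x ^ 2 + 4 * (y * (2 * y - 3 * x)) = 3 * (x ^ 2 - 4 * x * y) + 8 * y ^ 2 := by ring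
    rw [this] at h
    have : y ^ 2 % 3 = 1 := by
      have : y % 3 = 1 ∨ y % 3 = 2 := by omega
      rcases this with h | h <;> simp [pow_two, Int.mul_emod, h]
    omega
  simp only [hexMap, flipPos]
  split_ifs <;> simp only [Prod.mk.injEq, true_and, and_true] <;> omega

/-- factorizations -/
noncomputable def facts (N : ℤ) : Finset (ℤ × ℤ) :=
  ((Finset.Icc 1 N) ×ˢ (Finset.Icc 1 N)).filter (fun t => t.1 < t.2 ∧ t.1 * t.2 = N)

theorem mem_facts (N u v : ℤ) : (u, v) ∈ facts N ↔ 0 < u ∧ u < v ∧ u * v = N := by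
  unfold facts
  simp only [Finset.mem_filter, Finset.mem_product, Finset.mem_Icc]
  constructor
  · rintro ⟨⟨h1, h2⟩, h⟩
    exact ⟨by omega, h⟩
  · rintro ⟨hx, hy, h⟩
    refine ⟨⟨⟨by omega, by nlinarith⟩, ⟨by omega, by nlinarith⟩⟩, hy, h⟩

/-- representations -/
noncomputable def reps (N : ℤ) : Finset (ℤ × ℤ) :=
  ((Finset.Icc 1 N) ×ˢ (Finset.Icc 1 N)).filter (fun t => 3 * t.1 ^ 2 + 4 * t.2 ^ 2 = N)

theorem mem_reps (N u v : ℤ) : (u, v) ∈ reps N ↔ 0 < u ∧ 0 < v ∧ 3 * u ^ 2 + 4 * v ^ 2 = N := by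
  unfold reps
  simp only [Finset.mem_filter, Finset.mem_product, Finset.mem_Icc]
  constructor
  · rintro ⟨⟨h1, h2⟩, h⟩
    exact ⟨by omega, by omega, h⟩
  · rintro ⟨hx, hy, h⟩
    refine ⟨⟨⟨by omega, by nlinarith⟩, ⟨by omega, by nlinarith⟩⟩, h⟩

theorem card_fixed_hex (n : ℤ) :
    ((triples (24 * n + 7)).filter (fun t => hexMap t = t)).card = (facts (24 * n + 7)).card := by
  refine Finset.card_bij'
    (fun t _ => if t.1 = t.2.1 then (t.1, 3 * t.1 + 4 * t.2.2)
      else (t.1 + 2 * t.2.2, 3 * t.1 + 2 * t.2.2))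
    (fun w _ => if 3 * w.1 < w.2 then (w.1, w.1, (w.2 - 3 * w.1) / 4)
      else ((w.2 - w.1) / 2, (w.2 - w.1) + (3 * w.1 - w.2) / 4, (3 * w.1 - w.2) / 4)) ?_ ?_ ?_ ?_
  · rintro ⟨x, y, z⟩ ht
    rw [Finset.mem_filter] at ht
    obtain ⟨ht, hf⟩ := ht
    rw [hexMap_fixed n x y z ht] at hf
    rw [mem_triples] at ht
    obtain ⟨hx, hy, hz, h⟩ := ht
    dsimp only
    split_ifs with hxy
    · rw [mem_facts]
      refine ⟨by omega, by omega, ?_⟩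
      rw [← h, ← hxy]; ring
    · rw [mem_facts]
      refine ⟨by omega, by omega, ?_⟩
      have : y = 2 * x + z := by omega
      rw [← h, this]; ring
  · rintro ⟨u, v⟩ hw
    rw [mem_facts] at hw
    obtain ⟨hu, huv, h⟩ := hw
    have h4 : (v - 3 * u) % 4 = 0 ∧ u % 2 = 1 ∧ u % 3 ≠ 0 := by
      have hm : u * v % 4 = 3 := by omega
      have hm3 : u * v % 3 = 1 := by omega
      refine ⟨?_, ?_, ?_⟩
      · have h1 : u % 4 = 0 ∨ u % 4 = 1 ∨ u % 4 = 2 ∨ u % 4 = 3 := by omega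
        have h2 : v % 4 = 0 ∨ v % 4 = 1 ∨ v % 4 = 2 ∨ v % 4 = 3 := by omega
        rcases h1 with h1 | h1 | h1 | h1 <;> rcases h2 with h2 | h2 | h2 | h2 <;>
          simp [Int.mul_emod, h1, h2] at hm <;> omega
      · have h1 : u % 4 = 0 ∨ u % 4 = 1 ∨ u % 4 = 2 ∨ u % 4 = 3 := by omega
        have h2 : v % 4 = 0 ∨ v % 4 = 1 ∨ v % 4 = 2 ∨ v % 4 = 3 := by omega
        rcases h1 with h1 | h1 | h1 | h1 <;> rcases h2 with h2 | h2 | h2 | h2 <;>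
          simp [Int.mul_emod, h1, h2] at hm <;> omega
      · intro h0
        simp [Int.mul_emod, h0] at hm3
    have hv3 : v ≠ 3 * u := by
      rintro rfl
      have : u * (3 * u) = 3 * (u * u) := by ring
      omega
    obtain ⟨h4, hu2, hu3⟩ := h4
    rw [Finset.mem_filter]
    dsimp only
    split_ifs with hc
    · have hmem : (u, u, (v - 3 * u) / 4) ∈ triples (24 * n + 7) := by
        rw [mem_triples]
        obtain ⟨k, hk⟩ : ∃ k, v - 3 * u = 4 * k := ⟨(v - 3 * u) / 4, by omega⟩
        have hk' : (v - 3 * u) / 4 = k := by omega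
        rw [hk']
        refine ⟨by omega, by omega, by omega, ?_⟩
        have : v = 3 * u + 4 * k := by omega
        rw [← h, this]; ring
      exact ⟨hmem, (hexMap_fixed n _ _ _ hmem).2 (Or.inl rfl)⟩
    · have hmem : ((v - u) / 2, (v - u) + (3 * u - v) / 4, (3 * u - v) / 4)
          ∈ triples (24 * n + 7) := by
        rw [mem_triples]
        obtain ⟨k, hk⟩ : ∃ k, 3 * u - v = 4 * k := ⟨(3 * u - v) / 4, by omega⟩
        have hk' : (3 * u - v) / 4 = k := by omega
        obtain ⟨l, hl⟩ : ∃ l, v - u = 2 * l := ⟨(v - u) / 2, by omega⟩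
        have hl' : (v - u) / 2 = l := by omega
        rw [hk', hl', hl]
        refine ⟨by omega, by omega, by omega, ?_⟩
        have e1 : u = l + 2 * k := by omega
        have e2 : v = 3 * l + 2 * k := by omega
        rw [← h, e1, e2]; ring
      exact ⟨hmem, (hexMap_fixed n _ _ _ hmem).2 (Or.inr (by omega))⟩
  · rintro ⟨x, y, z⟩ ht
    rw [Finset.mem_filter] at ht
    obtain ⟨ht, hf⟩ := ht
    rw [hexMap_fixed n x y z ht] at hf
    rw [mem_triples] at ht
    obtain ⟨hx, hy, hz, h⟩ := ht
    clear h
    dsimp only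
    by_cases hxy : x = y
    · rw [if_pos hxy]
      dsimp only
      rw [if_pos (by omega)]
      simp only [Prod.mk.injEq, true_and, and_true]; omega
    · rw [if_neg hxy]
      dsimp only
      rw [if_neg (by omega)]
      simp only [Prod.mk.injEq, true_and, and_true]; omega
  · rintro ⟨u, v⟩ hw
    rw [mem_facts] at hw
    obtain ⟨hu, huv, h⟩ := hw
    have h4 : (v - 3 * u) % 4 = 0 ∧ u % 2 = 1 := by
      have hm : u * v % 4 = 3 := by omega
      have h1 : u % 4 = 0 ∨ u % 4 = 1 ∨ u % 4 = 2 ∨ u % 4 = 3 := by omega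
      have h2 : v % 4 = 0 ∨ v % 4 = 1 ∨ v % 4 = 2 ∨ v % 4 = 3 := by omega
      rcases h1 with h1 | h1 | h1 | h1 <;> rcases h2 with h2 | h2 | h2 | h2 <;>
        simp [Int.mul_emod, h1, h2] at hm <;> omega
    have hv3 : v ≠ 3 * u := by
      rintro rfl
      have : u * (3 * u) = 3 * (u * u) := by ring
      omega
    clear h
    dsimp only
    by_cases hc : 3 * u < v
    · rw [if_pos hc]
      dsimp only
      rw [if_pos rfl]
      simp only [Prod.mk.injEq, true_and, and_true]; omega
    · rw [if_neg hc]
      dsimp only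
      rw [if_neg (by omega)]
      simp only [Prod.mk.injEq, true_and, and_true]; omega

theorem card_fixed_swap (N : ℤ) :
    ((triples N).filter (fun t => (t.1, t.2.2, t.2.1) = t)).card = (reps N).card := by
  refine Finset.card_bij' (fun t _ => (t.1, t.2.1)) (fun w _ => (w.1, w.2, w.2)) ?_ ?_ ?_ ?_
  · rintro ⟨x, y, z⟩ ht
    rw [Finset.mem_filter, mem_triples] at ht
    simp only [Prod.mk.injEq, true_and, and_true] at ht
    obtain ⟨⟨hx, hy, hz, h⟩, h2, -⟩ := ht
    rw [mem_reps]
    subst h2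
    exact ⟨hx, hy, by rw [← h]; ring⟩
  · rintro ⟨x, y⟩ ht
    rw [mem_reps] at ht
    rw [Finset.mem_filter, mem_triples]
    exact ⟨⟨ht.1, ht.2.1, ht.2.1, by rw [← ht.2.2]; ring⟩, rfl⟩
  · rintro ⟨x, y, z⟩ ht
    rw [Finset.mem_filter, mem_triples] at ht
    simp only [Prod.mk.injEq, true_and, and_true] at ht
    simp only [Prod.mk.injEq, true_and, and_true]
    exact ht.2.2
  · rintro ⟨x, y⟩ ht
    rfl

theorem reps_parity (n : ℤ) :
    ((reps (24 * n + 7)).card : ZMod 2) = ((facts (24 * n + 7)).card : ZMod 2) := by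
  rw [← card_fixed_hex, ← card_fixed_swap, ← card_invol _ _ (hexMap_mem n) (hexMap_invol n)]
  symm
  apply card_invol
  · rintro ⟨x, y, z⟩ ht
    rw [mem_triples] at *
    exact ⟨ht.1, ht.2.2.1, ht.2.1, by rw [← ht.2.2.2]; ring⟩
  · rintro ⟨x, y, z⟩ ht
    rfl

theorem odd_card_divisors_iff (m : ℕ) (hm : 0 < m) :
    Odd m.divisors.card ↔ ∃ c, m = c ^ 2 := by
  have h := card_invol m.divisors (fun d => m / d)
    (fun d hd => Nat.mem_divisors.2 ⟨Nat.div_dvd_of_dvd (Nat.dvd_of_mem_divisors hd), hm.ne'⟩)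
    (fun d hd => Nat.div_div_self (Nat.dvd_of_mem_divisors hd) hm.ne')
  have hfix : ∀ d ∈ m.divisors, m / d = d ↔ m = d ^ 2 := by
    intro d hd
    have hd' := Nat.dvd_of_mem_divisors hd
    have hpos : 0 < d := Nat.pos_of_mem_divisors hd
    rw [Nat.div_eq_iff_eq_mul_left hpos hd', pow_two]
  constructor
  · intro ho
    rw [(ZMod.natCast_eq_one_iff_odd).2 ho] at h
    have hne : (m.divisors.filter (fun d => m / d = d)).Nonempty := by
      rw [Finset.nonempty_iff_ne_empty]
      intro he
      rw [he] at h
      simp at h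
    obtain ⟨d, hd⟩ := hne
    rw [Finset.mem_filter] at hd
    exact ⟨d, (hfix d hd.1).1 hd.2⟩
  · rintro ⟨c, rfl⟩
    have : ((c ^ 2).divisors.filter (fun d => c ^ 2 / d = d)) = {c} := by
      ext d
      rw [Finset.mem_filter, Finset.mem_singleton]
      constructor
      · rintro ⟨h1, h2⟩
        have := (hfix d h1).1 h2
        exact (Nat.pow_left_injective (n := 2) (by norm_num) this).symm
      · rintro rfl
        have hd : d ∈ (d ^ 2).divisors := Nat.mem_divisors.2 ⟨Dvd.intro_left d (by ring), hm.ne'⟩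
        exact ⟨hd, (hfix d hd).2 rfl⟩
    rw [this] at h
    exact (ZMod.natCast_eq_one_iff_odd).1 (by simpa using h)

theorem card_divisors_mod_four (N : ℕ) (hN : 0 < N) :
    N.divisors.card % 4 = 2 ↔ ∃ p a c : ℕ, p.Prime ∧ 0 < c ∧ ¬ p ∣ c ∧
        N = p ^ (4 * a + 1) * c ^ 2 := by
  constructor
  · intro h
    have he : 2 ∣ ∏ x ∈ N.primeFactors, (N.factorization x + 1) := by
      rw [← Nat.card_divisors hN.ne']; omega
    rw [Prime.dvd_finsetProd_iff Nat.prime_two.prime] at he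
    obtain ⟨p, hp, h2⟩ := he
    have hpp := Nat.prime_of_mem_primeFactors hp
    obtain ⟨e, m, hpm, rfl⟩ := Nat.exists_eq_pow_mul_and_not_dvd hN.ne' p hpp.ne_one
    have hm : 0 < m := Nat.pos_of_ne_zero (by rintro rfl; simp at hpm)
    have hcop : Nat.Coprime (p ^ e) m := Nat.Coprime.pow_left _ ((Nat.Prime.coprime_iff_not_dvd hpp).2 hpm)
    have hfe : (p ^ e * m).factorization p = e := by
      rw [Nat.factorization_mul (pow_ne_zero _ hpp.ne_zero) hm.ne', Finsupp.add_apply,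
        hpp.factorization_pow, Nat.factorization_eq_zero_of_not_dvd hpm]
      simp
    rw [hfe] at h2
    rw [Nat.Coprime.card_divisors_mul hcop, Nat.divisors_prime_pow hpp, Finset.card_map,
      Finset.card_range] at h
    have hod : Odd m.divisors.card := by
      rw [← Nat.not_even_iff_odd]
      rintro ⟨k, hk⟩
      obtain ⟨j, hj⟩ := h2
      rw [hj, hk, show 2 * j * (k + k) = 4 * (j * k) by ring] at h
      omega
    obtain ⟨c, hc⟩ := (odd_card_divisors_iff m hm).1 hod
    have he4 : e % 4 = 1 := by
      by_contra hne
      have : (e + 1) % 4 = 0 := by omega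
      obtain ⟨j, hj⟩ := Nat.dvd_of_mod_eq_zero this
      rw [hj, mul_assoc] at h
      omega
    refine ⟨p, e / 4, c, hpp, ?_, ?_, ?_⟩
    · rcases Nat.eq_zero_or_pos c with rfl | h0
      · simp at hc; omega
      · exact h0
    · intro hd
      exact hpm (hc ▸ dvd_pow hd (by norm_num))
    · rw [hc, show 4 * (e / 4) + 1 = e by omega]
  · rintro ⟨p, a, c, hpp, hc, hpc, rfl⟩
    have hcop : Nat.Coprime (p ^ (4 * a + 1)) (c ^ 2) :=
      Nat.Coprime.pow _ _ ((Nat.Prime.coprime_iff_not_dvd hpp).2 hpc)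
    rw [Nat.Coprime.card_divisors_mul hcop, Nat.divisors_prime_pow hpp, Finset.card_map,
      Finset.card_range]
    obtain ⟨k, hk⟩ := (odd_card_divisors_iff (c ^ 2) (by positivity)).2 ⟨c, rfl⟩
    rw [hk, show (4 * a + 1 + 1) * (2 * k + 1) = 4 * (a * (2 * k + 1) + k) + 2 by ring]
    omega

theorem card_facts (N : ℕ) (hN : 0 < N) (hsq : ∀ c, N ≠ c ^ 2) :
    N.divisors.card = 2 * (facts (N : ℤ)).card := by
  have h := Finset.card_filter_add_card_filter_not (s := N.divisors) (fun d => d < N / d)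
  have h1 : (N.divisors.filter (fun d => d < N / d)).card = (facts (N : ℤ)).card := by
    refine Finset.card_bij' (fun d _ => ((d : ℤ), ((N / d : ℕ) : ℤ))) (fun w _ => w.1.toNat)
      ?_ ?_ ?_ ?_
    · intro d hd
      rw [Finset.mem_filter] at hd
      rw [mem_facts]
      have := Nat.pos_of_mem_divisors hd.1
      refine ⟨by omega, by exact_mod_cast hd.2, ?_⟩
      exact_mod_cast Nat.mul_div_cancel' (Nat.dvd_of_mem_divisors hd.1)
    · rintro ⟨u, v⟩ hw
      rw [mem_facts] at hw
      obtain ⟨hu, huv, hw⟩ := hw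
      lift u to ℕ using hu.le
      lift v to ℕ using by omega
      norm_cast at *
      subst hw
      simp only [Int.toNat_natCast, Finset.mem_filter, Nat.mem_divisors]
      refine ⟨⟨Dvd.intro _ rfl, hN.ne'⟩, ?_⟩
      rwa [Nat.mul_div_cancel_left _ hu]
    · intro d hd; simp
    · rintro ⟨u, v⟩ hw
      rw [mem_facts] at hw
      obtain ⟨hu, huv, hw⟩ := hw
      lift u to ℕ using hu.le
      lift v to ℕ using by omega
      norm_cast at *
      subst hw
      simp only [Int.toNat_natCast]
      rw [Nat.mul_div_cancel_left _ hu]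
  have h2 : (N.divisors.filter (fun d => ¬ d < N / d)).card =
      (N.divisors.filter (fun d => d < N / d)).card := by
    refine Finset.card_bij' (fun d _ => N / d) (fun d _ => N / d) ?_ ?_ ?_ ?_
    · intro d hd
      rw [Finset.mem_filter] at *
      refine ⟨Nat.mem_divisors.2 ⟨Nat.div_dvd_of_dvd (Nat.dvd_of_mem_divisors hd.1), hN.ne'⟩, ?_⟩
      rw [Nat.div_div_self (Nat.dvd_of_mem_divisors hd.1) hN.ne']
      refine lt_of_le_of_ne (not_lt.1 hd.2) ?_
      intro he
      apply hsq d
      have := Nat.div_mul_cancel (Nat.dvd_of_mem_divisors hd.1)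
      rw [he] at this
      rw [← this, pow_two]
    · intro d hd
      rw [Finset.mem_filter] at *
      refine ⟨Nat.mem_divisors.2 ⟨Nat.div_dvd_of_dvd (Nat.dvd_of_mem_divisors hd.1), hN.ne'⟩, ?_⟩
      rw [Nat.div_div_self (Nat.dvd_of_mem_divisors hd.1) hN.ne']
      exact not_lt.2 hd.2.le
    · intro d hd
      exact Nat.div_div_self (Nat.dvd_of_mem_divisors (Finset.mem_filter.1 hd).1) hN.ne'
    · intro d hd
      exact Nat.div_div_self (Nat.dvd_of_mem_divisors (Finset.mem_filter.1 hd).1) hN.ne'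
  omega

theorem reps_odd_iff (n : ℕ) :
    ((reps (24 * n + 7)).card : ZMod 2) = 1 ↔ ∃ p a c : ℕ, p.Prime ∧ 0 < c ∧ ¬ p ∣ c ∧
        24 * n + 7 = p ^ (4 * a + 1) * c ^ 2 := by
  rw [reps_parity, ZMod.natCast_eq_one_iff_odd, ← card_divisors_mod_four _ (by omega),
    card_facts (24 * n + 7) (by omega)]
  · push_cast
    rw [Nat.odd_iff]
    omega
  · intro c hc
    have : c ^ 2 % 4 = 3 := by omega
    have h1 : c % 4 = 0 ∨ c % 4 = 1 ∨ c % 4 = 2 ∨ c % 4 = 3 := by omega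
    rcases h1 with h | h | h | h <;> simp [pow_two, Nat.mul_mod, h] at this

section powerseries
open PowerSeries

theorem shanks {R : Type*} [CommRing R] (x : R) (u : ℕ → R)
    (hu : ∀ i, (1 - x ^ (2 * i + 1)) * u i = 1) (n : ℕ) :
    ∑ s ∈ Finset.range n, (∏ i ∈ Finset.Ico s n, (1 - x ^ (2 * i + 2)) * u i) *
      x ^ (s * (2 * n + 1)) = ∑ s ∈ Finset.range (2 * n), x ^ (s * (s + 1) / 2) := by
  induction n with
  | zero => simp
  | succ n ih =>
    have e1 : (2 * n) * (2 * n + 1) / 2 = n * (2 * n + 1) := by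
      rw [mul_assoc, Nat.mul_div_cancel_left _ (by norm_num)]
    have e2 : (2 * n + 1) * (2 * n + 1 + 1) / 2 = (n + 1) * (2 * n + 1) := by
      rw [show (2 * n + 1) * (2 * n + 1 + 1) = 2 * ((n + 1) * (2 * n + 1)) by ring,
        Nat.mul_div_cancel_left _ (by norm_num)]
    rw [show 2 * (n + 1) = 2 * n + 1 + 1 by ring, Finset.sum_range_succ _ (2 * n + 1),
      Finset.sum_range_succ _ (2 * n), ← ih, e1, e2, Finset.sum_range_succ]
    set c := (1 - x ^ (2 * n + 2)) * u n with hc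
    have hT : ∀ m ≤ n, ∑ s ∈ Finset.range m,
        (∏ i ∈ Finset.Ico s (n + 1), (1 - x ^ (2 * i + 2)) * u i) *
          x ^ (s * (2 * n + 1 + 1 + 1)) =
        ∑ s ∈ Finset.range m, (∏ i ∈ Finset.Ico s n, (1 - x ^ (2 * i + 2)) * u i) *
          x ^ (s * (2 * n + 1)) + (∏ i ∈ Finset.Ico m n, (1 - x ^ (2 * i + 2)) * u i) *
          (1 - x ^ (2 * m)) * x ^ (m * (2 * n + 1)) * u n := by
      intro m hm
      induction m with
      | zero => simp
      | succ m ihm =>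
        rw [Finset.sum_range_succ, Finset.sum_range_succ, ihm (by omega),
          Finset.prod_Ico_succ_top (by omega), Finset.prod_eq_prod_Ico_succ_bot (by omega : m < n)]
        set Q := ∏ i ∈ Finset.Ico (m + 1) n, (1 - x ^ (2 * i + 2)) * u i
        have h1 := hu m
        have h2 := hu n
        have p1 : x ^ (m * (2 * n + 1 + 1 + 1)) = x ^ (m * (2 * n + 1)) * x ^ (2 * m) := by
          rw [← pow_add]; ring_nf
        have p2 : x ^ ((m + 1) * (2 * n + 1)) = x ^ (m * (2 * n + 1)) * x ^ (2 * n + 1) := by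
          rw [← pow_add]; ring_nf
        have p3 : x ^ (2 * (m + 1)) = x ^ (2 * m + 2) := by ring_nf
        have p4 : x ^ (2 * n + 2) = x ^ (2 * n + 1) * x := by ring
        have p5 : x ^ (2 * m + 1) = x ^ (2 * m) * x := by ring
        rw [p1, p2, p3, p4]
        rw [p5] at h1
        set W := x ^ (m * (2 * n + 1))
        set a := x ^ (2 * m)
        set b := x ^ (2 * n + 1)
        set d := 1 - x ^ (2 * m + 2)
        linear_combination (Q * d * u m * W) * h2 + (Q * d * W * b * u n) * h1
    rw [hT n le_rfl]
    simp only [Finset.Ico_self, Finset.prod_empty, one_mul, Nat.Ico_succ_singleton,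
      Finset.prod_singleton]
    have h2 := hu n
    have p1 : x ^ (n * (2 * n + 1 + 1 + 1)) = x ^ (n * (2 * n + 1)) * x ^ (2 * n) := by
      rw [← pow_add]; ring_nf
    have p2 : x ^ ((n + 1) * (2 * n + 1)) = x ^ (n * (2 * n + 1)) * x ^ (2 * n + 1) := by
      rw [← pow_add]; ring_nf
    rw [p1, p2]
    have p4 : x ^ (2 * n + 1) = x ^ (2 * n) * x := by ring
    have p5 : x ^ (2 * n + 2) = x ^ (2 * n) * x ^ 2 := by ring
    rw [p4] at h2
    rw [p4, p5]
    linear_combination (x ^ (n * (2 * n + 1)) * (1 + x ^ (2 * n) * x)) * h2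

section series
open scoped Classical
open Filter Topology PowerSeries.WithPiTopology

theorem charTwo_sq (f g : (ZMod 2)⟦X⟧) : (f + g) ^ 2 = f ^ 2 + g ^ 2 := by
  have h2 : (2 : (ZMod 2)⟦X⟧) = 0 := by
    have : (2 : (ZMod 2)⟦X⟧) = C (2 : ZMod 2)   := (map_ofNat C 2).symm
    rw [this, show (2 : ZMod 2) = 0 from rfl, map_zero]
  linear_combination (f * g) * h2

theorem charTwo_sub_sq (f g : (ZMod 2)⟦X⟧) : (f - g) ^ 2 = f ^ 2 - g ^ 2 := by
  have h2 : (2 : (ZMod 2)⟦X⟧) = 0 := by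
    have : (2 : (ZMod 2)⟦X⟧) = C (2 : ZMod 2)   := (map_ofNat C 2).symm
    rw [this, show (2 : ZMod 2) = 0 from rfl, map_zero]
  linear_combination (g ^ 2 - f * g) * h2

/-- coefficients of a square in characteristic two -/
theorem coeff_sq_two (f : (ZMod 2)⟦X⟧) (n : ℕ) :
    (f ^ 2).coeff n = if 2 ∣ n then f.coeff (n / 2) else 0 := by
  rw [pow_two, coeff_mul]
  have hz : ∀ a b : ZMod 2, a * b + b * a = 0 := by decide
  have hs : ∀ a : ZMod 2, a * a = a := by decide
  split_ifs with h
  · obtain ⟨m, rfl⟩ := h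
    rw [Nat.mul_div_cancel_left _ (by norm_num)]
    have hm : (m, m) ∈ Finset.HasAntidiagonal.antidiagonal (2 * m) := by
      rw [Finset.HasAntidiagonal.mem_antidiagonal]; dsimp only; omega
    rw [← Finset.add_sum_erase _ _ hm, hs]
    rw [add_eq_left]
    refine Finset.sum_involution (fun p _ => p.swap) ?_ ?_ ?_ ?_
    · intro p _; exact hz _ _
    · rintro ⟨a, b⟩ hp _ he
      simp only [Prod.swap_prod_mk, Prod.mk.injEq] at he
      simp only [Finset.mem_erase, Finset.HasAntidiagonal.mem_antidiagonal, ne_eq, Prod.mk.injEq] at hp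
      omega
    · rintro ⟨a, b⟩ hp
      simp only [Finset.mem_erase, Finset.HasAntidiagonal.mem_antidiagonal, ne_eq, Prod.mk.injEq,
        Prod.swap_prod_mk] at *
      omega
    · rintro ⟨a, b⟩ hp; rfl
  · refine Finset.sum_involution (fun p _ => p.swap) ?_ ?_ ?_ ?_
    · intro p _; exact hz _ _
    · rintro ⟨a, b⟩ hp _ he
      simp only [Prod.swap_prod_mk, Prod.mk.injEq] at he
      simp only [Finset.HasAntidiagonal.mem_antidiagonal] at hp
      omega
    · rintro ⟨a, b⟩ hp
      simp only [Finset.HasAntidiagonal.mem_antidiagonal, Prod.swap_prod_mk] at *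
      omega
    · rintro ⟨a, b⟩ hp; rfl

theorem coeff_four_two (f : (ZMod 2)⟦X⟧) (n : ℕ) :
    (f ^ 4).coeff n = if 4 ∣ n then f.coeff (n / 4) else 0 := by
  rw [show f ^ 4 = (f ^ 2) ^ 2 by ring, coeff_sq_two, coeff_sq_two]
  split_ifs <;> first | omega | rfl | (congr 1; omega) | skip
  congr 2; omega

theorem coeff_penta (n : ℕ) : (pentagonalSeries (ZMod 2)).coeff n =
    if ∃ y : ℕ, y ^ 2 = 24 * n + 1 then 1 else 0 := by
  split_ifs with h
  · obtain ⟨y, hy⟩ := h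
    have h0 : (pentagonalSeries (ZMod 2)).coeff n ≠ 0 := by
      rw [Ne, coeff_pentagonalSeries_eq_zero_iff, not_not]
      have hm : y ^ 2 % 6 = 1 := by omega
      have h6 : y % 6 = 1 ∨ y % 6 = 5 := by
        have h1 : y % 6 = 0 ∨ y % 6 = 1 ∨ y % 6 = 2 ∨ y % 6 = 3 ∨ y % 6 = 4 ∨ y % 6 = 5 := by omega
        rcases h1 with h | h | h | h | h | h <;> simp [pow_two, Nat.mul_mod, h] at hm ⊢
      have : ∃ k : ℤ, (6 * k - 1) ^ 2 = 24 * (n : ℤ) + 1 := by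
        rcases h6 with h6 | h6
        · refine ⟨-((y / 6 : ℕ) : ℤ), ?_⟩
          have : (y : ℤ) = 6 * ((y / 6 : ℕ) : ℤ) + 1 := by omega
          have hy' : (y : ℤ) ^ 2 = 24 * n + 1 := by exact_mod_cast hy
          rw [← hy', this]; ring
        · refine ⟨((y / 6 : ℕ) : ℤ) + 1, ?_⟩
          have : (y : ℤ) = 6 * ((y / 6 : ℕ) : ℤ) + 5 := by omega
          have hy' : (y : ℤ) ^ 2 = 24 * n + 1 := by exact_mod_cast hy
          rw [← hy', this]; ring
      obtain ⟨k, hk⟩ := this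
      refine ⟨k, ?_⟩
      have := two_mul_natCast_pentagonal k
      have e : (6 * k - 1) ^ 2 = 12 * (k * (3 * k - 1)) + 1 := by ring
      rw [e, ← this] at hk
      omega
    generalize (pentagonalSeries (ZMod 2)).coeff n = a at *
    revert a; decide
  · rw [coeff_pentagonalSeries_eq_zero_iff]
    rintro ⟨k, rfl⟩
    apply h
    refine ⟨(6 * k - 1).natAbs, ?_⟩
    zify
    rw [sq_abs]
    linear_combination -12 * two_mul_natCast_pentagonal k

/-- generating function of triangular numbers -/
noncomputable def triSeries : (ZMod 2)⟦X⟧ :=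
  PowerSeries.mk fun n => if ∃ x : ℕ, x ^ 2 = 8 * n + 1 then 1 else 0

theorem coeff_sum_tri (n d : ℕ) (h : d < 2 * n) :
    (∑ s ∈ Finset.range (2 * n), (X : (ZMod 2)⟦X⟧) ^ (s * (s + 1) / 2)).coeff d =
      triSeries.coeff d := by
  have htri : ∀ s : ℕ, 2 * (s * (s + 1) / 2) = s * (s + 1) := fun s =>
    Nat.mul_div_cancel' (Nat.even_mul_succ_self s).two_dvd
  rw [map_sum, triSeries, coeff_mk]
  simp only [coeff_X_pow]
  split_ifs with hx
  · obtain ⟨x, hx⟩ := hx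
    have hodd : x % 2 = 1 := by
      have : x ^ 2 % 2 = 1 := by omega
      rcases Nat.mod_two_eq_zero_or_one x with h | h
      · simp [pow_two, Nat.mul_mod, h] at this
      · exact h
    obtain ⟨s, rfl⟩ : ∃ s, x = 2 * s + 1 := ⟨x / 2, by omega⟩
    have hd : d = s * (s + 1) / 2 := by
      have := htri s
      nlinarith
    rw [Finset.sum_eq_single s, if_pos hd]
    · intro b _ hb
      rw [if_neg]
      intro hdb
      apply hb
      have h1 := htri s
      have h2 := htri b
      rw [← hd] at h1
      rw [← hdb] at h2
      have : s * (s + 1) = b * (b + 1) := by omega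
      rcases lt_trichotomy s b with h | h | h
      · nlinarith
      · exact h.symm
      · nlinarith
    · intro hs
      exfalso
      apply hs
      rw [Finset.mem_range]
      have := htri s
      rw [← hd] at this
      nlinarith
  · apply Finset.sum_eq_zero
    intro s _
    rw [if_neg]
    intro hd
    apply hx
    refine ⟨2 * s + 1, ?_⟩
    have := htri s
    rw [← hd] at this
    nlinarith

theorem tri_eq : triSeries = pentagonalSeries (ZMod 2) ^ 3 := by
  let _ : TopologicalSpace (ZMod 2) := ⊥
  have _ : DiscreteTopology (ZMod 2) := ⟨rfl⟩
  set u : ℕ → (ZMod 2)⟦X⟧ := fun i => (1 - X ^ (2 * i + 1))⁻¹ with hu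
  have huu : ∀ i, (1 - (X : (ZMod 2)⟦X⟧) ^ (2 * i + 1)) * u i = 1 := by
    intro i
    rw [hu]
    apply PowerSeries.mul_inv_cancel
    simp
  set f := pentagonalSeries (ZMod 2) with hf
  have hprod : HasProd (fun n ↦ (1 - X ^ (n + 1) : (ZMod 2)⟦X⟧)) f := hasProd_one_sub_X_pow _
  have hlim : Tendsto (fun n => ∏ i ∈ Finset.range n, (1 - X ^ (i + 1) : (ZMod 2)⟦X⟧)) atTop (𝓝 f) :=
    hprod.tendsto_prod_nat
  have hlim2 : Tendsto (fun n => ∏ i ∈ Finset.range (2 * n), (1 - X ^ (i + 1) : (ZMod 2)⟦X⟧)) atTop (𝓝 f) :=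
    hlim.comp (tendsto_id.const_mul_atTop' (by norm_num : 0 < 2))
  have hP : Tendsto (fun n => ∏ i ∈ Finset.Ico 0 n, (1 - (X : (ZMod 2)⟦X⟧) ^ (2 * i + 2)) * u i)
      atTop (𝓝 triSeries) := by
    rw [tendsto_iff_coeff_tendsto]
    intro d
    refine tendsto_atTop_of_eventually_const (i₀ := d + 1) fun n hn => ?_
    have hs := shanks (X : (ZMod 2)⟦X⟧) u huu n
    rw [← coeff_sum_tri n d (by omega), ← hs, map_sum]
    rw [Finset.sum_eq_single 0]
    · simp
    · intro s _ hs0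
      rw [coeff_mul_X_pow', if_neg]
      have : 2 * n + 1 ≤ s * (2 * n + 1) := Nat.le_mul_of_pos_left _ (by omega)
      omega
    · intro h0
      exact absurd (Finset.mem_range.2 (by omega)) h0
  have hfin : ∀ n, (∏ i ∈ Finset.Ico 0 n, (1 - (X : (ZMod 2)⟦X⟧) ^ (2 * i + 2)) * u i) *
      ∏ i ∈ Finset.range (2 * n), (1 - X ^ (i + 1) : (ZMod 2)⟦X⟧) =
      (∏ i ∈ Finset.range n, (1 - X ^ (i + 1) : (ZMod 2)⟦X⟧)) ^ 4 := by
    intro n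
    induction n with
    | zero => simp
    | succ n ih =>
      rw [Finset.prod_Ico_succ_top (by omega), show 2 * (n + 1) = 2 * n + 1 + 1 by ring,
        Finset.prod_range_succ _ (2 * n + 1), Finset.prod_range_succ _ (2 * n),
        Finset.prod_range_succ _ n, mul_pow, ← ih]
      have h4 : (1 - (X : (ZMod 2)⟦X⟧) ^ (n + 1)) ^ 4 = (1 - X ^ (2 * n + 2)) ^ 2 := by
        rw [show (1 - (X : (ZMod 2)⟦X⟧) ^ (n + 1)) ^ 4 = ((1 - X ^ (n + 1)) ^ 2) ^ 2 by ring,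
          charTwo_sub_sq]
        ring
      rw [h4, show 2 * n + 1 + 1 = 2 * n + 2 by ring]
      have h1 := huu n
      set A := ∏ i ∈ Finset.Ico 0 n, (1 - (X : (ZMod 2)⟦X⟧) ^ (2 * i + 2)) * u i
      set D := ∏ i ∈ Finset.range (2 * n), (1 - X ^ (i + 1) : (ZMod 2)⟦X⟧)
      set E := (1 - (X : (ZMod 2)⟦X⟧) ^ (2 * n + 2))
      linear_combination (A * D * E ^ 2) * h1
  have hl := hP.mul hlim2
  simp_rw [hfin] at hl
  have heq : triSeries * f = f ^ 4 := tendsto_nhds_unique hl (hlim.pow 4)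
  have hf0 : f ≠ 0 := by
    intro h0
    have := coeff_penta 0
    rw [← hf, h0, if_pos ⟨1, by norm_num⟩] at this
    simp at this
  apply mul_right_cancel₀ hf0
  rw [heq]; ring

theorem gen_eq : (PowerSeries.mk fun n ↦
    ((Nat.Partition.restricted n (¬ 8 ∣ ·)).card : ZMod 2)) = pentagonalSeries (ZMod 2) ^ 7 := by
  let _ : TopologicalSpace (ZMod 2) := ⊥
  have _ : DiscreteTopology (ZMod 2) := ⟨rfl⟩
  rw [Nat.Partition.powerSeriesMk_card_restricted_eq_powerSeriesMk_card_countRestricted _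
    (by norm_num)]
  have h1 := Nat.Partition.hasProd_powerSeriesMk_card_countRestricted (ZMod 2) (m := 8) (by norm_num)
  have hprod : HasProd (fun n ↦ (1 - X ^ (n + 1) : (ZMod 2)⟦X⟧)) (pentagonalSeries (ZMod 2)) :=
    hasProd_one_sub_X_pow _
  have h2 := hprod.pow 7
  have he : (fun i ↦ ∑ j ∈ Finset.range 8, (X : (ZMod 2)⟦X⟧) ^ ((i + 1) * j)) =
      fun i => (1 - X ^ (i + 1)) ^ 7 := by
    ext1 i
    have hne : (1 - (X : (ZMod 2)⟦X⟧) ^ (i + 1)) ≠ 0 := by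
      intro h0
      have := congrArg constantCoeff h0
      simp at this
    apply mul_right_cancel₀ hne
    simp_rw [pow_mul]
    rw [← pow_succ, show (1 - (X : (ZMod 2)⟦X⟧) ^ (i + 1)) ^ (7 + 1) =
      (((1 - X ^ (i + 1)) ^ 2) ^ 2) ^ 2 by ring, charTwo_sub_sq, charTwo_sub_sq, charTwo_sub_sq,
      geom_sum_mul_neg]
    ring
  rw [he] at h1
  exact h1.unique h2

end series
end powerseries

section final

theorem rep_shape (n : ℕ) (u v : ℤ) (hu : 0 < u) (hv : 0 < v)
    (h : 3 * u ^ 2 + 4 * v ^ 2 = 24 * n + 7) :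
    ∃ i j : ℕ, u ^ 2 = 8 * i + 1 ∧ v ^ 2 = 24 * j + 1 ∧ i + 4 * j = n := by
  have odd_sq : ∀ w : ℤ, w % 2 = 1 → 8 ∣ w ^ 2 - 1 := fun w hw =>
    Int.eight_dvd_sq_sub_one_of_odd (Int.odd_iff.2 hw)
  have hu2 : u % 2 = 1 := by
    rcases Int.emod_two_eq_zero_or_one u with h0 | h0
    · obtain ⟨k, rfl⟩ := Int.dvd_of_emod_eq_zero h0
      ring_nf at h
      omega
    · exact h0
  obtain ⟨i, hi⟩ := odd_sq u hu2
  have hv1 : v ^ 2 = 6 * (n - i) + 1 := by linarith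
  have hv2 : v % 2 = 1 := by
    rcases Int.emod_two_eq_zero_or_one v with h0 | h0
    · obtain ⟨k, rfl⟩ := Int.dvd_of_emod_eq_zero h0
      ring_nf at hv1
      omega
    · exact h0
  obtain ⟨k, hk⟩ := odd_sq v hv2
  have hup : 0 < u ^ 2 := by positivity
  have hvp : 0 < v ^ 2 := by positivity
  refine ⟨i.toNat, (k / 3).toNat, ?_, ?_, ?_⟩ <;> omega

open scoped Classical in
theorem restricted_card_eq_reps (n : ℕ) :
    ((Nat.Partition.restricted n (¬ 8 ∣ ·)).card : ZMod 2) =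
      ((reps (24 * n + 7)).card : ZMod 2) := by
  have h := congrArg (PowerSeries.coeff n) gen_eq
  rw [PowerSeries.coeff_mk] at h
  have h7 : PowerSeries.pentagonalSeries (ZMod 2) ^ 7 = triSeries * PowerSeries.pentagonalSeries (ZMod 2) ^ 4 := by
    rw [tri_eq]; ring
  obtain ⟨P, hP⟩ : ∃ P : ℕ × ℕ → Prop, ∀ q, P q ↔ (∃ x : ℕ, x ^ 2 = 8 * q.1 + 1) ∧ 4 ∣ q.2 ∧
      ∃ y : ℕ, y ^ 2 = 24 * (q.2 / 4) + 1 := ⟨_, fun _ => Iff.rfl⟩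
  have hterm : ∀ q ∈ Finset.HasAntidiagonal.antidiagonal n,
      triSeries.coeff q.1 * (PowerSeries.pentagonalSeries (ZMod 2) ^ 4).coeff q.2 =
      if P q then 1 else 0 := by
    intro q _
    rw [coeff_four_two, coeff_penta, triSeries, PowerSeries.coeff_mk]
    have hq := hP q
    by_cases h1 : ∃ x : ℕ, x ^ 2 = 8 * q.1 + 1 <;> by_cases h2 : 4 ∣ q.2 <;>
      by_cases h3 : ∃ y : ℕ, y ^ 2 = 24 * (q.2 / 4) + 1 <;>
      simp only [h1, h2, h3, true_and, and_true, false_and, and_false] at hq <;>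
      simp [h1, h2, h3, hq]
  rw [h, h7, PowerSeries.coeff_mul, Finset.sum_congr rfl hterm, Finset.sum_boole]
  congr 1
  symm
  apply Finset.card_bij (fun (w : ℤ × ℤ) _ =>
    (((w.1 ^ 2 - 1) / 8).toNat, ((w.2 ^ 2 - 1) / 6).toNat))
  · rintro ⟨u, v⟩ hw
    obtain ⟨hu, hv, he⟩ := (mem_reps _ _ _).1 hw
    obtain ⟨i, j, hi, hj, hij⟩ := rep_shape n u v hu hv he
    have e1 : ((u ^ 2 - 1) / 8).toNat = i := by omega
    have e2 : ((v ^ 2 - 1) / 6).toNat = 4 * j := by omega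
    simp only [Finset.mem_filter, Finset.HasAntidiagonal.mem_antidiagonal, hP, e1, e2]
    refine ⟨hij, ⟨u.toNat, ?_⟩, ⟨j, rfl⟩, v.toNat, ?_⟩
    · zify; rw [Int.toNat_of_nonneg hu.le, hi]
    · rw [Nat.mul_div_cancel_left _ (by norm_num)]
      zify; rw [Int.toNat_of_nonneg hv.le, hj]
  · rintro ⟨u, v⟩ hw ⟨u', v'⟩ hw' hh
    obtain ⟨hu, hv, he⟩ := (mem_reps _ _ _).1 hw
    obtain ⟨i, j, hi, hj, hij⟩ := rep_shape n u v hu hv he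
    obtain ⟨hu', hv', he'⟩ := (mem_reps _ _ _).1 hw'
    obtain ⟨i', j', hi', hj', hij'⟩ := rep_shape n u' v' hu' hv' he'
    simp only [Prod.mk.injEq] at hh
    have e1 : u ^ 2 = u' ^ 2 := by omega
    have e2 : v ^ 2 = v' ^ 2 := by omega
    rw [Prod.mk.injEq]
    exact ⟨(pow_left_inj₀ hu.le hu'.le two_ne_zero).1 e1,
      (pow_left_inj₀ hv.le hv'.le two_ne_zero).1 e2⟩
  · rintro ⟨i, j⟩ hw
    simp only [Finset.mem_filter, Finset.HasAntidiagonal.mem_antidiagonal, hP] at hw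
    obtain ⟨hij, ⟨x, hx⟩, ⟨k, rfl⟩, y, hy⟩ := hw
    rw [Nat.mul_div_cancel_left _ (by norm_num)] at hy
    have hx' : (x : ℤ) ^ 2 = 8 * i + 1 := by exact_mod_cast hx
    have hy' : (y : ℤ) ^ 2 = 24 * k + 1 := by exact_mod_cast hy
    have hx0 : 0 < x := by
      rcases Nat.eq_zero_or_pos x with rfl | h0
      · simp at hx
      · exact h0
    have hy0 : 0 < y := by
      rcases Nat.eq_zero_or_pos y with rfl | h0
      · simp at hy
      · exact h0
    refine ⟨((x : ℤ), (y : ℤ)), (mem_reps _ _ _).2 ⟨by exact_mod_cast hx0,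
      by exact_mod_cast hy0, ?_⟩, ?_⟩
    · rw [hx', hy']; push_cast [← hij]; ring
    · simp only [Prod.mk.injEq]
      constructor <;> omega

theorem numRegular_eq (n : ℕ) :
    numRegularPartitions 8 n = (Nat.Partition.restricted n (¬ 8 ∣ ·)).card := by
  classical
  rw [numRegularPartitions, Nat.card_eq_fintype_card, Fintype.card_subtype,
    Nat.Partition.restricted]

end final

theorem stmt_16 (n : ℕ) :
    Odd (numRegularPartitions 8 n) ↔
      ∃ p a c : ℕ, p.Prime ∧ 0 < c ∧ ¬ p ∣ c ∧
        24 * n + 7 = p ^ (4 * a + 1) * c ^ 2 := by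
  rw [← ZMod.natCast_eq_one_iff_odd, numRegular_eq, ← reps_odd_iff]
  have h := restricted_card_eq_reps n
  constructor <;> intro h1
  · rw [← h]; convert h1
  · rw [← h] at h1; convert h1
end

section
/- For every natural number n, let r_3(s) denote the number of pairs (x, y) ∈ ℤ × ℤ with x² + 3y² = s. Then 4 divides r_3(24n + 7), and the number of 8-regular partitions b_8(n) is congruent to r_3(24n + 7)/4 modulo 2. -/
/-- The number of representations of `s` as `x² + 3y²` with `x, y ∈ ℤ`. -/
noncomputable def r3 (s : ℕ) : ℕ :=
  Nat.card {p : ℤ × ℤ // p.1 ^ 2 + 3 * p.2 ^ 2 = s}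

open PowerSeries

lemma odd_sq_form {u : ℕ} (hu : u % 2 = 1) : ∃ b, u ^ 2 = 8 * b + 1 := by
  have h : u ^ 2 % 8 = 1 := by
    have : u % 8 = 1 ∨ u % 8 = 3 ∨ u % 8 = 5 ∨ u % 8 = 7 := by omega
    rcases this with h | h | h | h <;> simp [Nat.pow_mod, h]
  exact ⟨u ^ 2 / 8, by omega⟩

lemma pent_iff (a : ℕ) : a ∈ Set.range pentagonal ↔ IsSquare (24 * a + 1) := by
  constructor
  · rintro ⟨k, rfl⟩
    refine ⟨(6 * k - 1).natAbs, ?_⟩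
    zify
    have := two_mul_natCast_pentagonal k
    rw [abs_mul_abs_self]
    linear_combination 12 * this
  · rintro ⟨A, hA⟩
    have h6 : A % 6 = 1 ∨ A % 6 = 5 := by
      have : A % 6 < 6 := Nat.mod_lt _ (by norm_num)
      have h : (A * A) % 6 = 1 := by omega
      rw [Nat.mul_mod] at h
      interval_cases A % 6 <;> simp_all
    rcases h6 with h | h
    · refine ⟨-((A / 6 : ℕ) : ℤ), ?_⟩
      have h1 := two_mul_natCast_pentagonal_neg ((A / 6 : ℕ) : ℤ)
      have h2 : (A : ℤ) = 6 * ((A / 6 : ℕ) : ℤ) + 1 := by omega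
      generalize ((A / 6 : ℕ) : ℤ) = k at *
      zify at hA ⊢
      rw [h2] at hA
      linarith
    · refine ⟨((A / 6 : ℕ) : ℤ) + 1, ?_⟩
      have h1 := two_mul_natCast_pentagonal (((A / 6 : ℕ) : ℤ) + 1)
      have h2 : (A : ℤ) = 6 * ((A / 6 : ℕ) : ℤ) + 5 := by omega
      generalize ((A / 6 : ℕ) : ℤ) = k at *
      zify at hA ⊢
      rw [h2] at hA
      linarith

open Classical in
noncomputable def sqSer (c : ℕ) : PowerSeries (ZMod 2) :=
  .mk fun n => if IsSquare (c * n + 1) then 1 else 0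

lemma pentSer : pentagonalSeries (ZMod 2) = sqSer 24 := by
  ext n
  by_cases h : IsSquare (24 * n + 1)
  · obtain ⟨k, rfl⟩ := (pent_iff n).2 h
    rw [coeff_pentagonalSeries_pentagonal]
    simp only [sqSer, coeff_mk, if_pos h]
    rcases Int.even_or_odd k with hk | hk
    · simp [Int.negOnePow_even k hk]
    · simp [Int.negOnePow_odd k hk]
  · rw [coeff_pentagonalSeries_eq_zero _ (fun h' => h ((pent_iff n).1 h'))]
    simp [sqSer, h]

lemma sq_coeff (f : PowerSeries (ZMod 2)) : f.expand 2 two_ne_zero = f ^ 2 := by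
  have h := MvPowerSeries.map_frobenius_expand (R := ZMod 2) 2 two_ne_zero (f := f)
  have h2 : frobenius (ZMod 2) 2 = RingHom.id _ := by
    ext x
    simp
  rw [h2] at h
  simp only [MvPowerSeries.map_id] at h
  exact h

lemma pow4_coeff : sqSer 24 ^ 4 = sqSer 6 := by
  have : sqSer 24 ^ 4 = (sqSer 24).expand (2 * 2) (by norm_num) := by
    rw [expand_mul (p := 2) (hp := two_ne_zero) 2 two_ne_zero, sq_coeff, sq_coeff, ← pow_mul]
  rw [this]
  ext n
  rw [coeff_expand]
  by_cases h : 2 * 2 ∣ n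
  · obtain ⟨m, rfl⟩ := h
    simp only [sqSer, coeff_mk]
    simp [show 6 * (2 * 2 * m) + 1 = 24 * m + 1 by ring]
  · rw [if_neg h]
    simp only [sqSer, coeff_mk]
    rw [if_neg]
    rintro ⟨u, hu⟩
    have hodd : u % 2 = 1 := by
      rcases Nat.mod_two_eq_zero_or_one u with h0 | h0
      · have := Nat.mul_mod u u 2
        rw [h0] at this; omega
      · exact h0
    obtain ⟨b, hb⟩ := odd_sq_form hodd
    rw [sq] at hb
    omega

open scoped PowerSeries.WithPiTopology in
lemma gf : (PowerSeries.mk fun n => (numRegularPartitions 8 n : ZMod 2)) = sqSer 24 ^ 7 := by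
  rw [← pentSer]
  have h1 : (PowerSeries.mk fun n => (numRegularPartitions 8 n : ZMod 2)) =
      PowerSeries.mk fun n ↦ ((Nat.Partition.restricted n (¬ 8 ∣ ·)).card : ZMod 2) := by
    ext n
    simp only [coeff_mk]
    congr 1
    rw [numRegularPartitions, Nat.card_eq_fintype_card, Fintype.card_subtype]
    rfl
  rw [h1, Nat.Partition.powerSeriesMk_card_restricted_eq_powerSeriesMk_card_countRestricted _
    (by norm_num)]
  let _ : TopologicalSpace (ZMod 2) := ⊥
  have _ : DiscreteTopology (ZMod 2) := ⟨rfl⟩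
  have h2 := Nat.Partition.hasProd_powerSeriesMk_card_countRestricted (ZMod 2) (m := 8)
    (by norm_num)
  have h3 := WithPiTopology.hasProd_one_sub_X_pow (ZMod 2)
  have h4 := h3.map (powMonoidHom 7 : PowerSeries (ZMod 2) →* _) (continuous_pow 7)
  refine h2.unique ?_
  refine (congrArg (fun f => HasProd f _ _) (funext fun i => ?_)).mpr h4
  simp only [Function.comp, powMonoidHom_apply]
  simp only [pow_mul]
  generalize (X : PowerSeries (ZMod 2)) ^ (i + 1) = y
  have e2 : (2 : PowerSeries (ZMod 2)) = 0 := by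
    have h := congrArg (C (R := ZMod 2)) (show (2 : ZMod 2) = 0 by decide)
    rwa [map_ofNat, map_zero] at h
  simp only [Finset.sum_range_succ, Finset.sum_range_zero]
  linear_combination (4*y - 10*y^2+18*y^3-17*y^4+11*y^5-3*y^6+y^7) * e2

open Classical in
lemma coeff_mul_sq (c d n : ℕ) : coeff n (sqSer c * sqSer d) =
    (((Finset.HasAntidiagonal.antidiagonal n).filter
      (fun p => IsSquare (c * p.1 + 1) ∧ IsSquare (d * p.2 + 1))).card : ZMod 2) := by
  rw [coeff_mul, Finset.card_filter]
  push_cast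
  refine Finset.sum_congr rfl fun p _ => ?_
  simp only [sqSer, coeff_mk]
  split_ifs <;> simp_all

open Classical in
lemma card_gen (c n : ℕ) (hc : 0 < c) (S : Finset (ℕ × ℕ))
    (hS : ∀ A B, (A, B) ∈ S ↔ ∃ a b, A ^ 2 = c * a + 1 ∧ B ^ 2 = 8 * b + 1 ∧ a + b = n) :
    ((Finset.HasAntidiagonal.antidiagonal n).filter
      (fun p => IsSquare (c * p.1 + 1) ∧ IsSquare (8 * p.2 + 1))).card = S.card := by
  symm
  refine Finset.card_bij (fun p _ => ((p.1 ^ 2 - 1) / c, (p.2 ^ 2 - 1) / 8)) ?_ ?_ ?_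
  · rintro ⟨A, B⟩ h
    obtain ⟨a, b, h1, h2, h3⟩ := (hS A B).1 h
    simp only [h1, h2, Finset.mem_filter, Finset.HasAntidiagonal.mem_antidiagonal, Nat.add_sub_cancel,
      Nat.mul_div_cancel_left _ hc, Nat.mul_div_cancel_left b (show 0 < 8 by norm_num)]
    exact ⟨h3, ⟨A, by rw [← h1, sq]⟩, ⟨B, by rw [← h2, sq]⟩⟩
  · rintro ⟨A, B⟩ h ⟨A', B'⟩ h' he
    obtain ⟨a, b, h1, h2, h3⟩ := (hS A B).1 h
    obtain ⟨a', b', h1', h2', h3'⟩ := (hS A' B').1 h'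
    simp only [h1, h2, h1', h2', Nat.add_sub_cancel, Prod.mk.injEq,
      Nat.mul_div_cancel_left _ hc, Nat.mul_div_cancel_left _ (show 0 < 8 by norm_num)] at he
    obtain ⟨rfl, rfl⟩ := he
    have e1 : A = A' := Nat.pow_left_injective two_ne_zero (h1.trans h1'.symm)
    have e2 : B = B' := Nat.pow_left_injective two_ne_zero (h2.trans h2'.symm)
    rw [e1, e2]
  · rintro ⟨a, b⟩ h
    simp only [Finset.mem_filter, Finset.HasAntidiagonal.mem_antidiagonal] at h
    obtain ⟨h3, ⟨A, hA⟩, ⟨B, hB⟩⟩ := h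
    refine ⟨(A, B), (hS A B).2 ⟨a, b, by rw [sq, hA], by rw [sq, hB], h3⟩, ?_⟩
    simp only [sq, ← hA, ← hB, Nat.add_sub_cancel,
      Nat.mul_div_cancel_left _ hc, Nat.mul_div_cancel_left _ (show 0 < 8 by norm_num)]

/-- Odd solutions of `A² + 3B² = 24n+4`. -/
def setT (n : ℕ) : Finset (ℕ × ℕ) :=
  (Finset.range (24 * n + 8) ×ˢ Finset.range (24 * n + 8)).filter
    (fun p => p.1 ^ 2 + 3 * p.2 ^ 2 = 24 * n + 4 ∧ p.1 % 2 = 1)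

/-- Solutions of `4A² + 3B² = 24n+7`. -/
def setV (n : ℕ) : Finset (ℕ × ℕ) :=
  (Finset.range (24 * n + 8) ×ˢ Finset.range (24 * n + 8)).filter
    (fun p => 4 * p.1 ^ 2 + 3 * p.2 ^ 2 = 24 * n + 7)

lemma sq_mod_two (B : ℕ) : B ^ 2 % 2 = B % 2 := by
  rcases Nat.mod_two_eq_zero_or_one B with h | h <;> simp [Nat.pow_mod, h]

lemma mem_setT (n A B : ℕ) : (A, B) ∈ setT n ↔ A ^ 2 + 3 * B ^ 2 = 24 * n + 4 ∧ A % 2 = 1 := by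
  simp only [setT, Finset.mem_filter, Finset.mem_product, Finset.mem_range, and_iff_right_iff_imp]
  rintro ⟨h, -⟩
  constructor <;> nlinarith

lemma mem_setV (n A B : ℕ) : (A, B) ∈ setV n ↔ 4 * A ^ 2 + 3 * B ^ 2 = 24 * n + 7 := by
  simp only [setV, Finset.mem_filter, Finset.mem_product, Finset.mem_range, and_iff_right_iff_imp]
  intro h
  constructor <;> nlinarith

lemma setT_iff (n A B : ℕ) : (A, B) ∈ setT n ↔
    ∃ a b, A ^ 2 = 24 * a + 1 ∧ B ^ 2 = 8 * b + 1 ∧ a + b = n := by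
  rw [mem_setT]
  constructor
  · rintro ⟨h, hA⟩
    obtain ⟨a, ha⟩ := odd_sq_form hA
    have hB : B % 2 = 1 := by
      have := sq_mod_two B
      omega
    obtain ⟨b, hb⟩ := odd_sq_form hB
    exact ⟨a / 3, b, by omega, hb, by omega⟩
  · rintro ⟨a, b, h1, h2, h3⟩
    have := sq_mod_two A
    omega

lemma setV_iff (n A B : ℕ) : (A, B) ∈ setV n ↔
    ∃ a b, A ^ 2 = 6 * a + 1 ∧ B ^ 2 = 8 * b + 1 ∧ a + b = n := by
  rw [mem_setV]
  constructor
  · intro h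
    have hB : B % 2 = 1 := by
      have := sq_mod_two B
      omega
    obtain ⟨b, hb⟩ := odd_sq_form hB
    exact ⟨A ^ 2 / 6, b, by omega, hb, by omega⟩
  · rintro ⟨a, b, h1, h2, h3⟩
    omega

/-- Solutions of `x² + 3y² = 6n+1` with `x > 0`. -/
noncomputable def setU (n : ℕ) : Finset (ℤ × ℤ) :=
  (Finset.Icc (1 : ℤ) (6 * n + 1) ×ˢ Finset.Icc (-(6 * n + 1) : ℤ) (6 * n + 1)).filter
    (fun p => p.1 ^ 2 + 3 * p.2 ^ 2 = 6 * n + 1)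

lemma mem_setU (n : ℕ) (x y : ℤ) : (x, y) ∈ setU n ↔ 0 < x ∧ x ^ 2 + 3 * y ^ 2 = 6 * n + 1 := by
  simp only [setU, Finset.mem_filter, Finset.mem_product, Finset.mem_Icc]
  constructor
  · rintro ⟨⟨⟨h, -⟩, -⟩, h2⟩
    exact ⟨by omega, h2⟩
  · rintro ⟨h, h2⟩
    refine ⟨⟨⟨by omega, by nlinarith⟩, ?_, ?_⟩, h2⟩
    · rcases le_or_gt 0 y with h0 | h0
      · omega
      · nlinarith
    · rcases le_or_gt y 0 with h0 | h0
      · omega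
      · nlinarith

lemma setU_odd {n : ℕ} {x y : ℤ} (h : x ^ 2 + 3 * y ^ 2 = 6 * n + 1) : (x + y) % 2 = 1 := by
  have hx : x ^ 2 % 2 = x % 2 := by
    rcases Int.emod_two_eq_zero_or_one x with h | h <;> simp [pow_two, Int.mul_emod, h]
  have hy : y ^ 2 % 2 = y % 2 := by
    rcases Int.emod_two_eq_zero_or_one y with h | h <;> simp [pow_two, Int.mul_emod, h]
  omega

lemma card_UT (n : ℕ) : (setU n).card = (setT n).card := by
  refine Finset.card_bij (fun p _ => ((p.1 + 3 * p.2).natAbs, (p.1 - p.2).natAbs)) ?_ ?_ ?_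
  · rintro ⟨x, y⟩ h
    rw [mem_setU] at h
    rw [mem_setT]
    have := setU_odd h.2
    refine ⟨?_, by omega⟩
    zify
    simp only [sq_abs]
    linear_combination 4 * h.2
  · rintro ⟨x, y⟩ h ⟨x', y'⟩ h' he
    rw [mem_setU] at h h'
    have := setU_odd h.2
    have := setU_odd h'.2
    simp only [Prod.mk.injEq] at he ⊢
    omega
  · rintro ⟨A, B⟩ h
    rw [mem_setT] at h
    obtain ⟨h, hA⟩ := h
    have hB : B % 2 = 1 := by
      have := sq_mod_two B
      have := sq_mod_two A
      omega
    have hz : (A : ℤ) ^ 2 + 3 * (B : ℤ) ^ 2 = 24 * n + 4 := by exact_mod_cast h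
    by_cases h4 : A % 4 = B % 4
    · obtain ⟨y, hy⟩ : ∃ y : ℤ, (A : ℤ) - B = 4 * y := ⟨((A : ℤ) - B) / 4, by omega⟩
      have hA' : (A : ℤ) = B + 4 * y := by linarith
      refine ⟨(B + y, y), ?_, ?_⟩
      · rw [mem_setU]
        refine ⟨by omega, ?_⟩
        rw [hA'] at hz
        linarith
      · simp only [Prod.mk.injEq]; omega
    · obtain ⟨y, hy⟩ : ∃ y : ℤ, (A : ℤ) + B = 4 * y := ⟨((A : ℤ) + B) / 4, by omega⟩
      have hA' : (A : ℤ) = 4 * y - B := by linarith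
      rw [hA'] at hz
      have he : ((y : ℤ) - B) ^ 2 + 3 * y ^ 2 = 6 * n + 1 := by linarith
      have := setU_odd he
      rcases lt_trichotomy 0 (y - B : ℤ) with h0 | h0 | h0
      · refine ⟨(y - B, y), ?_, ?_⟩
        · rw [mem_setU]; exact ⟨h0, he⟩
        · simp only [Prod.mk.injEq]; omega
      · exfalso
        rw [← h0] at he
        omega
      · refine ⟨(B - y, -y), ?_, ?_⟩
        · rw [mem_setU]; exact ⟨by omega, by linarith⟩
        · simp only [Prod.mk.injEq]; omega

open Classical in
lemma card_U (n : ℕ) : ((setU n).card : ZMod 2) = if IsSquare (6 * n + 1) then 1 else 0 := by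
  have h1 : ∑ p ∈ (setU n).filter (fun p => ¬ p.2 = 0), (1 : ZMod 2) = 0 := by
    refine Finset.sum_involution (fun p _ => (p.1, -p.2)) ?_ ?_ ?_ ?_
    · intros; decide
    · rintro ⟨x, y⟩ h _ he
      simp only [Finset.mem_filter] at h
      simp only [Prod.mk.injEq, true_and] at he
      omega
    · rintro ⟨x, y⟩ h
      simp only [Finset.mem_filter, mem_setU] at h ⊢
      refine ⟨⟨h.1.1, ?_⟩, by simpa using h.2⟩
      rw [neg_sq]; exact h.1.2
    · rintro ⟨x, y⟩ h
      simp
  rw [← Finset.card_filter_add_card_filter_not (s := setU n) (fun p => p.2 = 0)]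
  push_cast
  have h1' : (((setU n).filter (fun p => ¬ p.2 = 0)).card : ZMod 2) = 0 := by
    rw [← h1]; simp
  rw [h1', add_zero]
  split_ifs with h
  · obtain ⟨u, hu⟩ := h
    have : (setU n).filter (fun p => p.2 = 0) = {((u : ℤ), 0)} := by
      ext ⟨x, y⟩
      simp only [Finset.mem_filter, mem_setU, Finset.mem_singleton, Prod.mk.injEq]
      have hz : (6 * n + 1 : ℤ) = u * u := by exact_mod_cast hu
      have hu0 : 0 < u := by
        rcases Nat.eq_zero_or_pos u with rfl | h
        · omega
        · exact h
      constructor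
      · rintro ⟨⟨hx, he⟩, rfl⟩
        refine ⟨?_, rfl⟩
        have : (0:ℤ) < u := by exact_mod_cast hu0
        nlinarith
      · rintro ⟨rfl, rfl⟩
        refine ⟨⟨by exact_mod_cast hu0, by rw [hz]; ring⟩, rfl⟩
    rw [this]; simp
  · have : (setU n).filter (fun p => p.2 = 0) = ∅ := by
      rw [Finset.filter_eq_empty_iff]
      rintro ⟨x, y⟩ hp rfl
      rw [mem_setU] at hp
      refine h ⟨x.natAbs, ?_⟩
      zify
      rw [abs_mul_abs_self]
      linarith [hp.2]
    rw [this]; simp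

lemma theta : sqSer 24 * sqSer 8 = sqSer 6 := by
  ext n
  rw [coeff_mul_sq, card_gen 24 n (by norm_num) (setT n) (setT_iff n), ← card_UT, card_U]
  simp [sqSer]

lemma main_gf : (PowerSeries.mk fun n => (numRegularPartitions 8 n : ZMod 2)) =
    sqSer 6 * sqSer 8 := by
  rw [gf]
  have h0 : sqSer 24 ≠ 0 := by
    intro h
    have := congrArg (coeff 0) h
    simp [sqSer] at this
  apply mul_left_cancel₀ h0
  calc sqSer 24 * sqSer 24 ^ 7 = sqSer 24 ^ 4 * sqSer 24 ^ 4 := by ring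
    _ = sqSer 6 * (sqSer 24 * sqSer 8) := by rw [pow4_coeff, theta]
    _ = _ := by ring

/-- Integer solutions. -/
noncomputable def setR (n : ℕ) : Finset (ℤ × ℤ) :=
  (Finset.Icc (-(24 * n + 7) : ℤ) (24 * n + 7) ×ˢ Finset.Icc (-(24 * n + 7) : ℤ) (24 * n + 7)).filter
    (fun p => p.1 ^ 2 + 3 * p.2 ^ 2 = 24 * n + 7)

lemma mem_setR (n : ℕ) (x y : ℤ) : (x, y) ∈ setR n ↔ x ^ 2 + 3 * y ^ 2 = 24 * n + 7 := by
  simp only [setR, Finset.mem_filter, Finset.mem_product, Finset.mem_Icc, and_iff_right_iff_imp]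
  intro h
  refine ⟨⟨?_, ?_⟩, ?_, ?_⟩
  · rcases le_or_gt 0 x with h0 | h0
    · omega
    · nlinarith
  · rcases le_or_gt x 0 with h0 | h0
    · omega
    · nlinarith
  · rcases le_or_gt 0 y with h0 | h0
    · omega
    · nlinarith
  · rcases le_or_gt y 0 with h0 | h0
    · omega
    · nlinarith

lemma r3_eq (n : ℕ) : r3 (24 * n + 7) = (setR n).card := by
  rw [r3, Nat.subtype_card (setR n)]
  rintro ⟨x, y⟩
  rw [mem_setR]
  push_cast
  rfl

lemma card_R (n : ℕ) : (setR n).card = 4 * (setV n).card := by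
  have hev : ∀ x y : ℤ, x ^ 2 + 3 * y ^ 2 = 24 * n + 7 → x % 2 = 0 := by
    intro x y h
    rcases Int.emod_two_eq_zero_or_one x with h0 | h0
    · exact h0
    · exfalso
      have hx : x ^ 2 % 4 = 1 := by
        have : x % 4 = 1 ∨ x % 4 = 3 := by omega
        rcases this with h | h <;> simp [pow_two, Int.mul_emod, h]
      have hy : y ^ 2 % 4 = 0 ∨ y ^ 2 % 4 = 1 := by
        have : y % 4 = 0 ∨ y % 4 = 1 ∨ y % 4 = 2 ∨ y % 4 = 3 := by omega
        rcases this with h | h | h | h <;> simp [pow_two, Int.mul_emod, h]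
      omega
  rw [Finset.card_eq_sum_card_fiberwise (f := fun p : ℤ × ℤ => (p.1.natAbs / 2, p.2.natAbs))
    (t := setV n)]
  · rw [Finset.sum_const_nat (m := 4), mul_comm]
    rintro ⟨u, v⟩ h
    have hV := (setV_iff n u v).1 h
    rw [mem_setV] at h
    have hz : 4 * (u : ℤ) ^ 2 + 3 * (v : ℤ) ^ 2 = 24 * n + 7 := by exact_mod_cast h
    obtain ⟨a, b, h1, h2, -⟩ := hV
    have hu : u ≠ 0 := by rintro rfl; simp at h1
    have hv : v ≠ 0 := by rintro rfl; simp at h2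
    have : (setR n).filter (fun p : ℤ × ℤ => (p.1.natAbs / 2, p.2.natAbs) = (u, v)) =
        {(2 * (u : ℤ), (v : ℤ)), (2 * (u : ℤ), -(v : ℤ)), (-(2 * (u : ℤ)), (v : ℤ)),
          (-(2 * (u : ℤ)), -(v : ℤ))} := by
      ext ⟨x, y⟩
      simp only [Finset.mem_filter, mem_setR, Finset.mem_insert, Finset.mem_singleton,
        Prod.mk.injEq]
      constructor
      · rintro ⟨he, h3, h4⟩
        have := hev x y he
        omega
      · have e : ∀ s t : ℤ, s ^ 2 = 1 → t ^ 2 = 1 →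
            (s * (2 * u)) ^ 2 + 3 * (t * v) ^ 2 = 24 * n + 7 := by
          intro s t hs ht
          linear_combination hz + 4 * u ^ 2 * hs + 3 * v ^ 2 * ht
        rintro (⟨rfl, rfl⟩ | ⟨rfl, rfl⟩ | ⟨rfl, rfl⟩ | ⟨rfl, rfl⟩)
        · exact ⟨by linear_combination hz, by omega, by omega⟩
        · exact ⟨by linear_combination hz, by omega, by omega⟩
        · exact ⟨by linear_combination hz, by omega, by omega⟩
        · exact ⟨by linear_combination hz, by omega, by omega⟩
    rw [this]
    rw [Finset.card_insert_of_notMem, Finset.card_insert_of_notMem, Finset.card_insert_of_notMem,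
      Finset.card_singleton]
    all_goals
      simp only [Finset.mem_insert, Finset.mem_singleton, Prod.mk.injEq]
      omega
  · rintro ⟨x, y⟩ h
    have h' := (mem_setR n x y).1 h
    have he := hev x y h'
    simp only [SetLike.mem_coe, mem_setV]
    obtain ⟨w, rfl⟩ : ∃ w, x = 2 * w := ⟨x / 2, by omega⟩
    have : (2 * w).natAbs / 2 = w.natAbs := by omega
    rw [this]
    zify
    simp only [sq_abs]
    linarith

theorem stmt_18 (n : ℕ) :
    4 ∣ r3 (24 * n + 7) ∧
      numRegularPartitions 8 n ≡ r3 (24 * n + 7) / 4 [MOD 2] := by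
  rw [r3_eq, card_R]
  refine ⟨dvd_mul_right _ _, ?_⟩
  rw [Nat.mul_div_cancel_left _ (by norm_num), ← ZMod.natCast_eq_natCast_iff]
  have h := congrArg (coeff n) main_gf
  rw [coeff_mul_sq, card_gen 6 n (by norm_num) (setV n) (setV_iff n), coeff_mk] at h
  exact h
end
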